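/- For every integer k ≥ 2 there exists a constant C_k < ∞ such that for every δ ∈ (0, 1], the Lebesgue measure of the level set satisfies |{x ∈ ℝ^N : δ ≤ |E_k1(x)| ≤ 2δ}| ≤ C_k · (log₊ δ)^{k−1} · δ^{−q_k}. -/

import Mathlib

/-!
Write `k = n + 1` and split the coefficients into `x`, those of the monomials divisible by `ξ₂`, and
`y ∈ ℝⁿ⁺¹`, those of the powers of `ξ₁`. Then `E = ∫₀¹ I(x, s) e(y · γ(s)) ds`, where `γ` is the
moment curve and `I(x, s)` is the integral in `ξ₂` of a polynomial phase.

If `|I(x, s)| ≥ τ` then, by van der Corput, all derivatives of that phase are bounded by powers of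
`1 / τ` at a common point of `[0, 1]`. When this holds at `n + 1` separated points `s`, inverting
Vandermonde matrices in one slice of coefficients after another bounds the volume of the possible
`x`, with the loss of a single logarithm. In `y`, the map `(s₀, …, sₙ) ↦ ∑ γ(sᵢ)` is injective with
Jacobian bounded below on separated intervals, so Plancherel bounds the `L²` norm of a product of
integrals of `I e(y · γ)` over such intervals, truncated to `|I| ≥ τ`.

To reach separated intervals, decompose `[0, 1]` into `A`-adic intervals. If `|E| ≥ δ`, descending
into the child with the largest integral must at some scale meet `n + 1` separated children whose
truncated integrals are all large; the truncation threshold grows geometrically with the scale, so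
the descent stops and the volumes over all scales sum to a geometric series.
-/

open MeasureTheory Real Set
open scoped ENNReal

noncomputable section

/-- Index set for multi-indices `β = (β₁, β₂) ∈ ℕ²` with `1 ≤ β₁ + β₂ ≤ k`;
its cardinality is `N = (k+1)(k+2)/2 − 1`. -/
def Idx (k : ℕ) : Type :=
  {β : Fin (k + 1) × Fin (k + 1) // 1 ≤ (β.1 : ℕ) + (β.2 : ℕ) ∧ (β.1 : ℕ) + (β.2 : ℕ) ≤ k}

instance (k : ℕ) : Fintype (Idx k) := by unfold Idx; infer_instance

/-- The phase polynomial `P(ξ; x) = ∑_{1 ≤ |β| ≤ k} x_β ξ₁^{β₁} ξ₂^{β₂}`. -/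
def Pphase (k : ℕ) (x : Idx k → ℝ) (ξ : Fin 2 → ℝ) : ℝ :=
  ∑ β : Idx k, x β * ξ 0 ^ (β.1.1 : ℕ) * ξ 1 ^ (β.1.2 : ℕ)

/-- `E_k1(x) = ∫_{[0,1]²} e(P(ξ; x)) dξ` with `e(t) = exp(2πit)`. -/
def Eone (k : ℕ) (x : Idx k → ℝ) : ℂ :=
  ∫ ξ in Icc (0 : Fin 2 → ℝ) 1, Complex.exp (2 * Real.pi * Complex.I * (Pphase k x ξ))

section PolynomialDerivatives

open Polynomial

lemma le_card_add_one_mul_of_subadditive_of_avoids {f : ℝ → ℝ → ℝ} {M : ℝ} (R : Finset ℝ)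
    {a b : ℝ} (hab : a ≤ b) (hadd : ∀ x y z, x ≤ y → y ≤ z → f x z ≤ f x y + f y z)
    (hM : ∀ x y, a ≤ x → x ≤ y → y ≤ b → (∀ r ∈ R, r ∉ Ioo x y) → f x y ≤ M) :
    f a b ≤ (R.card + 1) * M := by
  have hM0 : 0 ≤ M := by
    linarith [hadd a a a le_rfl le_rfl, hM a a le_rfl le_rfl hab (by simp)]
  induction R using Finset.induction_on_max generalizing b with
  | empty => simpa using hM a b le_rfl hab le_rfl (by simp)
  | insert c R hc ih =>
    have hcR : c ∉ R := fun h => lt_irrefl c (hc c h)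
    rw [Finset.card_insert_of_notMem hcR]
    push_cast
    rcases le_total b c with hbc | hcb
    · have := ih hab fun x y hx hxy hy h => hM x y hx hxy hy
        (Finset.forall_mem_insert _ _ _ |>.2 ⟨fun hc => (hc.2.trans_le hy).not_ge hbc, h⟩)
      linarith
    have hlast : ∀ x, a ≤ x → c ≤ x → x ≤ b → f x b ≤ M := fun x hax hcx hxb =>
      hM x b hax hxb le_rfl fun r hr hrx =>
        ((Finset.forall_mem_insert c R (· ≤ x)).2
          ⟨hcx, fun r hr => (hc r hr).le.trans hcx⟩ r hr).not_gt hrx.1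
    rcases le_total c a with hca | hac
    · nlinarith [hlast a le_rfl hca hab, (Nat.cast_nonneg R.card : (0 : ℝ) ≤ R.card)]
    · have := ih hac fun x y hx hxy hy h => hM x y hx hxy (hy.trans hcb)
        (Finset.forall_mem_insert _ _ _ |>.2 ⟨fun hc => hc.2.not_ge hy, h⟩)
      linarith [hadd a c b hac hcb, hlast c hac le_rfl hcb]

lemma eval_nonneg_or_nonpos_of_avoids_roots (g : ℝ[X]) {a b : ℝ}
    (h : ∀ r ∈ g.roots.toFinset, r ∉ Ioo a b) :
    (∀ x ∈ Icc a b, 0 ≤ g.eval x) ∨ (∀ x ∈ Icc a b, g.eval x ≤ 0) := by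
  rcases eq_or_ne g 0 with rfl | hg
  · simp
  by_contra! hsign
  obtain ⟨⟨x, hx, hx_neg⟩, y, hy, hy_pos⟩ := hsign
  obtain ⟨z, hz, hz_zero⟩ := intermediate_value_uIcc (a := x) (b := y) g.continuous.continuousOn
    (Icc_subset_uIcc ⟨hx_neg.le, hy_pos.le⟩)
  have hzab := uIcc_subset_Icc hx hy hz
  refine h z (by simpa [hg] using hz_zero) ⟨hzab.1.lt_of_ne ?_, hzab.2.lt_of_ne ?_⟩ <;>
    grind [uIcc]

lemma card_toFinset_roots_le {R : Type*} [CommRing R] [IsDomain R] [DecidableEq R] {g : R[X]}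
    {d : ℕ} (h : g.natDegree ≤ d) : g.roots.toFinset.card ≤ d :=
  (Multiset.toFinset_card_le _).trans ((card_roots' g).trans h)

lemma natDegree_sq_sub_C_le {R : Type*} [Ring R] {g : R[X]} {d : ℕ} (h : g.natDegree ≤ d) (c : R) :
    (g ^ 2 - C c).natDegree ≤ 2 * d := by
  rw [natDegree_sub_C]
  exact natDegree_pow_le.trans (by gcongr)

lemma natDegree_iterate_derivative_le {R : Type*} [Semiring R] {f : R[X]} {d : ℕ}
    (h : f.natDegree ≤ d) (m : ℕ) : (derivative^[m] f).natDegree ≤ d :=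
  (natDegree_iterate_derivative f m).trans (by omega)

lemma mul_abs_sub_le_abs_sub_of_le_abs_deriv {f f' : ℝ → ℝ} {S : Set ℝ} (hS : S.OrdConnected)
    (hf : ∀ x ∈ S, HasDerivAt f (f' x) x) {Λ : ℝ} (hΛ : ∀ x ∈ S, Λ ≤ |f' x|) {x y : ℝ}
    (hx : x ∈ S) (hy : y ∈ S) : Λ * |x - y| ≤ |f x - f y| := by
  wlog hxy : x < y generalizing x y
  · rcases (not_lt.1 hxy).eq_or_lt with rfl | hyx
    · simp
    · rw [abs_sub_comm x, abs_sub_comm (f x)]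
      exact this hy hx hyx
  have hsub : Icc x y ⊆ S := hS.out hx hy
  obtain ⟨z, hz, hslope⟩ := exists_hasDerivAt_eq_slope f f' hxy
    (fun t ht => (hf t (hsub ht)).continuousAt.continuousWithinAt)
    (fun t ht => hf t (hsub (Ioo_subset_Icc_self ht)))
  have hz' := hΛ z (hsub (Ioo_subset_Icc_self hz))
  rwa [hslope, abs_div, le_div_iff₀ (abs_pos.2 (sub_pos.2 hxy).ne'), abs_sub_comm y,
    abs_sub_comm (f y)] at hz'

lemma volume_le_of_forall_abs_sub_le {V : Set ℝ} {D : ℝ} (h : ∀ v ∈ V, ∀ w ∈ V, |v - w| ≤ D) :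
    volume V ≤ ENNReal.ofReal D :=
  (Real.volume_le_diam V).trans <| Metric.ediam_le fun v hv w hw => by
    rw [edist_dist, Real.dist_eq]
    exact ENNReal.ofReal_le_ofReal (h v hv w hw)

lemma volume_sublevel_inter_le_of_le_abs_deriv {f f' : ℝ → ℝ} {S : Set ℝ} (hS : S.OrdConnected)
    (hf : ∀ x ∈ S, HasDerivAt f (f' x) x) {B Λ : ℝ} (hΛ : 0 < Λ) (hder : ∀ x ∈ S, Λ ≤ |f' x|) :
    volume (S ∩ {t | |f t| ≤ B}) ≤ ENNReal.ofReal (2 * B / Λ) := by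
  refine volume_le_of_forall_abs_sub_le ?_
  rintro x ⟨hx, hfx : |f x| ≤ B⟩ y ⟨hy, hfy : |f y| ≤ B⟩
  rw [le_div_iff₀ hΛ, mul_comm]
  calc Λ * |x - y| ≤ |f x - f y| := mul_abs_sub_le_abs_sub_of_le_abs_deriv hS hf hder hx hy
    _ ≤ |f x| + |f y| := abs_sub _ _
    _ ≤ 2 * B := by linarith

lemma le_abs_eval_or_abs_eval_le_of_avoids_roots {g : ℝ[X]} {a b Λ : ℝ} (hΛ : 0 ≤ Λ)
    (h : ∀ r ∈ (g ^ 2 - C (Λ ^ 2)).roots.toFinset, r ∉ Ioo a b) :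
    (∀ x ∈ Icc a b, Λ ≤ |g.eval x|) ∨ (∀ x ∈ Icc a b, |g.eval x| ≤ Λ) := by
  simpa [sq_le_sq, abs_of_nonneg hΛ] using eval_nonneg_or_nonpos_of_avoids_roots _ h

lemma volume_abs_eval_le_and_lt_abs_eval_derivative_le {f : ℝ[X]} {d : ℕ} (hd : f.natDegree ≤ d)
    {a b B Λ : ℝ} (hab : a ≤ b) (hB : 0 ≤ B) (hΛ : 0 < Λ) :
    volume.real {t ∈ Ioc a b | |f.eval t| ≤ B ∧ Λ < |(derivative f).eval t|} ≤
      (2 * d + 1) * (2 * B / Λ) := by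
  set S : ℝ → ℝ → Set ℝ :=
    fun x y => {t ∈ Ioc x y | |f.eval t| ≤ B ∧ Λ < |(derivative f).eval t|}
  have hfin : ∀ x y, volume (S x y) ≠ ⊤ := fun x y =>
    ((measure_mono (sep_subset _ _)).trans_lt measure_Ioc_lt_top).ne
  set R := (derivative f ^ 2 - C (Λ ^ 2)).roots.toFinset
  have hcard : (R.card : ℝ) ≤ 2 * d := by
    exact_mod_cast card_toFinset_roots_le
      (natDegree_sq_sub_C_le ((natDegree_derivative_le f).trans (by omega)) _)
  have hadd : ∀ x y z, x ≤ y → y ≤ z →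
      volume.real (S x z) ≤ volume.real (S x y) + volume.real (S y z) := by
    refine fun x y z hxy hyz => (measureReal_mono ?_ ?_).trans (measureReal_union_le _ _)
    · rintro t ⟨ht, htS⟩
      rw [← Ioc_union_Ioc_eq_Ioc hxy hyz] at ht
      rcases ht with ht | ht
      exacts [.inl ⟨ht, htS⟩, .inr ⟨ht, htS⟩]
    · exact measure_union_ne_top (hfin x y) (hfin y z)
  have hpiece : ∀ x y, a ≤ x → x ≤ y → y ≤ b → (∀ r ∈ R, r ∉ Ioo x y) →
      volume.real (S x y) ≤ 2 * B / Λ := by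
    intro x y _ _ _ hroot
    refine ENNReal.toReal_le_of_le_ofReal (by positivity) ?_
    rcases le_abs_eval_or_abs_eval_le_of_avoids_roots hΛ.le hroot with h | h
    · have hsub : S x y ⊆ Icc x y ∩ {t | |f.eval t| ≤ B} := fun t ht =>
        ⟨Ioc_subset_Icc_self ht.1, ht.2.1⟩
      exact (measure_mono hsub).trans (volume_sublevel_inter_le_of_le_abs_deriv ordConnected_Icc
        (fun t _ => f.hasDerivAt t) hΛ h)
    · have hempty : S x y = ∅ := eq_empty_of_forall_notMem fun t ht =>
        ht.2.2.not_ge (h t (Ioc_subset_Icc_self ht.1))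
      simp [hempty]
  calc volume.real (S a b) ≤ (R.card + 1) * (2 * B / Λ) :=
        le_card_add_one_mul_of_subadditive_of_avoids R hab hadd hpiece
    _ ≤ (2 * d + 1) * (2 * B / Λ) := by gcongr

lemma exists_mem_forall_notMem_of_sum_measureReal_lt {α ι : Type*} [MeasurableSpace α]
    {μ : Measure α} {s : Finset ι} {Z : Set α} {T : ι → Set α} (hT : ∀ i ∈ s, μ (T i) ≠ ⊤)
    (h : ∑ i ∈ s, μ.real (T i) < μ.real Z) : ∃ t ∈ Z, ∀ i ∈ s, t ∉ T i := by
  by_contra! hcover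
  have hsub : Z ⊆ ⋃ i ∈ s, T i := fun t ht => by
    obtain ⟨i, hi, hti⟩ := hcover t ht
    exact mem_biUnion hi hti
  refine h.not_ge ((measureReal_mono hsub ?_).trans (measureReal_biUnion_finset_le _ _))
  exact ((measure_biUnion_lt_top s.finite_toSet fun i hi => (hT i hi).lt_top)).ne

-- The points where the `m`-th derivative is within the bound but the next one is not form a set
-- of measure `O(η / C)`, so for large `C` these sets cannot cover the sublevel set.
lemma exists_forall_abs_eval_iterate_derivative_le (d : ℕ) : ∃ C : ℝ, 1 ≤ C ∧
    ∀ f : ℝ[X], f.natDegree ≤ d → ∀ a b B η : ℝ, a ≤ b → 0 < B → 0 < η →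
      η ≤ volume.real {t ∈ Ioc a b | |f.eval t| ≤ B} →
      ∃ t ∈ Ioc a b, ∀ m, |(derivative^[m] f).eval t| ≤ B * (C / η) ^ m := by
  set K : ℝ := (d + 1) * ((2 * d + 1) * 2) + 1 with hK
  have hK1 : 1 ≤ K := le_add_of_nonneg_left (by positivity)
  have hK0 : 0 < K := by positivity
  refine ⟨K, hK1, fun f hf a b B η hab hB hη hvol => ?_⟩
  set bad : ℕ → Set ℝ := fun m => {t ∈ Ioc a b | |(derivative^[m] f).eval t| ≤
    B * (K / η) ^ m ∧ B * (K / η) ^ (m + 1) < |(derivative (derivative^[m] f)).eval t|}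
  have hbad : ∀ m, volume.real (bad m) ≤ (2 * d + 1) * (2 * (η / K)) := by
    intro m
    refine (volume_abs_eval_le_and_lt_abs_eval_derivative_le
      (natDegree_iterate_derivative_le hf m) hab (by positivity) (by positivity)).trans_eq ?_
    have : B * (K / η) ^ m ≠ 0 := by positivity
    rw [pow_succ]
    field_simp
  have hsum : ∑ m ∈ Finset.range (d + 1), volume.real (bad m) < η :=
    calc ∑ m ∈ Finset.range (d + 1), volume.real (bad m)
        ≤ (d + 1) * ((2 * d + 1) * (2 * (η / K))) := by
          simpa using Finset.sum_le_sum fun m (_ : m ∈ Finset.range (d + 1)) => hbad m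
      _ = η * ((K - 1) / K) := by rw [hK]; ring
      _ < η := mul_lt_of_lt_one_right hη ((div_lt_one hK0).2 (by linarith))
  obtain ⟨t, ⟨ht, hBt⟩, hgood⟩ := exists_mem_forall_notMem_of_sum_measureReal_lt
    (fun m _ => ((measure_mono (sep_subset _ _)).trans_lt measure_Ioc_lt_top).ne)
    (hsum.trans_le hvol)
  refine ⟨t, ht, fun m => ?_⟩
  induction m with
  | zero => simpa using hBt
  | succ m ih =>
    by_cases hm : m < d + 1
    · rw [Function.iterate_succ_apply']
      by_contra! hlt
      exact hgood m (Finset.mem_range.2 hm) ⟨ht, ih, hlt⟩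
    · rw [iterate_derivative_eq_zero (by omega), eval_zero, abs_zero]
      positivity

end PolynomialDerivatives

section VanDerCorput

open Polynomial FourierTransform

@[fun_prop]
lemma continuous_coe_fourierChar : Continuous fun t : ℝ => (𝐞 t : ℂ) :=
  continuous_subtype_val.comp continuous_fourierChar

lemma hasDerivAt_coe_fourierChar_comp {φ : ℝ → ℝ} {φ' x : ℝ} (h : HasDerivAt φ φ' x) :
    HasDerivAt (fun t => (𝐞 (φ t) : ℂ)) (2 * π * Complex.I * φ' * 𝐞 (φ x)) x := by
  refine ((hasDerivAt_fourierChar (φ x)).scomp x h).congr_deriv ?_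
  rw [Complex.real_smul]
  ring

lemma integral_abs_deriv_eq_abs_sub {u u' : ℝ → ℝ} {a b : ℝ} (hab : a ≤ b)
    (hu : ∀ x ∈ Icc a b, HasDerivAt u (u' x) x) (hcont : ContinuousOn u' (Icc a b))
    (hsign : (∀ x ∈ Icc a b, 0 ≤ u' x) ∨ (∀ x ∈ Icc a b, u' x ≤ 0)) :
    ∫ x in a..b, |u' x| = |u b - u a| := by
  rw [← uIcc_of_le hab] at hu hcont hsign
  rw [← intervalIntegral.integral_eq_sub_of_hasDerivAt hu hcont.intervalIntegrable]
  rcases hsign with h | h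
  · rw [intervalIntegral.integral_congr fun x hx => abs_of_nonneg (h x hx), abs_of_nonneg]
    exact intervalIntegral.integral_nonneg hab fun x hx => h x (uIcc_of_le hab ▸ hx)
  · rw [intervalIntegral.integral_congr fun x hx => abs_of_nonpos (h x hx),
      intervalIntegral.integral_neg, abs_of_nonpos]
    rw [← neg_nonneg, ← intervalIntegral.integral_neg]
    exact intervalIntegral.integral_nonneg hab fun x hx =>
      neg_nonneg.2 (h x (uIcc_of_le hab ▸ hx))

lemma two_pi_I_mul_integral_fourierChar {φ φ' φ'' : ℝ → ℝ} {a b : ℝ}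
    (hφ : ∀ x ∈ uIcc a b, HasDerivAt φ (φ' x) x) (hφ' : ∀ x ∈ uIcc a b, HasDerivAt φ' (φ'' x) x)
    (hcont : ContinuousOn φ'' (uIcc a b)) (hne : ∀ x ∈ uIcc a b, φ' x ≠ 0) :
    2 * π * Complex.I * ∫ t in a..b, (𝐞 (φ t) : ℂ) =
      ((φ' b)⁻¹ : ℝ) * 𝐞 (φ b) - ((φ' a)⁻¹ : ℝ) * 𝐞 (φ a) -
        ∫ t in a..b, ((-φ'' t / φ' t ^ 2 : ℝ) : ℂ) * 𝐞 (φ t) := by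
  have hcont' : ContinuousOn φ' (uIcc a b) := fun x hx => (hφ' x hx).continuousAt.continuousWithinAt
  have hchar : ContinuousOn (fun t => (𝐞 (φ t) : ℂ)) (uIcc a b) :=
    continuous_coe_fourierChar.comp_continuousOn fun x hx =>
      (hφ x hx).continuousAt.continuousWithinAt
  rw [← intervalIntegral.integral_const_mul]
  refine Eq.trans ?_ (intervalIntegral.integral_mul_deriv_eq_deriv_mul
    (v' := fun t => 2 * π * Complex.I * φ' t * 𝐞 (φ t))
    (fun x hx => ((hφ' x hx).inv (hne x hx)).ofReal_comp)
    (fun x hx => hasDerivAt_coe_fourierChar_comp (hφ x hx)) ?_ ?_)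
  · refine intervalIntegral.integral_congr fun t ht => ?_
    have : (φ' t : ℂ) ≠ 0 := by exact_mod_cast hne t ht
    simp only [Pi.inv_apply, Complex.ofReal_inv]
    field_simp
  · exact (Complex.continuous_ofReal.comp_continuousOn (hcont.neg.div (hcont'.pow 2)
      fun x hx => pow_ne_zero 2 (hne x hx))).intervalIntegrable
  · exact ((continuousOn_const.mul (Complex.continuous_ofReal.comp_continuousOn hcont')).mul
      hchar).intervalIntegrable

lemma norm_integral_fourierChar_le_of_le_abs_deriv {φ φ' φ'' : ℝ → ℝ} {a b Λ : ℝ} (hab : a ≤ b)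
    (hΛ : 0 < Λ) (hφ : ∀ x ∈ Icc a b, HasDerivAt φ (φ' x) x)
    (hφ' : ∀ x ∈ Icc a b, HasDerivAt φ' (φ'' x) x) (hcont : ContinuousOn φ'' (Icc a b))
    (hder : ∀ x ∈ Icc a b, Λ ≤ |φ' x|)
    (hsign : (∀ x ∈ Icc a b, 0 ≤ φ'' x) ∨ (∀ x ∈ Icc a b, φ'' x ≤ 0)) :
    ‖∫ t in a..b, (𝐞 (φ t) : ℂ)‖ ≤ 4 / Λ := by
  have hne : ∀ x ∈ Icc a b, φ' x ≠ 0 := fun x hx => abs_pos.1 (hΛ.trans_le (hder x hx))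
  have hinv : ∀ x ∈ Icc a b, |(φ' x)⁻¹| ≤ Λ⁻¹ := fun x hx => by
    rw [abs_inv]
    exact inv_anti₀ hΛ (hder x hx)
  have hcont' : ContinuousOn φ' (Icc a b) := fun x hx => (hφ' x hx).continuousAt.continuousWithinAt
  have hderiv_inv := fun x hx => (hφ' x hx).inv (hne x hx)
  have hboundary := abs_sub (φ' b)⁻¹ (φ' a)⁻¹
  have hinv_b := hinv b (right_mem_Icc.2 hab)
  have hinv_a := hinv a (left_mem_Icc.2 hab)
  have hrest : ‖∫ t in a..b, ((-φ'' t / φ' t ^ 2 : ℝ) : ℂ) * 𝐞 (φ t)‖ ≤ |(φ' b)⁻¹ - (φ' a)⁻¹| := by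
    refine (intervalIntegral.norm_integral_le_integral_norm hab).trans_eq ?_
    simp only [norm_mul, Circle.norm_coe, mul_one, Complex.norm_real, Real.norm_eq_abs]
    refine integral_abs_deriv_eq_abs_sub hab hderiv_inv
      (hcont.neg.div (hcont'.pow 2) fun x hx => pow_ne_zero 2 (hne x hx)) ?_
    exact hsign.symm.imp (fun h x hx => div_nonneg (neg_nonneg.2 (h x hx)) (sq_nonneg _))
      (fun h x hx => div_nonpos_of_nonpos_of_nonneg (neg_nonpos.2 (h x hx)) (sq_nonneg _))
  have hparts : 2 * π * ‖∫ t in a..b, (𝐞 (φ t) : ℂ)‖ ≤ 4 * Λ⁻¹ := by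
    rw [← uIcc_of_le hab] at hφ hφ' hcont hne
    have hnorm := congrArg norm (two_pi_I_mul_integral_fourierChar hφ hφ' hcont hne)
    rw [norm_mul, show ‖(2 * π * Complex.I : ℂ)‖ = 2 * π by simp [abs_of_pos pi_pos]] at hnorm
    rw [hnorm]
    refine (norm_sub_le_of_le (norm_sub_le _ _) hrest).trans ?_
    simp only [norm_mul, Circle.norm_coe, mul_one, Complex.norm_real, Real.norm_eq_abs]
    linarith
  rw [div_eq_mul_inv]
  nlinarith [pi_gt_three, norm_nonneg (∫ t in a..b, (𝐞 (φ t) : ℂ))]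

lemma norm_integral_fourierChar_eval_le_of_avoids_roots {p : ℝ[X]} {a b Λ : ℝ} (hab : a ≤ b)
    (hΛ : 0 < Λ)
    (h : ∀ r ∈ (derivative p ^ 2 - C (Λ ^ 2)).roots.toFinset ∪
      (derivative (derivative p)).roots.toFinset, r ∉ Ioo a b) :
    ‖∫ t in a..b, (𝐞 (p.eval t) : ℂ)‖ ≤
      volume.real {t ∈ Ioc a b | |(derivative p).eval t| ≤ Λ} + 4 / Λ := by
  simp only [Finset.forall_mem_union] at h
  rcases le_abs_eval_or_abs_eval_le_of_avoids_roots hΛ.le h.1 with hlarge | hsmall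
  · exact (norm_integral_fourierChar_le_of_le_abs_deriv hab hΛ (fun t _ => p.hasDerivAt t)
      (fun t _ => (derivative p).hasDerivAt t) (derivative (derivative p)).continuousOn hlarge
      (eval_nonneg_or_nonpos_of_avoids_roots _ h.2)).trans
        (le_add_of_nonneg_left measureReal_nonneg)
  · have hset : {t ∈ Ioc a b | |(derivative p).eval t| ≤ Λ} = Ioc a b :=
      sep_eq_self_iff_mem_true.2 fun t ht => hsmall t (Ioc_subset_Icc_self ht)
    have htriv : ‖∫ t in a..b, (𝐞 (p.eval t) : ℂ)‖ ≤ 1 * |b - a| :=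
      intervalIntegral.norm_integral_le_of_norm_le_const fun t _ => (Circle.norm_coe _).le
    rw [abs_of_nonneg (sub_nonneg.2 hab), one_mul] at htriv
    rw [hset, volume_real_Ioc_of_le hab]
    exact htriv.trans (le_add_of_nonneg_right (by positivity))

lemma norm_integral_fourierChar_eval_le {p : ℝ[X]} {d : ℕ} (hd : p.natDegree ≤ d) {a b Λ : ℝ}
    (hab : a ≤ b) (hΛ : 0 < Λ) :
    ‖∫ t in a..b, (𝐞 (p.eval t) : ℂ)‖ ≤
      volume.real {t ∈ Ioc a b | |(derivative p).eval t| ≤ Λ} + (3 * d + 1) * (4 / Λ) := by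
  set S : ℝ → ℝ → Set ℝ := fun x y => {t ∈ Ioc x y | |(derivative p).eval t| ≤ Λ} with hS
  have hSmeas : ∀ x y, MeasurableSet (S x y) := fun x y => measurableSet_Ioc.inter
    (measurableSet_le (derivative p).continuous.abs.measurable measurable_const)
  have hSfin : ∀ x y, volume (S x y) ≠ ⊤ := fun x y =>
    ((measure_mono (sep_subset _ _)).trans_lt measure_Ioc_lt_top).ne
  set R := (derivative p ^ 2 - C (Λ ^ 2)).roots.toFinset ∪
    (derivative (derivative p)).roots.toFinset
  have hcard : (R.card : ℝ) ≤ 3 * d := by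
    have h1 := card_toFinset_roots_le
      (natDegree_sq_sub_C_le (natDegree_iterate_derivative_le hd 1) (Λ ^ 2))
    have h2 := card_toFinset_roots_le (natDegree_iterate_derivative_le hd 2)
    have : R.card ≤ 2 * d + d := (Finset.card_union_le _ _).trans (Nat.add_le_add h1 h2)
    have : R.card ≤ 3 * d := by omega
    exact_mod_cast this
  have hint : Continuous fun t => (𝐞 (p.eval t) : ℂ) := by fun_prop
  have hadd : ∀ x y z, x ≤ y → y ≤ z →
      ‖∫ t in x..z, (𝐞 (p.eval t) : ℂ)‖ - volume.real (S x z) ≤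
        (‖∫ t in x..y, (𝐞 (p.eval t) : ℂ)‖ - volume.real (S x y)) +
          (‖∫ t in y..z, (𝐞 (p.eval t) : ℂ)‖ - volume.real (S y z)) := by
    intro x y z hxy hyz
    have hunion : S x z = S x y ∪ S y z := by
      simp only [hS]
      rw [← Ioc_union_Ioc_eq_Ioc hxy hyz]
      exact sep_union
    have hdisj : Disjoint (S x y) (S y z) :=
      (Ioc_disjoint_Ioc_of_le le_rfl).mono (sep_subset _ _) (sep_subset _ _)
    have hvol : volume.real (S x z) = volume.real (S x y) + volume.real (S y z) := by
      rw [hunion, measureReal_union hdisj (hSmeas y z) (hSfin x y) (hSfin y z)]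
    rw [← intervalIntegral.integral_add_adjacent_intervals (hint.intervalIntegrable x y)
      (hint.intervalIntegrable y z), hvol]
    linarith [norm_add_le (∫ t in x..y, (𝐞 (p.eval t) : ℂ)) (∫ t in y..z, (𝐞 (p.eval t) : ℂ))]
  have hmain := le_card_add_one_mul_of_subadditive_of_avoids R hab hadd
    fun x y _ hxy _ h => sub_le_iff_le_add'.2
      (norm_integral_fourierChar_eval_le_of_avoids_roots hxy hΛ h)
  calc _ ≤ volume.real (S a b) + (R.card + 1) * (4 / Λ) := sub_le_iff_le_add'.1 hmain
    _ ≤ volume.real (S a b) + (3 * d + 1) * (4 / Λ) := by gcongr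

lemma exists_forall_abs_eval_derivative_le_of_le_norm_integral (d : ℕ) : ∃ C : ℝ, 1 ≤ C ∧
    ∀ p : ℝ[X], p.natDegree ≤ d → ∀ a b δ : ℝ, a ≤ b → 0 < δ →
      δ ≤ ‖∫ t in a..b, (𝐞 (p.eval t) : ℂ)‖ →
      ∃ t ∈ Ioc a b, ∀ m, |(derivative^[m + 1] p).eval t| ≤ (C / δ) ^ (m + 1) := by
  obtain ⟨C, hC, h⟩ := exists_forall_abs_eval_iterate_derivative_le d
  set K : ℝ := 2 * C + 8 * (3 * d + 1)
  refine ⟨K, by linarith [(Nat.cast_nonneg d : (0 : ℝ) ≤ d)], fun p hp a b δ hab hδ hint => ?_⟩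
  set Λ : ℝ := 8 * (3 * d + 1) / δ with hΛ
  have hΛ0 : 0 < Λ := by positivity
  have herror : (3 * d + 1) * (4 / Λ) = δ / 2 := by rw [hΛ]; field_simp; norm_num
  have hvol := hint.trans (norm_integral_fourierChar_eval_le hp hab hΛ0)
  obtain ⟨t, ht, hder⟩ := h (derivative p) ((natDegree_derivative_le p).trans (by omega)) a b Λ
    (δ / 2) hab hΛ0 (by positivity) (by linarith)
  refine ⟨t, ht, fun m => (hder m).trans ?_⟩
  have hΛK : Λ ≤ K / δ := by rw [hΛ]; gcongr; linarith
  have hCK : C / (δ / 2) ≤ K / δ := by rw [div_div_eq_mul_div]; gcongr; linarith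
  rw [pow_succ']
  gcongr

end VanDerCorput

section GeometricMean

variable {ι : Type*} [Fintype ι]

/-- The geometric mean of a family of reals; it is only meaningful for nonnegative families. -/
def geomMean (v : ι → ℝ) : ℝ := ∏ i, v i ^ (Fintype.card ι : ℝ)⁻¹

lemma geomMean_nonneg {v : ι → ℝ} (hv : ∀ i, 0 ≤ v i) : 0 ≤ geomMean v :=
  Finset.prod_nonneg fun i _ => rpow_nonneg (hv i) _

lemma geomMean_pos {v : ι → ℝ} (hv : ∀ i, 0 < v i) : 0 < geomMean v :=
  Finset.prod_pos fun i _ => rpow_pos_of_pos (hv i) _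

lemma geomMean_mul {u v : ι → ℝ} (hu : ∀ i, 0 ≤ u i) (hv : ∀ i, 0 ≤ v i) :
    geomMean (fun i => u i * v i) = geomMean u * geomMean v := by
  rw [geomMean, geomMean, geomMean, ← Finset.prod_mul_distrib]
  exact Finset.prod_congr rfl fun i _ => mul_rpow (hu i) (hv i)

lemma geomMean_mono {u v : ι → ℝ} (hu : ∀ i, 0 ≤ u i) (h : ∀ i, u i ≤ v i) :
    geomMean u ≤ geomMean v :=
  Finset.prod_le_prod (fun i _ => rpow_nonneg (hu i) _)
    fun i _ => rpow_le_rpow (hu i) (h i) (by positivity)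

lemma geomMean_pow {v : ι → ℝ} (hv : ∀ i, 0 ≤ v i) (m : ℕ) :
    geomMean (fun i => v i ^ m) = geomMean v ^ m := by
  rw [geomMean, geomMean, ← Finset.prod_pow]
  exact Finset.prod_congr rfl fun i _ => (rpow_pow_comm (hv i) _ m).symm

lemma geomMean_inv {v : ι → ℝ} (hv : ∀ i, 0 ≤ v i) :
    geomMean (fun i => (v i)⁻¹) = (geomMean v)⁻¹ := by
  rw [geomMean, geomMean, ← Finset.prod_inv_distrib]
  exact Finset.prod_congr rfl fun i _ => inv_rpow (hv i) _

variable [Nonempty ι]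

lemma geomMean_pow_card {v : ι → ℝ} (hv : ∀ i, 0 ≤ v i) :
    geomMean v ^ Fintype.card ι = ∏ i, v i := by
  rw [geomMean, ← Finset.prod_pow]
  exact Finset.prod_congr rfl fun i _ => rpow_inv_natCast_pow (hv i) Fintype.card_ne_zero

lemma geomMean_const {c : ℝ} (hc : 0 ≤ c) : geomMean (fun _ : ι => c) = c := by
  rw [geomMean, Finset.prod_const, Finset.card_univ]
  exact rpow_inv_natCast_pow hc Fintype.card_ne_zero

lemma one_le_geomMean {v : ι → ℝ} (hv : ∀ i, 1 ≤ v i) : 1 ≤ geomMean v := by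
  rw [← geomMean_const (ι := ι) zero_le_one]
  exact geomMean_mono (fun _ => zero_le_one) hv

lemma geomMean_const_mul {c : ℝ} (hc : 0 ≤ c) {v : ι → ℝ} (hv : ∀ i, 0 ≤ v i) :
    geomMean (fun i => c * v i) = c * geomMean v := by
  rw [geomMean_mul (fun _ => hc) hv, geomMean_const hc]

-- The products over the cyclic translates of `m` consecutive indices multiply to the `m`-th power
-- of the product of all entries.
lemma exists_embedding_prod_le_geomMean_pow {m : ℕ} (hm : m ≤ Fintype.card ι) {v : ι → ℝ}
    (hv : ∀ i, 0 < v i) : ∃ σ : Fin m ↪ ι, ∏ j, v (σ j) ≤ geomMean v ^ m := by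
  let e := Fintype.equivFin ι
  have : NeZero (Fintype.card ι) := ⟨Fintype.card_ne_zero⟩
  let σ : Fin (Fintype.card ι) → Fin m ↪ ι := fun c =>
    ((Fin.castLEEmb hm).trans (addLeftEmbedding c)).trans e.symm.toEmbedding
  suffices ∃ c, ∏ j, v (σ c j) ≤ geomMean v ^ m from this.imp' σ fun _ h => h
  by_contra! hlt
  have hprod : ∏ _c : Fin (Fintype.card ι), geomMean v ^ m < ∏ c, ∏ j, v (σ c j) :=
    Finset.prod_lt_prod_of_nonempty (fun _ _ => pow_pos (geomMean_pos hv) m) (fun c _ => hlt c)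
      Finset.univ_nonempty
  have htranslate : ∀ j, ∏ c, v (σ c j) = ∏ i, v i := fun j =>
    Equiv.prod_comp ((Equiv.addRight (Fin.castLE hm j)).trans e.symm) v
  rw [Finset.prod_comm] at hprod
  simp only [htranslate, Finset.prod_const, Finset.card_univ, Fintype.card_fin] at hprod
  rw [← geomMean_pow_card fun i => (hv i).le, ← pow_mul, ← pow_mul, mul_comm] at hprod
  exact lt_irrefl _ hprod

end GeometricMean

section Vandermonde

open Matrix

lemma pow_choose_le_abs_det_vandermonde {n : ℕ} {v : Fin n → ℝ} {η : ℝ} (hη : 0 ≤ η)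
    (hsep : Pairwise fun i j => η ≤ |v i - v j|) :
    η ^ n.choose 2 ≤ |(vandermonde v).det| := by
  have hcount : ∏ i : Fin n, ∏ _j ∈ Finset.Ioi i, η = η ^ n.choose 2 := by
    simp only [Finset.prod_const, Finset.prod_pow_eq_pow_sum, Fin.card_Ioi]
    rw [Fin.sum_univ_eq_sum_range (fun i => n - 1 - i) n, Finset.sum_range_reflect (fun i => i),
      Finset.sum_range_id, Nat.choose_two_right]
  rw [det_vandermonde, Finset.abs_prod, ← hcount]
  refine Finset.prod_le_prod (fun i _ => Finset.prod_nonneg fun _ _ => hη) fun i _ => ?_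
  rw [Finset.abs_prod]
  exact Finset.prod_le_prod (fun _ _ => hη) fun j hj => hsep (Finset.mem_Ioi.1 hj).ne'

lemma volume_forall_mulVec_mem {ι : Type*} [Fintype ι] [DecidableEq ι] {M : Matrix ι ι ℝ}
    (hM : M.det ≠ 0) (V : ι → Set ℝ) :
    volume {q : ι → ℝ | ∀ i, (M *ᵥ q) i ∈ V i} =
      ENNReal.ofReal |M.det⁻¹| * ∏ i, volume (V i) := by
  have hset : {q : ι → ℝ | ∀ i, (M *ᵥ q) i ∈ V i} = toLin' M ⁻¹' univ.pi V := by
    ext q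
    simp
  rw [hset, Measure.addHaar_preimage_linearMap volume (by rwa [LinearMap.det_toLin']),
    LinearMap.det_toLin', volume_pi_pi]

lemma volume_forall_mul_sum_pow_mem_le {n : ℕ} {s : Fin n → ℝ} {η w : ℝ} (hη : 0 < η)
    (hw : 1 ≤ w) (hsep : Pairwise fun i j => η ≤ |s i - s j|) (V : Fin n → Set ℝ) :
    volume {q : Fin n → ℝ | ∀ i, w * ∑ j, q j * s i ^ (j : ℕ) ∈ V i} ≤
      ENNReal.ofReal (η⁻¹ ^ n.choose 2) * ∏ i, volume (V i) := by
  set M : Matrix (Fin n) (Fin n) ℝ := w • vandermonde s with hM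
  have hdet : η ^ n.choose 2 ≤ |M.det| := by
    rw [hM, det_smul, abs_mul, abs_of_nonneg (by positivity)]
    exact (pow_choose_le_abs_det_vandermonde hη.le hsep).trans
      (le_mul_of_one_le_left (abs_nonneg _) (one_le_pow₀ hw))
  have hdet0 : M.det ≠ 0 := abs_pos.1 ((by positivity : 0 < η ^ n.choose 2).trans_le hdet)
  have hset : ∀ (q : Fin n → ℝ) i, w * ∑ j, q j * s i ^ (j : ℕ) = (M *ᵥ q) i := fun q i => by
    rw [hM, smul_mulVec, Pi.smul_apply, smul_eq_mul]
    simp only [mulVec, dotProduct, vandermonde_apply, mul_comm]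
  simp only [hset, volume_forall_mulVec_mem hdet0]
  gcongr
  rw [abs_inv, inv_pow]
  exact inv_anti₀ (by positivity) hdet

lemma volume_forall_mul_sum_pow_mem_le_geomMean {ι : Type*} [Fintype ι] [Nonempty ι] {n : ℕ}
    (hn : n ≤ Fintype.card ι) {s : ι → ℝ} {η w : ℝ} (hη : 0 < η) (hw : 1 ≤ w)
    (hsep : Pairwise fun i j => η ≤ |s i - s j|) {V : ι → Set ℝ} {v : ι → ℝ} (hv : ∀ i, 0 < v i)
    (hV : ∀ i, volume (V i) ≤ ENNReal.ofReal (v i)) :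
    volume {q : Fin n → ℝ | ∀ i, w * ∑ j, q j * s i ^ (j : ℕ) ∈ V i} ≤
      ENNReal.ofReal (η⁻¹ ^ n.choose 2 * geomMean v ^ n) := by
  obtain ⟨σ, hσ⟩ := exists_embedding_prod_le_geomMean_pow hn hv
  have hprod : ∏ j, volume (V (σ j)) ≤ ENNReal.ofReal (geomMean v ^ n) := by
    refine (Finset.prod_le_prod' fun j _ => hV (σ j)).trans ?_
    rw [← ENNReal.ofReal_prod_of_nonneg fun j _ => (hv _).le]
    exact ENNReal.ofReal_le_ofReal hσ
  have hsub : {q : Fin n → ℝ | ∀ i, w * ∑ j, q j * s i ^ (j : ℕ) ∈ V i} ⊆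
      {q | ∀ i, w * ∑ j, q j * s (σ i) ^ (j : ℕ) ∈ V (σ i)} := fun q hq i => hq (σ i)
  rw [ENNReal.ofReal_mul (by positivity)]
  refine (measure_mono hsub).trans <| (volume_forall_mul_sum_pow_mem_le (s := s ∘ σ) hη hw
    (fun i j hij => hsep (σ.injective.ne hij)) _).trans ?_
  gcongr

end Vandermonde

section PhasePolynomials

open Polynomial

/-- Indices of the coefficients of the `n + 1` highest powers of `ξ₂` in a phase of degree `k`: the
power `ξ₂ ^ (k - j)` comes with the `j + 1` coefficients of a polynomial of degree `j` in `ξ₁`. -/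
def TopIdx : ℕ → Type
  | 0 => Fin 1
  | n + 1 => TopIdx n ⊕ Fin (n + 2)

instance TopIdx.instFintype : ∀ n, Fintype (TopIdx n)
  | 0 => inferInstanceAs (Fintype (Fin 1))
  | n + 1 => @instFintypeSum (TopIdx n) (Fin (n + 2)) (TopIdx.instFintype n) _

/-- Splitting off the coefficients of the lowest power of `ξ₂`. -/
def TopIdx.split (n : ℕ) : (TopIdx (n + 1) → ℝ) ≃ᵐ (TopIdx n → ℝ) × (Fin (n + 2) → ℝ) :=
  MeasurableEquiv.sumPiEquivProdPi (fun _ : TopIdx n ⊕ Fin (n + 2) => ℝ)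

lemma TopIdx.measurePreserving_split (n : ℕ) : MeasurePreserving (TopIdx.split n) :=
  volume_measurePreserving_sumPiEquivProdPi (fun _ : TopIdx n ⊕ Fin (n + 2) => ℝ)

lemma TopIdx.continuous_split (n : ℕ) : Continuous (TopIdx.split n) := by
  refine Continuous.prodMk ?_ ?_
  · exact continuous_pi fun i =>
      continuous_apply (A := fun _ : TopIdx n ⊕ Fin (n + 2) => ℝ) (Sum.inl i)
  · exact continuous_pi fun i =>
      continuous_apply (A := fun _ : TopIdx n ⊕ Fin (n + 2) => ℝ) (Sum.inr i)

/-- The sum of the terms of the phase with the `n + 1` highest powers of `ξ₂`, as a polynomial in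
`ξ₂` for fixed `ξ₁ = s`. -/
def topPoly (k : ℕ) : ∀ n, (TopIdx n → ℝ) → ℝ → ℝ[X]
  | 0, x, _ => C (x (0 : Fin 1)) * X ^ k
  | n + 1, x, s => topPoly k n (TopIdx.split n x).1 s +
      C (∑ j, (TopIdx.split n x).2 j * s ^ (j : ℕ)) * X ^ (k - (n + 1))

/-- The derivative of `topPoly` for which the lowest coefficients sit in the constant term. -/
def topDeriv (k n : ℕ) (x : TopIdx n → ℝ) (s : ℝ) : ℝ[X] := derivative^[k - n] (topPoly k n x s)

lemma natDegree_topPoly_le (k n : ℕ) (x : TopIdx n → ℝ) (s : ℝ) :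
    (topPoly k n x s).natDegree ≤ k := by
  induction n with
  | zero => exact natDegree_C_mul_X_pow_le _ _
  | succ n ih =>
    refine natDegree_add_le_of_degree_le (ih _) ((natDegree_C_mul_X_pow_le _ _).trans (by omega))

lemma natDegree_topDeriv_le (k n : ℕ) (x : TopIdx n → ℝ) (s : ℝ) :
    (topDeriv k n x s).natDegree ≤ k :=
  ((natDegree_iterate_derivative _ _).trans (Nat.sub_le _ _)).trans (natDegree_topPoly_le _ _ _ _)

lemma topDeriv_zero (k : ℕ) (x : TopIdx 0 → ℝ) (s : ℝ) :
    topDeriv k 0 x s = C (k.factorial * x (0 : Fin 1)) := by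
  rw [topDeriv, topPoly, Nat.sub_zero, iterate_derivative_C_mul, iterate_derivative_X_pow_eq_smul]
  simp [Nat.descFactorial_self, mul_comm]

lemma topDeriv_succ (k n : ℕ) (x : TopIdx (n + 1) → ℝ) (s : ℝ) :
    topDeriv k (n + 1) x s = derivative^[k - (n + 1)] (topPoly k n (TopIdx.split n x).1 s) +
      C ((k - (n + 1)).factorial * ∑ j, (TopIdx.split n x).2 j * s ^ (j : ℕ)) := by
  rw [topDeriv, topPoly, iterate_map_add, iterate_derivative_C_mul,
    iterate_derivative_X_pow_eq_smul]
  simp [Nat.descFactorial_self, mul_comm, smul_eq_C_mul]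

lemma derivative_iterate_topPoly {k n : ℕ} (h : n + 1 ≤ k) (x : TopIdx n → ℝ) (s : ℝ) :
    derivative (derivative^[k - (n + 1)] (topPoly k n x s)) = topDeriv k n x s := by
  rw [topDeriv, ← Function.iterate_succ_apply' derivative]
  congr 2
  omega

lemma continuous_eval_iterate_derivative_topPoly (k n m : ℕ) :
    Continuous fun z : ((TopIdx n → ℝ) × ℝ) × ℝ =>
      (derivative^[m] (topPoly k n z.1.1 z.1.2)).eval z.2 := by
  induction n with
  | zero =>
    have h : ∀ z : ((TopIdx 0 → ℝ) × ℝ) × ℝ, (derivative^[m] (topPoly k 0 z.1.1 z.1.2)).eval z.2 =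
        z.1.1 (0 : Fin 1) * (derivative^[m] (X ^ k : ℝ[X])).eval z.2 := by
      intro z
      rw [topPoly, iterate_derivative_C_mul, eval_C_mul]
    simp only [h]
    have h1 : Continuous fun z : ((TopIdx 0 → ℝ) × ℝ) × ℝ => z.1.1 (0 : Fin 1) :=
      (continuous_apply _).comp (continuous_fst.comp continuous_fst)
    exact h1.mul ((derivative^[m] (X ^ k : ℝ[X])).continuous.comp continuous_snd)
  | succ n ih =>
    have h : ∀ z : ((TopIdx (n + 1) → ℝ) × ℝ) × ℝ,
        (derivative^[m] (topPoly k (n + 1) z.1.1 z.1.2)).eval z.2 =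
        (derivative^[m] (topPoly k n (TopIdx.split n z.1.1).1 z.1.2)).eval z.2 +
        (∑ j, (TopIdx.split n z.1.1).2 j * z.1.2 ^ (j : ℕ)) *
          (derivative^[m] (X ^ (k - (n + 1)) : ℝ[X])).eval z.2 := by
      intro z
      rw [topPoly, iterate_map_add, eval_add, iterate_derivative_C_mul, eval_C_mul]
    simp only [h]
    have hs : Continuous fun z : ((TopIdx (n + 1) → ℝ) × ℝ) × ℝ => TopIdx.split n z.1.1 :=
      (TopIdx.continuous_split n).comp (continuous_fst.comp continuous_fst)
    refine Continuous.add ?_ (Continuous.mul ?_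
      ((derivative^[m] (X ^ (k - (n + 1)) : ℝ[X])).continuous.comp continuous_snd))
    · exact ih.comp (Continuous.prodMk (Continuous.prodMk (continuous_fst.comp hs)
        (continuous_snd.comp continuous_fst)) continuous_snd)
    · refine continuous_finsetSum _ fun j _ => Continuous.mul ?_ ?_
      · exact (continuous_apply j).comp (continuous_snd.comp hs)
      · exact (continuous_snd.comp continuous_fst).pow _

/-- The coefficient vectors for which, over every point `ξ₁ = s i`, the polynomial `topDeriv` has
all its derivatives small at some common point `ξ₂ = t` of the unit interval. -/
def smallJetSet (k n : ℕ) {ι : Type*} (s A K : ι → ℝ) : Set (TopIdx n → ℝ) :=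
  {x | ∀ i, ∃ t ∈ Icc (0 : ℝ) 1, ∀ m,
    |(derivative^[m] (topDeriv k n x (s i))).eval t| ≤ A i * K i ^ m}

lemma isClosed_smallJetSet (k n : ℕ) {ι : Type*} (s A K : ι → ℝ) :
    IsClosed (smallJetSet k n s A K) := by
  rw [smallJetSet, ofPred_forall]
  refine isClosed_iInter fun i => ?_
  have hc : IsClosed {z : (TopIdx n → ℝ) × (Icc (0 : ℝ) 1) | ∀ m,
      |(derivative^[m] (topDeriv k n z.1 (s i))).eval (z.2 : ℝ)| ≤ A i * K i ^ m} := by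
    rw [ofPred_forall]
    refine isClosed_iInter fun m => isClosed_le (Continuous.abs ?_) continuous_const
    simp only [topDeriv, ← Function.iterate_add_apply]
    exact (continuous_eval_iterate_derivative_topPoly k n (m + (k - n))).comp
      (Continuous.prodMk (Continuous.prodMk continuous_fst continuous_const)
        (continuous_subtype_val.comp continuous_snd))
  have := isClosedMap_fst_of_compactSpace (X := TopIdx n → ℝ) (Y := Icc (0 : ℝ) 1) _ hc
  convert this using 1
  ext x
  simp only [mem_ofPred_eq, mem_image, Prod.exists, exists_and_right, exists_eq_right]
  constructor
  · rintro ⟨t, ht, h⟩; exact ⟨⟨t, ht⟩, h⟩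
  · rintro ⟨⟨t, ht⟩, h⟩; exact ⟨t, ht, h⟩

/-- The values `v` of the constant term for which the jet of `R + v` is small somewhere in the unit
interval. -/
def constantTermSet (R : ℝ[X]) (A K : ℝ) : Set ℝ :=
  {v | ∃ t ∈ Icc (0 : ℝ) 1, ∀ m, |(derivative^[m] (R + C v)).eval t| ≤ A * K ^ m}

lemma mem_constantTermSet_iff {R : ℝ[X]} {A K v : ℝ} :
    v ∈ constantTermSet R A K ↔ ∃ t ∈ Icc (0 : ℝ) 1,
      (∀ m, |(derivative^[m] (derivative R)).eval t| ≤ A * K * K ^ m) ∧ |R.eval t + v| ≤ A := by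
  refine exists_congr fun t => and_congr_right fun _ => ⟨fun h => ⟨fun m => ?_, ?_⟩, fun h m => ?_⟩
  · simpa [mul_assoc, pow_succ'] using h (m + 1)
  · simpa using h 0
  · cases m with
    | zero => simpa using h.2
    | succ m => simpa [mul_assoc, pow_succ'] using h.1 m

/-- The coefficients `q` of the lowest power of `ξ₂` which, together with given higher
coefficients `ω`, form an element of `smallJetSet k (n + 1)`. -/
def smallJetSlice (k n : ℕ) {ι : Type*} (s A K : ι → ℝ) (ω : TopIdx n → ℝ) :
    Set (Fin (n + 2) → ℝ) :=
  {q | ∀ i, ((k - (n + 1)).factorial : ℝ) * ∑ j, q j * s i ^ (j : ℕ) ∈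
    constantTermSet (derivative^[k - (n + 1)] (topPoly k n ω (s i))) (A i) (K i)}

variable {k n : ℕ} {ι : Type*} {s A K : ι → ℝ}

lemma mem_smallJetSet_succ_iff {x : TopIdx (n + 1) → ℝ} :
    x ∈ smallJetSet k (n + 1) s A K ↔
      (TopIdx.split n x).2 ∈ smallJetSlice k n s A K (TopIdx.split n x).1 := by
  simp only [smallJetSet, smallJetSlice, constantTermSet, mem_ofPred_eq, topDeriv_succ]

lemma smallJetSet_mono {A' K' : ι → ℝ} (hA : ∀ i, 0 ≤ A i) (hK : ∀ i, 0 ≤ K i)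
    (hAA' : ∀ i, A i ≤ A' i) (hKK' : ∀ i, K i ≤ K' i) :
    smallJetSet k n s A K ⊆ smallJetSet k n s A' K' := by
  intro x hx i
  obtain ⟨t, ht, hm⟩ := hx i
  have hA' := (hA i).trans (hAA' i)
  exact ⟨t, ht, fun m => (hm m).trans <|
    mul_le_mul (hAA' i) (pow_le_pow_left₀ (hK i) (hKK' i) m) (pow_nonneg (hK i) m) hA'⟩

lemma mem_smallJetSet_of_nonempty_smallJetSlice (h : n + 1 ≤ k) {ω : TopIdx n → ℝ}
    (hω : (smallJetSlice k n s A K ω).Nonempty) :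
    ω ∈ smallJetSet k n s (fun i => A i * K i) K := by
  obtain ⟨q, hq⟩ := hω
  intro i
  obtain ⟨t, ht, hm, -⟩ := mem_constantTermSet_iff.1 (hq i)
  exact ⟨t, ht, by rwa [derivative_iterate_topPoly h] at hm⟩

lemma volume_smallJetSet_succ_inter_le {W : Set (TopIdx n → ℝ)} (hW : MeasurableSet W)
    (φ : (TopIdx n → ℝ) → ℝ≥0∞) (hφ : ∀ ω ∈ W, volume (smallJetSlice k n s A K ω) ≤ φ ω) :
    volume (smallJetSet k (n + 1) s A K ∩ {x | (TopIdx.split n x).1 ∈ W}) ≤ ∫⁻ ω in W, φ ω := by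
  have hm : MeasurableSet (smallJetSet k (n + 1) s A K ∩ {x | (TopIdx.split n x).1 ∈ W}) :=
    (isClosed_smallJetSet k (n + 1) s A K).measurableSet.inter
      (measurable_fst.comp (TopIdx.split n).measurable hW)
  rw [← (TopIdx.measurePreserving_split n).symm.measure_preimage_equiv, Measure.volume_eq_prod,
    Measure.prod_apply ((TopIdx.split n).symm.measurable hm), ← lintegral_indicator hW]
  refine lintegral_mono fun ω => ?_
  by_cases hω : ω ∈ W
  · rw [indicator_of_mem hω]
    refine (measure_mono ?_).trans (hφ ω hω)
    rintro q ⟨hq, -⟩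
    simpa only [mem_smallJetSet_succ_iff, MeasurableEquiv.apply_symm_apply] using hq
  · rw [indicator_of_notMem hω, nonpos_iff_eq_zero]
    convert measure_empty (μ := (volume : Measure (Fin (n + 2) → ℝ)))
    refine eq_empty_of_forall_notMem fun q hq => hω ?_
    simpa only [mem_ofPred_eq, MeasurableEquiv.apply_symm_apply] using hq.2

lemma volume_smallJetSet_succ_le (φ : (TopIdx n → ℝ) → ℝ≥0∞)
    (hφ : ∀ ω, volume (smallJetSlice k n s A K ω) ≤ φ ω) :
    volume (smallJetSet k (n + 1) s A K) ≤ ∫⁻ ω, φ ω := by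
  simpa using volume_smallJetSet_succ_inter_le MeasurableSet.univ φ fun ω _ => hφ ω

lemma volume_smallJetSlice_le [Fintype ι] [Nonempty ι] (hn : n + 2 ≤ Fintype.card ι) {η : ℝ}
    (hη : 0 < η) (hsep : Pairwise fun i j => η ≤ |s i - s j|) {v : ι → ℝ} (hv : ∀ i, 0 < v i)
    {ω : TopIdx n → ℝ} (hω : ∀ i, volume (constantTermSet
      (derivative^[k - (n + 1)] (topPoly k n ω (s i))) (A i) (K i)) ≤ ENNReal.ofReal (v i)) :
    volume (smallJetSlice k n s A K ω) ≤
      ENNReal.ofReal (η⁻¹ ^ (n + 2).choose 2 * geomMean v ^ (n + 2)) :=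
  volume_forall_mul_sum_pow_mem_le_geomMean hn hη
    (mod_cast Nat.one_le_iff_ne_zero.2 (Nat.factorial_ne_zero _)) hsep hv hω

end PhasePolynomials

section LayerCake

variable {ι : Type*} [Fintype ι]

lemma sum_prod_pow_le {r : ℝ} (hr0 : 0 ≤ r) (hr1 : r < 1) (S : Finset (ι → ℕ)) :
    ∑ m ∈ S, ∏ i, r ^ m i ≤ ((1 - r)⁻¹) ^ Fintype.card ι := by
  classical
  have hsum : Summable (fun m : ℕ => r ^ m) := summable_geometric_of_lt_one hr0 hr1
  set N := S.sup (fun m => Finset.univ.sup m) + 1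
  have hsub : S ⊆ Fintype.piFinset fun _ : ι => Finset.range N := fun m hm => by
    refine Fintype.mem_piFinset.2 fun i => Finset.mem_range.2 (Nat.lt_succ_of_le ?_)
    exact (Finset.le_sup (f := m) (Finset.mem_univ i)).trans
      (Finset.le_sup (f := fun m : ι → ℕ => Finset.univ.sup m) hm)
  calc ∑ m ∈ S, ∏ i, r ^ m i
      ≤ ∑ m ∈ Fintype.piFinset fun _ : ι => Finset.range N, ∏ i, r ^ m i :=
        Finset.sum_le_sum_of_subset_of_nonneg hsub
          fun m _ _ => Finset.prod_nonneg fun i _ => pow_nonneg hr0 _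
    _ = (∑ j ∈ Finset.range N, r ^ j) ^ Fintype.card ι := by
        rw [Finset.sum_prod_piFinset (Finset.range N) fun _ j => r ^ j, Finset.prod_const,
          Finset.card_univ]
    _ ≤ ((1 - r)⁻¹) ^ Fintype.card ι := by
        rw [← tsum_geometric_of_lt_one hr0 hr1]
        gcongr
        exact hsum.sum_le_tsum _ fun _ _ => pow_nonneg hr0 _

variable [Nonempty ι]

lemma exists_sum_inv_geomMean_two_pow_le (ι : Type*) [Fintype ι] [Nonempty ι] :
    ∃ C : ℝ, 0 < C ∧ ∀ S : Finset (ι → ℕ),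
      ∑ m ∈ S, (geomMean fun i => (2 : ℝ) ^ m i)⁻¹ ≤ C := by
  set r : ℝ := ((2 : ℝ) ^ (Fintype.card ι : ℝ)⁻¹)⁻¹
  have hcard : 0 < (Fintype.card ι : ℝ)⁻¹ := inv_pos.2 (mod_cast Fintype.card_pos)
  have hr1 : r < 1 := inv_lt_one_of_one_lt₀ (one_lt_rpow one_lt_two hcard)
  have hr : ∀ m : ι → ℕ, (geomMean fun i => (2 : ℝ) ^ m i)⁻¹ = ∏ i, r ^ m i := fun m => by
    rw [geomMean, ← Finset.prod_inv_distrib]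
    exact Finset.prod_congr rfl fun i _ => by rw [← rpow_pow_comm zero_le_two, inv_pow]
  refine ⟨((1 - r)⁻¹) ^ Fintype.card ι, pow_pos (inv_pos.2 (sub_pos.2 hr1)) _, fun S => ?_⟩
  simp only [hr]
  exact sum_prod_pow_le (by positivity) hr1 S

lemma exists_two_pow_le_and_geomMean_le {u : ι → ℝ} (hu : ∀ i, 1 ≤ u i) :
    ∃ m : ι → ℕ, (∀ i, 2 ^ m i ≤ u i) ∧ geomMean u ≤ 2 * geomMean fun i => (2 : ℝ) ^ m i := by
  choose m hm using fun i => exists_nat_pow_near (hu i) one_lt_two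
  refine ⟨m, fun i => (hm i).1, ?_⟩
  rw [← geomMean_const_mul zero_le_two fun i => by positivity]
  exact geomMean_mono (fun i => zero_le_one.trans (hu i))
    fun i => (hm i).2.le.trans_eq (pow_succ' _ _)

lemma pow_mul_inv_pow_le_inv {g : ℝ} (hg : 1 ≤ g) {e b : ℕ} (heb : e < b) :
    g ^ e * g⁻¹ ^ b ≤ g⁻¹ := by
  have hg0 : g ≠ 0 := (zero_lt_one.trans_le hg).ne'
  have hinv : g⁻¹ ≤ 1 := inv_le_one_of_one_le₀ hg
  obtain ⟨c, rfl⟩ := Nat.exists_eq_add_of_lt heb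
  calc g ^ e * g⁻¹ ^ (e + c + 1) = g⁻¹ ^ c * g⁻¹ := by
        rw [pow_succ, pow_add, ← mul_assoc, ← mul_assoc, ← mul_pow, mul_inv_cancel₀ hg0, one_pow,
          one_mul]
    _ ≤ g⁻¹ := mul_le_of_le_one_left (by positivity) (pow_le_one₀ (by positivity) hinv)

-- The integral is decomposed dyadically according to the size of every single quantity `u · i`.
lemma exists_lintegral_le_of_superlevel (ι : Type*) [Fintype ι] [Nonempty ι] (e : ℕ) :
    ∃ C : ℝ, 0 < C ∧ ∀ {Ω : Type*} [MeasurableSpace Ω] (μ : Measure Ω) {b : ℕ}, e < b →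
      ∀ (u : Ω → ι → ℝ) (φ : Ω → ℝ≥0∞) {P M : ℝ}, 0 ≤ P → 0 ≤ M →
      (∀ l : ι → ℝ, (∀ i, 1 ≤ l i) → μ {ω | φ ω ≠ 0 ∧ ∀ i, l i ≤ u ω i} ≤
        ENNReal.ofReal (M * (geomMean l)⁻¹ ^ b)) →
      (∀ ω, φ ω ≠ 0 → (∀ i, 1 ≤ u ω i) ∧ φ ω ≤ ENNReal.ofReal (P * geomMean (u ω) ^ e)) →
      ∫⁻ ω, φ ω ∂μ ≤ ENNReal.ofReal (C * P * M) := by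
  obtain ⟨C, hC, hsum⟩ := exists_sum_inv_geomMean_two_pow_le ι
  refine ⟨2 ^ e * C, by positivity, fun {Ω} _ μ {b} heb u φ {P M} hP hM hμ hφ => ?_⟩
  set g : (ι → ℕ) → ℝ := fun m => geomMean fun i => (2 : ℝ) ^ m i
  have hg : ∀ m, 1 ≤ g m := fun m => one_le_geomMean fun i => one_le_pow₀ one_le_two
  set E : (ι → ℕ) → Set Ω := fun m => toMeasurable μ {ω | φ ω ≠ 0 ∧ ∀ i, (2 : ℝ) ^ m i ≤ u ω i}
  have hE : ∀ m, MeasurableSet (E m) := fun m => measurableSet_toMeasurable _ _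
  have hpt : ∀ ω, φ ω ≤ ∑' m, (E m).indicator
      (fun _ => ENNReal.ofReal (2 ^ e * P * g m ^ e)) ω := by
    intro ω
    by_cases h0 : φ ω = 0
    · exact h0 ▸ zero_le
    obtain ⟨hu, hle⟩ := hφ ω h0
    obtain ⟨m, hmu, hm⟩ := exists_two_pow_le_and_geomMean_le hu
    have hmem : ω ∈ E m := subset_toMeasurable μ _ ⟨h0, hmu⟩
    refine le_trans ?_ (ENNReal.le_tsum m)
    rw [indicator_of_mem hmem]
    refine hle.trans (ENNReal.ofReal_le_ofReal ?_)
    have := geomMean_nonneg fun i => zero_le_one.trans (hu i)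
    calc P * geomMean (u ω) ^ e ≤ P * (2 * g m) ^ e := by gcongr
      _ = 2 ^ e * P * g m ^ e := by rw [mul_pow]; ring
  have hterm : ∀ m, ∫⁻ ω, (E m).indicator (fun _ => ENNReal.ofReal (2 ^ e * P * g m ^ e)) ω ∂μ ≤
      ENNReal.ofReal (2 ^ e * P * M * (g m)⁻¹) := fun m => by
    have hg0 : 0 < g m := zero_lt_one.trans_le (hg m)
    rw [lintegral_indicator_const (hE m), measure_toMeasurable]
    refine (mul_le_mul_right (hμ _ fun i => one_le_pow₀ one_le_two) _).trans ?_
    rw [← ENNReal.ofReal_mul (by positivity)]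
    refine ENNReal.ofReal_le_ofReal ?_
    calc 2 ^ e * P * g m ^ e * (M * (g m)⁻¹ ^ b)
        = 2 ^ e * P * M * (g m ^ e * (g m)⁻¹ ^ b) := by ring
      _ ≤ 2 ^ e * P * M * (g m)⁻¹ := by gcongr; exact pow_mul_inv_pow_le_inv (hg m) heb
  refine (lintegral_mono hpt).trans ?_
  rw [lintegral_tsum fun m => (measurable_const.indicator (hE m)).aemeasurable,
    ENNReal.tsum_eq_iSup_sum]
  refine iSup_le fun S => (Finset.sum_le_sum fun m _ => hterm m).trans ?_
  rw [← ENNReal.ofReal_sum_of_nonneg fun m _ => mul_nonneg (by positivity)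
    (inv_nonneg.2 (zero_le_one.trans (hg m))), ← Finset.mul_sum]
  refine ENNReal.ofReal_le_ofReal ?_
  calc 2 ^ e * P * M * ∑ m ∈ S, (g m)⁻¹ ≤ 2 ^ e * P * M * C := by gcongr; exact hsum S
    _ = 2 ^ e * C * P * M := by ring

end LayerCake

section ConstantTerms

open Polynomial

lemma abs_sub_le_of_abs_add_le {x y v w A D : ℝ} (hx : |x + v| ≤ A) (hy : |y + w| ≤ A)
    (hxy : |x - y| ≤ D) : |v - w| ≤ 2 * A + D := by
  rw [abs_le] at *
  constructor <;> linarith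

lemma abs_eval_sub_eval_le_of_abs_eval_derivative_le {R : ℝ[X]} {S : Set ℝ} (hS : Convex ℝ S)
    {B : ℝ} (hB : ∀ x ∈ S, |(derivative R).eval x| ≤ B) {t t' : ℝ} (ht : t ∈ S) (ht' : t' ∈ S) :
    |R.eval t - R.eval t'| ≤ B * |t - t'| :=
  hS.norm_image_sub_le_of_norm_hasDerivWithin_le
    (fun x _ => (R.hasDerivAt x).hasDerivWithinAt) hB ht' ht

lemma volume_exists_abs_eval_add_le_le {R : ℝ[X]} {S : Set ℝ} (hS : Convex ℝ S) {A B D : ℝ}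
    (hB0 : 0 ≤ B) (hB : ∀ x ∈ S, |(derivative R).eval x| ≤ B)
    (hD : ∀ t ∈ S, ∀ t' ∈ S, |t - t'| ≤ D) :
    volume {v | ∃ t ∈ S, |R.eval t + v| ≤ A} ≤ ENNReal.ofReal (2 * A + B * D) := by
  refine volume_le_of_forall_abs_sub_le ?_
  rintro v ⟨t, ht, hv⟩ w ⟨t', ht', hw⟩
  refine abs_sub_le_of_abs_add_le hv hw ?_
  exact (abs_eval_sub_eval_le_of_abs_eval_derivative_le hS hB ht ht').trans
    (mul_le_mul_of_nonneg_left (hD t ht t' ht') hB0)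

lemma abs_eval_hasseDeriv_le (f : ℝ[X]) (m : ℕ) (t : ℝ) :
    |(hasseDeriv m f).eval t| ≤ |(derivative^[m] f).eval t| := by
  have h : (m.factorial • hasseDeriv m f).eval t = (derivative^[m] f).eval t :=
    congrArg (fun g => g.eval t) (congrFun (factorial_smul_hasseDeriv (R := ℝ) m) f)
  rw [← h, eval_smul, nsmul_eq_mul, abs_mul, Nat.abs_cast]
  exact le_mul_of_one_le_left (abs_nonneg _)
    (mod_cast Nat.one_le_iff_ne_zero.2 m.factorial_ne_zero)

lemma abs_eval_le_of_forall_abs_eval_iterate_derivative_le {f : ℝ[X]} {d : ℕ}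
    (hd : f.natDegree ≤ d) {B K t t₀ : ℝ} (hK : 0 ≤ K)
    (h : ∀ m, |(derivative^[m] f).eval t₀| ≤ B * K ^ m) (ht : |t - t₀| * K ≤ 1) :
    |f.eval t| ≤ (d + 1) * B := by
  have hB : 0 ≤ B := (abs_nonneg _).trans ((h 0).trans_eq (by simp))
  have hterm : ∀ m ∈ Finset.range (d + 1), |(taylor t₀ f).coeff m * (t - t₀) ^ m| ≤ B := by
    intro m _
    rw [taylor_coeff, abs_mul, abs_pow]
    calc |(hasseDeriv m f).eval t₀| * |t - t₀| ^ m
        ≤ B * K ^ m * |t - t₀| ^ m := by gcongr; exact (abs_eval_hasseDeriv_le f m t₀).trans (h m)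
      _ = B * (|t - t₀| * K) ^ m := by rw [mul_pow]; ring
      _ ≤ B := mul_le_of_le_one_right hB (pow_le_one₀ (by positivity) ht)
  rw [← taylor_eval_sub t₀ f, eval_eq_sum_range' (n := d + 1) (by rw [natDegree_taylor]; omega)]
  refine (Finset.abs_sum_le_sum_abs _ _).trans ((Finset.sum_le_sum hterm).trans_eq ?_)
  simp

/-- The `j`-th interval of the partition of the unit interval into `n` intervals of equal length. -/
def gridCell (n j : ℕ) : Set ℝ := Icc (j / n) ((j + 1 : ℕ) / n)

lemma abs_sub_le_of_mem_gridCell {n j : ℕ} {t t' : ℝ} (ht : t ∈ gridCell n j)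
    (ht' : t' ∈ gridCell n j) : |t - t'| ≤ 1 / n := by
  have h := Real.dist_le_of_mem_Icc ht ht'
  rwa [Real.dist_eq, ← sub_div, Nat.cast_succ, add_sub_cancel_left] at h

lemma exists_lt_mem_gridCell {n : ℕ} (hn : 0 < n) {t : ℝ} (ht : t ∈ Icc (0 : ℝ) 1) :
    ∃ j < n, t ∈ gridCell n j := by
  have hn' : (0 : ℝ) < n := mod_cast hn
  rcases ht.2.eq_or_lt with rfl | h1
  · refine ⟨n - 1, by omega, ?_, ?_⟩
    · rw [div_le_one hn']
      exact_mod_cast n.sub_le 1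
    · rw [Nat.sub_add_cancel hn, div_self hn'.ne']
  · have h0 : 0 ≤ t * n := mul_nonneg ht.1 hn'.le
    refine ⟨⌊t * n⌋₊, (Nat.floor_lt h0).2 (mul_lt_of_lt_one_left hn' h1), ?_, ?_⟩
    · exact (div_le_iff₀ hn').2 (Nat.floor_le h0)
    · exact (le_div_iff₀ hn').2 (by exact_mod_cast (Nat.lt_floor_add_one _).le)

lemma card_div_le_volume_real_of_gridCell_subset {n : ℕ} {S : Finset ℕ} (hSn : S ⊆ Finset.range n)
    {U : Set ℝ} (hS : ∀ j ∈ S, gridCell n j ⊆ U) :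
    (S.card : ℝ) / n ≤ volume.real (Ioc (0 : ℝ) 1 ∩ U) := by
  have hmono : Monotone fun j : ℕ => (j : ℝ) / n := fun i j hij => by dsimp only; gcongr
  have hdisj : (S : Set ℕ).PairwiseDisjoint fun j : ℕ => Ioc ((j : ℝ) / n) ((j + 1 : ℕ) / n) :=
    hmono.pairwise_disjoint_on_Ioc_succ.set_pairwise _
  have hlen : ∀ j ∈ S, volume.real (Ioc ((j : ℝ) / n) ((j + 1 : ℕ) / n)) = 1 / n := fun j _ => by
    rw [Real.volume_real_Ioc_of_le (hmono j.le_succ), ← sub_div, Nat.cast_succ,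
      add_sub_cancel_left]
  have hsub : ⋃ j ∈ S, Ioc ((j : ℝ) / n) ((j + 1 : ℕ) / n) ⊆ Ioc (0 : ℝ) 1 ∩ U := by
    refine iUnion₂_subset fun j hj t ht =>
      ⟨⟨ht.1.trans_le' (by positivity), ht.2.trans ?_⟩, hS j hj (Ioc_subset_Icc_self ht)⟩
    exact div_le_one_of_le₀ (mod_cast Finset.mem_range.1 (hSn hj)) n.cast_nonneg
  refine le_trans (le_of_eq ?_) (measureReal_mono hsub
    ((measure_mono inter_subset_left).trans_lt measure_Ioc_lt_top).ne)
  rw [measureReal_biUnion_finset hdisj (fun j _ => measurableSet_Ioc)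
    (fun j _ => measure_Ioc_lt_top.ne), Finset.sum_congr rfl hlen, Finset.sum_const, nsmul_eq_mul,
    mul_one_div]

lemma exists_finset_constantTermSet_subset {d n : ℕ} (hn : 0 < n) {R : ℝ[X]}
    (hR : (derivative R).natDegree ≤ d) {A K : ℝ} (hK : 0 ≤ K) (hKn : K ≤ n) :
    ∃ S ⊆ Finset.range n,
      (∀ j ∈ S, ∀ t ∈ gridCell n j, |(derivative R).eval t| ≤ (d + 1) * (A * K)) ∧
      constantTermSet R A K ⊆ ⋃ j ∈ S, {v | ∃ t ∈ gridCell n j, |R.eval t + v| ≤ A} := by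
  classical
  refine ⟨{j ∈ Finset.range n | ∃ t ∈ gridCell n j,
    ∀ m, |(derivative^[m] (derivative R)).eval t| ≤ A * K * K ^ m}, Finset.filter_subset _ _,
    fun j hj t ht => ?_, fun v hv => ?_⟩
  · obtain ⟨-, t₀, ht₀, hm⟩ := Finset.mem_filter.1 hj
    refine abs_eval_le_of_forall_abs_eval_iterate_derivative_le hR hK hm ?_
    have hn' : (0 : ℝ) < n := mod_cast hn
    calc |t - t₀| * K ≤ 1 / n * n := by gcongr; exact abs_sub_le_of_mem_gridCell ht ht₀
      _ = 1 := one_div_mul_cancel hn'.ne'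
  · obtain ⟨t, ht, hm, hv⟩ := mem_constantTermSet_iff.1 hv
    obtain ⟨j, hj, hjt⟩ := exists_lt_mem_gridCell hn ht
    exact mem_biUnion (Finset.mem_filter.2 ⟨Finset.mem_range.2 hj, t, hjt, hm⟩) ⟨t, hjt, hv⟩

lemma volume_constantTermSet_le_of_subset {n : ℕ} {R : ℝ[X]} {A B K : ℝ} (hB : 0 ≤ B) {S : Finset ℕ}
    (hS : ∀ j ∈ S, ∀ t ∈ gridCell n j, |(derivative R).eval t| ≤ B)
    (hsub : constantTermSet R A K ⊆ ⋃ j ∈ S, {v | ∃ t ∈ gridCell n j, |R.eval t + v| ≤ A}) :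
    volume (constantTermSet R A K) ≤ ENNReal.ofReal (S.card * (2 * A + B / n)) := by
  refine (measure_mono hsub).trans ((measure_biUnion_finset_le _ _).trans ?_)
  refine (Finset.sum_le_sum fun j hj => volume_exists_abs_eval_add_le_le (convex_Icc _ _) hB
    (hS j hj) fun t ht t' ht' => abs_sub_le_of_mem_gridCell ht ht').trans_eq ?_
  rw [Finset.sum_const, nsmul_eq_mul, ← ENNReal.ofReal_natCast,
    ← ENNReal.ofReal_mul (Nat.cast_nonneg _), mul_one_div]

-- `N` counts the intervals of length about `1 / K` on which the derivative is small: a large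
-- volume forces the derivative to be small on a large set, which improves the control of its jet.
lemma exists_volume_constantTermSet_le (d : ℕ) : ∃ C : ℝ, 2 ≤ C ∧ ∀ R : ℝ[X],
    (derivative R).natDegree ≤ d → ∀ A K : ℝ, 0 < A → 1 ≤ K → (constantTermSet R A K).Nonempty →
      ∃ N : ℝ, 1 ≤ N ∧ N ≤ 2 * K ∧
        volume (constantTermSet R A K) ≤ ENNReal.ofReal (C * A * N) ∧
        ∃ t ∈ Icc (0 : ℝ) 1, ∀ m,
          |(derivative^[m] (derivative R)).eval t| ≤ C * (A * K) * (C * K / N) ^ m := by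
  obtain ⟨C, hC1, hC⟩ := exists_forall_abs_eval_iterate_derivative_le d
  refine ⟨2 * C + d + 3, by linarith [Nat.cast_nonneg (α := ℝ) d], fun R hR A K hA hK hne => ?_⟩
  set n := ⌈K⌉₊
  have hKn : K ≤ n := Nat.le_ceil K
  have hn2K : (n : ℝ) ≤ 2 * K := by linarith [Nat.ceil_lt_add_one (zero_le_one.trans hK)]
  have hn0 : 0 < n := Nat.ceil_pos.2 (by linarith)
  have hn0' : (0 : ℝ) < n := mod_cast hn0
  set B := (d + 1) * (A * K) with hBdef
  have hB : 0 < B := by positivity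
  obtain ⟨S, hSn, hSB, hsub⟩ :=
    exists_finset_constantTermSet_subset (A := A) hn0 hR (by positivity) hKn
  have hS1 : (1 : ℝ) ≤ S.card := by
    obtain ⟨v, hv⟩ := hne
    obtain ⟨j, hj, -⟩ := mem_iUnion₂.1 (hsub hv)
    exact_mod_cast Finset.card_pos.2 ⟨j, hj⟩
  have hSn' : (S.card : ℝ) ≤ n := by
    exact_mod_cast (Finset.card_le_card hSn).trans_eq (Finset.card_range n)
  have hvol : (S.card : ℝ) / n ≤ volume.real {t ∈ Ioc (0 : ℝ) 1 | |(derivative R).eval t| ≤ B} :=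
    card_div_le_volume_real_of_gridCell_subset hSn hSB
  refine ⟨S.card, hS1, hSn'.trans hn2K, ?_, ?_⟩
  · refine (volume_constantTermSet_le_of_subset hB.le hSB hsub).trans
      (ENNReal.ofReal_le_ofReal ?_)
    have hBn : B / n ≤ (d + 1) * A := by
      rw [div_le_iff₀ hn0', hBdef, mul_assoc]
      gcongr
    calc S.card * (2 * A + B / n) ≤ S.card * (2 * A + (d + 1) * A) := by gcongr
      _ = (d + 3) * A * S.card := by ring
      _ ≤ (2 * C + d + 3) * A * S.card := by gcongr ?_ * A * _; linarith
  · obtain ⟨t, ht, hm⟩ := hC _ hR 0 1 B _ zero_le_one hB (by positivity) hvol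
    refine ⟨t, Ioc_subset_Icc_self ht, fun m => (hm m).trans ?_⟩
    have hBC : B ≤ (2 * C + d + 3) * (A * K) := by
      rw [hBdef]
      gcongr ?_ * _
      linarith
    have hCN : C / (S.card / n) ≤ (2 * C + d + 3) * K / S.card := by
      rw [div_div_eq_mul_div]
      refine div_le_div_of_nonneg_right ?_ (Nat.cast_nonneg _)
      calc C * n ≤ C * (2 * K) := by gcongr
        _ ≤ (2 * C + d + 3) * K := by nlinarith
    gcongr

end ConstantTerms

section SmallJetVolume

open Polynomial

/-- The volume of `smallJetSet k n` obeys the expected bound, uniformly in the separated points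
`s i` and the bounds `A i`, `K i`. -/
def SmallJetVolumeBound (k n : ℕ) (ι : Type*) [Fintype ι] : Prop :=
  ∃ C : ℝ, 0 < C ∧ ∀ (s A K : ι → ℝ) (η K₀ : ℝ), 0 < η → (Pairwise fun i j => η ≤ |s i - s j|) →
    2 ≤ K₀ → (∀ i, 0 < A i) → (∀ i, 1 ≤ K i ∧ K i ≤ K₀) →
    volume (smallJetSet k n s A K) ≤ ENNReal.ofReal (C * log K₀ * (η⁻¹ ^ (n + 2).choose 3 *
      geomMean A ^ (n + 2).choose 2 * geomMean K ^ ((n + 2).choose 3 + 2)))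

variable {ι : Type*} [Fintype ι] [Nonempty ι] {k n : ℕ}

lemma lt_choose_three (hn : 2 ≤ n) : n < (n + 2).choose 3 := by
  induction n, hn using Nat.le_induction with
  | base => decide
  | succ n hn ih =>
    have h1 : (n + 1 + 2).choose 3 = (n + 2).choose 2 + (n + 2).choose 3 := rfl
    have h2 : 0 < (n + 2).choose 2 := Nat.choose_pos (by omega)
    omega

lemma log_mul_le_mul_log {C K₀ : ℝ} (hC : 1 ≤ C) (hK₀ : 2 ≤ K₀) :
    log (C * K₀) ≤ (1 + log C / log 2) * log K₀ := by
  have hl2 : 0 < log 2 := log_pos one_lt_two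
  have hC0 : 0 ≤ log C := log_nonneg hC
  have hl : log C ≤ log C / log 2 * log K₀ := by
    rw [div_mul_eq_mul_div, le_div_iff₀ hl2]
    gcongr
  rw [log_mul (by linarith) (by linarith)]
  linarith

lemma exists_improved_jet_of_volume_smallJetSlice_ne_zero (hk : n + 1 ≤ k)
    (hn : n + 2 ≤ Fintype.card ι) : ∃ C : ℝ, 2 ≤ C ∧ ∀ {s A K : ι → ℝ} {η : ℝ}, 0 < η →
      (Pairwise fun i j => η ≤ |s i - s j|) → (∀ i, 0 < A i) → (∀ i, 1 ≤ K i) →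
      ∀ {ω : TopIdx n → ℝ}, volume (smallJetSlice k n s A K ω) ≠ 0 →
      ∃ u : ι → ℝ, (∀ i, 1 ≤ u i ∧ u i ≤ 2 * K i) ∧
        ω ∈ smallJetSet k n s (fun i => C * (A i * K i)) (fun i => C * (K i / u i)) ∧
        volume (smallJetSlice k n s A K ω) ≤ ENNReal.ofReal
          (η⁻¹ ^ (n + 2).choose 2 * (C * geomMean A) ^ (n + 2) * geomMean u ^ (n + 2)) := by
  obtain ⟨C, hC, hconst⟩ := exists_volume_constantTermSet_le k
  refine ⟨C, hC, fun {s A K η} hη hsep hA hK {ω} hω => ?_⟩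
  obtain ⟨q, hq⟩ := nonempty_of_measure_ne_zero hω
  have hdeg : ∀ i, (derivative (derivative^[k - (n + 1)] (topPoly k n ω (s i)))).natDegree ≤ k :=
    fun i => by
      rw [derivative_iterate_topPoly hk]
      exact natDegree_topDeriv_le _ _ _ _
  choose u hu1 hu2 hvol hjet using fun i => hconst _ (hdeg i) (A i) (K i) (hA i) (hK i) ⟨_, hq i⟩
  have hu0 : ∀ i, 0 < u i := fun i => zero_lt_one.trans_le (hu1 i)
  have hCA : ∀ i, 0 < C * A i := fun i => mul_pos (by linarith) (hA i)
  refine ⟨u, fun i => ⟨hu1 i, hu2 i⟩, fun i => ?_, ?_⟩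
  · simpa only [derivative_iterate_topPoly hk, mul_div_assoc] using hjet i
  · refine (volume_smallJetSlice_le hn hη hsep (fun i => mul_pos (hCA i) (hu0 i)) hvol).trans_eq ?_
    rw [geomMean_mul (fun i => (hCA i).le) (fun i => (hu0 i).le),
      geomMean_const_mul (by linarith) (fun i => (hA i).le), mul_pow, mul_assoc]

lemma volume_le_of_smallJetVolumeBound {C₁ C₂ : ℝ} (hC₂ : 2 ≤ C₂)
    {s A K : ι → ℝ} {η K₀ : ℝ} {a c : ℕ}
    (h : ∀ A K : ι → ℝ, ∀ K₀, 2 ≤ K₀ → (∀ i, 0 < A i) →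
      (∀ i, 1 ≤ K i ∧ K i ≤ K₀) → volume (smallJetSet k n s A K) ≤ ENNReal.ofReal
        (C₁ * log K₀ * (η⁻¹ ^ c * geomMean A ^ a * geomMean K ^ (c + 2))))
    (hK₀ : 2 ≤ K₀) (hA : ∀ i, 0 < A i) (hK : ∀ i, 1 ≤ K i ∧ K i ≤ K₀) {l : ι → ℝ}
    (hl : ∀ i, 1 ≤ l i ∧ l i ≤ 2 * K i) :
    volume (smallJetSet k n s (fun i => C₂ * (A i * K i)) (fun i => C₂ * (K i / l i))) ≤
      ENNReal.ofReal (C₁ * log (C₂ * K₀) * (η⁻¹ ^ c * (C₂ * (geomMean A * geomMean K)) ^ a *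
        (C₂ * geomMean K) ^ (c + 2)) * (geomMean l)⁻¹ ^ (c + 2)) := by
  have hK0 : ∀ i, 0 < K i := fun i => zero_lt_one.trans_le (hK i).1
  have hl0 : ∀ i, 0 < l i := fun i => zero_lt_one.trans_le (hl i).1
  have hC0 : 0 ≤ C₂ := zero_le_two.trans hC₂
  refine (h _ _ (C₂ * K₀) (by nlinarith) (fun i => ?_) fun i => ⟨?_, ?_⟩).trans_eq ?_
  · exact mul_pos (by linarith) (mul_pos (hA i) (hK0 i))
  · rw [← mul_div_assoc, le_div_iff₀ (hl0 i)]
    nlinarith [hK0 i, (hl i).2]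
  · exact mul_le_mul_of_nonneg_left ((div_le_self (hK0 i).le (hl i).1).trans (hK i).2) hC0
  · simp only [div_eq_mul_inv]
    rw [geomMean_const_mul hC0 fun i => (mul_pos (hA i) (hK0 i)).le,
      geomMean_mul (fun i => (hA i).le) (fun i => (hK0 i).le),
      geomMean_const_mul hC0 fun i => (mul_pos (hK0 i) (inv_pos.2 (hl0 i))).le,
      geomMean_mul (fun i => (hK0 i).le) (fun i => (inv_pos.2 (hl0 i)).le),
      geomMean_inv fun i => (hl0 i).le]
    congr 1
    ring

omit [Fintype ι] [Nonempty ι] in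
lemma superlevel_subset_smallJetSet {C : ℝ} (hC : 0 ≤ C) {s A K : ι → ℝ} (hA : ∀ i, 0 ≤ A i)
    (hK : ∀ i, 0 ≤ K i) {W : Set (TopIdx n → ℝ)} {u : (TopIdx n → ℝ) → ι → ℝ}
    (hu : ∀ ω ∈ W, ω ∈ smallJetSet k n s (fun i => C * (A i * K i)) (fun i => C * (K i / u ω i)))
    {l : ι → ℝ} (hl : ∀ i, 0 < l i) :
    {ω | ω ∈ W ∧ ∀ i, l i ≤ u ω i} ⊆
      smallJetSet k n s (fun i => C * (A i * K i)) (fun i => C * (K i / l i)) := by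
  rintro ω ⟨hω, hlu⟩
  refine smallJetSet_mono (fun i => ?_) (fun i => ?_) (fun i => le_rfl) (fun i => ?_) (hu ω hω)
  · exact mul_nonneg hC (mul_nonneg (hA i) (hK i))
  · exact mul_nonneg hC (div_nonneg (hK i) ((hl i).le.trans (hlu i)))
  · have := hK i; have := hl i; have := hlu i; gcongr

lemma add_three_choose_two (n : ℕ) : (n + 3).choose 2 = (n + 2) + (n + 2).choose 2 := by
  rw [Nat.choose_succ_succ' (n + 2) 1, Nat.choose_one_right]

lemma SmallJetVolumeBound.succ (hn : 2 ≤ n) (hk : n + 1 ≤ k) (hι : n + 2 ≤ Fintype.card ι)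
    (h : SmallJetVolumeBound k n ι) : SmallJetVolumeBound k (n + 1) ι := by
  obtain ⟨C₁, hC₁, h⟩ := h
  obtain ⟨C₂, hC₂, hjet⟩ := exists_improved_jet_of_volume_smallJetSlice_ne_zero hk hι
  obtain ⟨C₃, hC₃, hlayer⟩ := exists_lintegral_le_of_superlevel ι (n + 2)
  have hlC₂ : 0 ≤ log C₂ / log 2 := by have := log_nonneg (one_le_two.trans hC₂); positivity
  have hchoose : n < (n + 2).choose 3 := lt_choose_three hn
  have hch3 : (n + 1 + 2).choose 3 = (n + 2).choose 2 + (n + 2).choose 3 := rfl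
  have hch2 : (n + 1 + 2).choose 2 = _ := add_three_choose_two n
  set a := (n + 2).choose 2
  set c := (n + 2).choose 3
  refine ⟨C₃ * C₂ ^ (n + 2) * (C₁ * (1 + log C₂ / log 2) * C₂ ^ a * C₂ ^ (c + 2)),
    by positivity, fun s A K η K₀ hη hsep hK₀ hA hK => ?_⟩
  have hK0 : ∀ i, 0 < K i := fun i => zero_lt_one.trans_le (hK i).1
  have hgA : 0 < geomMean A := geomMean_pos hA
  have hgK : 0 < geomMean K := geomMean_pos hK0
  choose! u hu hmem hvol using fun ω (hω : volume (smallJetSlice k n s A K ω) ≠ 0) =>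
    hjet hη hsep hA (fun i => (hK i).1) hω
  have hlog : 0 ≤ log (C₂ * K₀) := log_nonneg (by nlinarith)
  have hsuper : ∀ l : ι → ℝ, (∀ i, 1 ≤ l i) →
      volume {ω | volume (smallJetSlice k n s A K ω) ≠ 0 ∧ ∀ i, l i ≤ u ω i} ≤
      ENNReal.ofReal (C₁ * log (C₂ * K₀) * (η⁻¹ ^ c * (C₂ * (geomMean A * geomMean K)) ^ a *
        (C₂ * geomMean K) ^ (c + 2)) * (geomMean l)⁻¹ ^ (c + 2)) := by
    intro l hl
    rcases eq_empty_or_nonempty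
      {ω | volume (smallJetSlice k n s A K ω) ≠ 0 ∧ ∀ i, l i ≤ u ω i} with hE | ⟨ω, hω, hlu⟩
    · simp [hE]
    exact (measure_mono (superlevel_subset_smallJetSet (by linarith) (fun i => (hA i).le)
      (fun i => (hK0 i).le) hmem fun i => zero_lt_one.trans_le (hl i))).trans
      (volume_le_of_smallJetVolumeBound hC₂ (fun A' K' K₀' => h s A' K' η K₀' hη hsep) hK₀ hA hK
        fun i => ⟨hl i, (hlu i).trans (hu ω hω i).2⟩)
  refine (volume_smallJetSet_succ_le _ fun ω => le_rfl).trans ((hlayer volume (by omega) u _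
    (by positivity) (by positivity) hsuper fun ω hω => ⟨fun i => (hu ω hω i).1, hvol ω hω⟩).trans
    (ENNReal.ofReal_le_ofReal ?_))
  rw [hch3, hch2]
  grw [log_mul_le_mul_log (by linarith) hK₀]
  exact le_of_eq (by ring)

end SmallJetVolume

section SmallJetVolumeBase

open Polynomial

/-- The coefficient vectors whose single top coefficient is at most `r / k!` in absolute value. -/
def topCoeffLe (k : ℕ) (r : ℝ) : Set (TopIdx 0 → ℝ) :=
  {ω | |(k.factorial : ℝ) * ω (0 : Fin 1)| ≤ r}

lemma measurableSet_topCoeffLe (k : ℕ) (r : ℝ) : MeasurableSet (topCoeffLe k r) :=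
  ((measurable_pi_apply (0 : Fin 1)).const_mul _).norm measurableSet_Iic

lemma volume_abs_mul_le {w : ℝ} (hw : 1 ≤ w) (r : ℝ) :
    volume {ω : Fin 1 → ℝ | |w * ω 0| ≤ r} ≤ ENNReal.ofReal (2 * r) := by
  have hsub : {ω : Fin 1 → ℝ | |w * ω 0| ≤ r} ⊆ Set.pi univ fun _ => Icc (-r) r := by
    intro ω hω i _
    rw [Subsingleton.elim i 0, mem_Icc, ← abs_le]
    refine le_trans ?_ (show |w * ω 0| ≤ r from hω)
    rw [abs_mul]
    exact le_mul_of_one_le_left (abs_nonneg _) (hw.trans (le_abs_self w))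
  refine (measure_mono hsub).trans (le_of_eq ?_)
  rw [volume_pi_pi, Fin.prod_univ_one, Real.volume_Icc]
  ring_nf

lemma volume_topCoeffLe_le (k : ℕ) (r : ℝ) :
    volume (topCoeffLe k r) ≤ ENNReal.ofReal (2 * r) :=
  volume_abs_mul_le (mod_cast Nat.one_le_iff_ne_zero.2 k.factorial_ne_zero) r

variable {k : ℕ} {ι : Type*} {s A K : ι → ℝ}

lemma derivative_topDeriv_one (hk : 1 ≤ k) (x : TopIdx 1 → ℝ) (s : ℝ) :
    derivative (topDeriv k 1 x s) = C (k.factorial * (TopIdx.split 0 x).1 (0 : Fin 1)) := by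
  rw [topDeriv_succ, derivative_add, derivative_C, add_zero, derivative_iterate_topPoly hk,
    topDeriv_zero]

lemma mem_topCoeffLe_of_mem_smallJetSet (hk : 1 ≤ k) {x : TopIdx 1 → ℝ}
    (hx : x ∈ smallJetSet k 1 s A K) (i : ι) :
    (TopIdx.split 0 x).1 ∈ topCoeffLe k (A i * K i) := by
  obtain ⟨t, -, h⟩ := hx i
  simpa only [Function.iterate_one, derivative_topDeriv_one hk, eval_C, pow_one,
    topCoeffLe, mem_ofPred_eq] using h 1

variable [Fintype ι] [Nonempty ι]

lemma exists_forall_le_and_le_geomMean {B : ι → ℝ} (hB : ∀ i, 0 < B i) :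
    ∃ i, (∀ j, B i ≤ B j) ∧ B i ≤ geomMean B := by
  obtain ⟨i, hi⟩ := Finite.exists_min B
  refine ⟨i, hi, ?_⟩
  rw [← geomMean_const (ι := ι) (hB i).le]
  exact geomMean_mono (fun _ => (hB i).le) hi

lemma volume_smallJetSet_one_inter_le (hk : 1 ≤ k) (hι : 2 ≤ Fintype.card ι) {η r : ℝ}
    (hη : 0 < η) (hsep : Pairwise fun i j => η ≤ |s i - s j|) (hA : ∀ i, 0 < A i) (hr : 0 ≤ r) :
    volume (smallJetSet k 1 s A K ∩ {x | (TopIdx.split 0 x).1 ∈ topCoeffLe k r}) ≤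
      ENNReal.ofReal (η⁻¹ * geomMean (fun i => 2 * A i + r) ^ 2 * (2 * r)) := by
  have hpos : ∀ i, 0 < 2 * A i + r := fun i => by have := hA i; positivity
  refine (volume_smallJetSet_succ_inter_le (measurableSet_topCoeffLe k r)
    (fun _ => ENNReal.ofReal (η⁻¹ * geomMean (fun i => 2 * A i + r) ^ 2)) fun ω hω => ?_).trans ?_
  · refine (volume_smallJetSlice_le (v := fun i => 2 * A i + r) hι hη hsep hpos
      fun i => ?_).trans_eq (by simp)
    have hR : ∀ t ∈ Icc (0 : ℝ) 1,
        |(derivative (derivative^[k - (0 + 1)] (topPoly k 0 ω (s i)))).eval t| ≤ r := fun t _ => by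
      rw [derivative_iterate_topPoly hk, topDeriv_zero, eval_C]
      exact hω
    refine (measure_mono fun v hv => ?_).trans ((volume_exists_abs_eval_add_le_le (A := A i)
      (D := 1) (convex_Icc (0 : ℝ) 1) hr hR fun t ht t' ht' => ?_).trans_eq (by rw [mul_one]))
    · obtain ⟨t, ht, -, h⟩ := mem_constantTermSet_iff.1 hv
      exact ⟨t, ht, h⟩
    · exact abs_sub_le_iff.2 ⟨by linarith [ht.2, ht'.1], by linarith [ht.1, ht'.2]⟩
  · have := geomMean_nonneg fun i => (hpos i).le
    rw [setLIntegral_const, ENNReal.ofReal_mul (q := 2 * r) (by positivity)]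
    gcongr
    exact volume_topCoeffLe_le k r

lemma smallJetVolumeBound_one (hk : 1 ≤ k) (hι : 2 ≤ Fintype.card ι) :
    SmallJetVolumeBound k 1 ι := by
  have hl2 : 0 < log 2 := log_pos one_lt_two
  refine ⟨18 / log 2, by positivity, fun s A K η K₀ hη hsep hK₀ hA hK => ?_⟩
  have hK0 : ∀ i, 0 < K i := fun i => zero_lt_one.trans_le (hK i).1
  have hB : ∀ i, 0 < A i * K i := fun i => mul_pos (hA i) (hK0 i)
  obtain ⟨i, hi, hig⟩ := exists_forall_le_and_le_geomMean hB
  refine (measure_mono fun x hx => mem_inter hx (mem_topCoeffLe_of_mem_smallJetSet hk hx i)).trans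
    ((volume_smallJetSet_one_inter_le hk hι hη hsep hA (hB i).le).trans
      (ENNReal.ofReal_le_ofReal ?_))
  have hKi := hK0 i
  have hAi := hA i
  have hAB : ∀ j, 0 < 2 * A j + A i * K i := fun j => by have := hA j; positivity
  have hsum : geomMean (fun j => 2 * A j + A i * K i) ≤ 3 * geomMean (fun j => A j * K j) := by
    rw [← geomMean_const_mul (by norm_num) fun j => (hB j).le]
    exact geomMean_mono (fun j => (hAB j).le)
      fun j => by linarith [le_mul_of_one_le_right (hA j).le (hK j).1, hi j]
  have h0 := geomMean_nonneg fun j => (hAB j).le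
  have hgA : 0 < geomMean A := geomMean_pos hA
  have hgK : 0 < geomMean K := geomMean_pos hK0
  calc _ ≤ η⁻¹ * (3 * geomMean (fun j => A j * K j)) ^ 2 *
        (2 * geomMean (fun j => A j * K j)) := by gcongr
    _ = 18 / log 2 * log 2 * (η⁻¹ * geomMean A ^ 3 * geomMean K ^ 3) := by
      rw [geomMean_mul (fun i => (hA i).le) (fun i => (hK0 i).le)]
      field_simp
      ring
    _ ≤ 18 / log 2 * log K₀ * (η⁻¹ * geomMean A ^ 3 * geomMean K ^ 3) := by gcongr
    _ = _ := by simp [Nat.choose]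

omit [Fintype ι] [Nonempty ι]

lemma eval_sub_eval_eq_of_derivative_eq_C {f : ℝ[X]} {c : ℝ} (hf : derivative f = C c)
    (t t' : ℝ) : f.eval t' - f.eval t = c * (t' - t) := by
  have hd : derivative (f - C c * X) = 0 := by simp [hf]
  rw [sub_eq_iff_eq_add.1 (eq_C_of_natDegree_eq_zero (derivative_eq_zero.1 hd))]
  simp only [coeff_sub, eval_add, eval_C, eval_mul, eval_X]
  ring

lemma abs_eval_le_of_mem_segment {f : ℝ[X]} {c B t t' : ℝ} (hf : derivative f = C c)
    (ht : |f.eval t| ≤ B) (ht' : |f.eval t'| ≤ B) :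
    ∀ x ∈ segment ℝ t t', |f.eval x| ≤ B := by
  rintro x ⟨α, β, hα, hβ, hαβ, rfl⟩
  have hcombo : f.eval (α • t + β • t') = α • f.eval t + β • f.eval t' := by
    obtain rfl : α = 1 - β := by linarith
    simp only [smul_eq_mul]
    linear_combination eval_sub_eval_eq_of_derivative_eq_C hf t ((1 - β) * t + β * t') -
      β * eval_sub_eval_eq_of_derivative_eq_C hf t t'
  rw [hcombo, abs_le]
  exact (convex_Icc (-B) B) (abs_le.1 ht) (abs_le.1 ht') hα hβ hαβ

lemma exists_abs_sub_le_of_mem_constantTermSet {R : ℝ[X]} {c A K v w : ℝ}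
    (hR : derivative (derivative R) = C c) (hv : v ∈ constantTermSet R A K)
    (hw : w ∈ constantTermSet R A K) :
    |c| ≤ A * K * K ∧ ∃ τ, 0 ≤ τ ∧ τ ≤ 1 ∧ |c| * τ ≤ 2 * (A * K) ∧
      |v - w| ≤ 2 * A + A * K * τ := by
  obtain ⟨t, ht, hjt, hvt⟩ := mem_constantTermSet_iff.1 hv
  obtain ⟨t', ht', hjt', hwt'⟩ := mem_constantTermSet_iff.1 hw
  have hft : |(derivative R).eval t| ≤ A * K := by simpa using hjt 0
  have hft' : |(derivative R).eval t'| ≤ A * K := by simpa using hjt' 0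
  refine ⟨by simpa [hR] using hjt 1, |t - t'|, abs_nonneg _, ?_, ?_, ?_⟩
  · exact abs_sub_le_iff.2 ⟨by linarith [ht.2, ht'.1], by linarith [ht.1, ht'.2]⟩
  · rw [← abs_mul, ← eval_sub_eval_eq_of_derivative_eq_C hR]
    exact (abs_sub _ _).trans (by linarith)
  · exact abs_sub_le_of_abs_add_le hvt hwt' <| abs_eval_sub_eval_le_of_abs_eval_derivative_le
      (convex_segment t t') (abs_eval_le_of_mem_segment hR hft hft')
      (left_mem_segment ℝ t t') (right_mem_segment ℝ t t')

lemma volume_constantTermSet_le_min {R : ℝ[X]} {c A K r : ℝ}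
    (hR : derivative (derivative R) = C c) (hA : 0 < A) (hK : 1 ≤ K) (hr : 0 < r)
    (h : r ≤ A * K ∨ r / 2 < |c|) :
    volume (constantTermSet R A K) ≤
      ENNReal.ofReal (8 * min (A * K) ((A * K) ^ 2 / r)) := by
  set B := A * K with hB
  have hAB : A ≤ B := le_mul_of_one_le_right hA.le hK
  have hB0 : 0 ≤ B := hA.le.trans hAB
  refine volume_le_of_forall_abs_sub_le fun v hv w hw => ?_
  obtain ⟨hc, τ, hτ0, hτ1, hcτ, hvw⟩ :=
    exists_abs_sub_le_of_mem_constantTermSet hR hv hw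
  rw [← hB] at hc hcτ hvw
  have h3B : |v - w| ≤ 3 * B := by nlinarith
  rw [mul_min_of_nonneg _ _ (by norm_num)]
  refine le_min (by linarith) ?_
  rw [mul_div_assoc', le_div_iff₀ hr]
  rcases h with h | h
  · nlinarith
  · have hcA : |c| * A ≤ B ^ 2 := by
      calc |c| * A ≤ B * K * A := by gcongr
        _ = B ^ 2 := by rw [hB]; ring
    calc |v - w| * r ≤ (2 * A + B * τ) * (2 * |c|) := by gcongr; linarith
      _ = 4 * (|c| * A) + 2 * B * (|c| * τ) := by ring
      _ ≤ 4 * B ^ 2 + 2 * B * (2 * B) := by gcongr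
      _ = 8 * B ^ 2 := by ring

lemma exists_dyadic_le {b c K₀ : ℝ} (hb : 0 < b) (hK₀ : 2 ≤ K₀) (hc : c ≤ b * K₀) :
    ∃ j ∈ Finset.range (⌈log K₀ / log 2⌉₊ + 1), c ≤ b * 2 ^ j ∧ (j = 0 ∨ b * 2 ^ j / 2 < c) := by
  have hl2 : 0 < log 2 := log_pos one_lt_two
  have hM : c ≤ b * 2 ^ ⌈log K₀ / log 2⌉₊ := by
    refine hc.trans ?_
    gcongr
    rw [← Real.log_le_log_iff (by linarith) (by positivity), Real.log_pow, ← div_le_iff₀ hl2]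
    exact Nat.le_ceil _
  classical
  have hex : ∃ j, c ≤ b * 2 ^ j := ⟨_, hM⟩
  refine ⟨Nat.find hex, Finset.mem_range_succ_iff.2 (Nat.find_min' hex hM), Nat.find_spec hex, ?_⟩
  rcases h : Nat.find hex with - | m
  · exact Or.inl rfl
  · have hlt : b * 2 ^ m < c := not_le.1 (Nat.find_min hex (h ▸ m.lt_succ_self))
    exact Or.inr (by rwa [pow_succ, ← mul_assoc, mul_div_cancel_right₀ _ two_ne_zero])

lemma ceil_log_div_log_two_add_one_le {K₀ : ℝ} (hK₀ : 2 ≤ K₀) :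
    ((⌈log K₀ / log 2⌉₊ + 1 : ℕ) : ℝ) ≤ 3 / log 2 * log K₀ := by
  have hl2 : 0 < log 2 := log_pos one_lt_two
  have h1 : 1 ≤ log K₀ / log 2 := by
    rw [le_div_iff₀ hl2, one_mul]
    exact log_le_log two_pos hK₀
  push_cast
  calc (⌈log K₀ / log 2⌉₊ : ℝ) + 1 ≤ 3 * (log K₀ / log 2) := by
        linarith [Nat.ceil_lt_add_one (zero_le_one.trans h1)]
    _ = _ := by ring

variable [Fintype ι] [Nonempty ι]

lemma volume_smallJetSlice_one_le (hk : 2 ≤ k) (hι : 3 ≤ Fintype.card ι) {η r : ℝ} (hη : 0 < η)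
    (hsep : Pairwise fun i j => η ≤ |s i - s j|) (hA : ∀ i, 0 < A i) (hK : ∀ i, 1 ≤ K i)
    (hr : 0 < r) {ω : TopIdx 1 → ℝ} (h : (∀ i, r ≤ A i * K i) ∨
      r / 2 < |(k.factorial : ℝ) * (TopIdx.split 0 ω).1 (0 : Fin 1)|) :
    volume (smallJetSlice k 1 s A K ω) ≤ ENNReal.ofReal
      (η⁻¹ ^ 3 * geomMean (fun i => 8 * min (A i * K i) ((A i * K i) ^ 2 / r)) ^ 3) := by
  refine volume_smallJetSlice_le hι hη hsep (fun i => ?_) fun i =>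
    volume_constantTermSet_le_min (by rw [derivative_iterate_topPoly hk,
      derivative_topDeriv_one (one_le_two.trans hk)]) (hA i) (hK i) hr (h.imp_left fun h => h i)
  have := mul_pos (hA i) (zero_lt_one.trans_le (hK i))
  positivity

lemma mul_geomMean_min_le {B : ι → ℝ} {r : ℝ} (hB : ∀ i, 0 < B i) (hr : 0 < r) :
    r * geomMean (fun i => min (B i) (B i ^ 2 / r)) ≤ geomMean B ^ 2 := by
  have hmin : ∀ i, 0 ≤ min (B i) (B i ^ 2 / r) := fun i => by have := hB i; positivity
  rw [← geomMean_const_mul hr.le hmin, ← geomMean_pow fun i => (hB i).le]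
  refine geomMean_mono (fun i => mul_nonneg hr.le (hmin i)) fun i => ?_
  grw [min_le_right, mul_div_cancel₀ _ hr.ne']

lemma geomMean_add_mul_geomMean_min_le {B : ι → ℝ} {r : ℝ} (hB : ∀ i, 0 < B i) (hr : 0 < r) :
    geomMean (fun i => 2 * B i + r) * geomMean (fun i => min (B i) (B i ^ 2 / r)) ≤
      3 * geomMean B ^ 2 := by
  have hsum : ∀ i, 0 ≤ 2 * B i + r := fun i => by have := hB i; positivity
  have hmin : ∀ i, 0 ≤ min (B i) (B i ^ 2 / r) := fun i => by have := hB i; positivity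
  rw [← geomMean_mul hsum hmin, ← geomMean_pow fun i => (hB i).le,
    ← geomMean_const_mul zero_le_three fun i => by positivity]
  refine geomMean_mono (fun i => mul_nonneg (hsum i) (hmin i)) fun i => ?_
  have h1 : B i * min (B i) (B i ^ 2 / r) ≤ B i * B i :=
    mul_le_mul_of_nonneg_left (min_le_left _ _) (hB i).le
  have h2 : r * min (B i) (B i ^ 2 / r) ≤ B i ^ 2 := by
    grw [min_le_right, mul_div_cancel₀ _ hr.ne']
  linarith

lemma ofReal_mul_volume_smallJetSet_one_inter_le (hk : 1 ≤ k) (hι : 2 ≤ Fintype.card ι) {η r : ℝ}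
    (hη : 0 < η) (hsep : Pairwise fun i j => η ≤ |s i - s j|) {B : ι → ℝ} (hB : ∀ i, 0 < B i)
    (hr : 0 < r) :
    ENNReal.ofReal (η⁻¹ ^ 3 * geomMean (fun i => 8 * min (B i) (B i ^ 2 / r)) ^ 3) *
      volume (smallJetSet k 1 s B K ∩ {x | (TopIdx.split 0 x).1 ∈ topCoeffLe k r}) ≤
      ENNReal.ofReal (9216 * (η⁻¹ ^ 4 * geomMean B ^ 6)) := by
  have hmin : ∀ i, 0 ≤ min (B i) (B i ^ 2 / r) := fun i => by have := hB i; positivity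
  have hG := mul_geomMean_min_le hB hr
  have hHG := geomMean_add_mul_geomMean_min_le hB hr
  rw [geomMean_const_mul (by norm_num) hmin]
  have hG0 := geomMean_nonneg hmin
  have hH0 : 0 ≤ geomMean fun i => 2 * B i + r :=
    geomMean_nonneg fun i => by have := hB i; positivity
  set G := geomMean fun i => min (B i) (B i ^ 2 / r)
  set H := geomMean fun i => 2 * B i + r
  grw [volume_smallJetSet_one_inter_le hk hι hη hsep hB hr.le]
  rw [← ENNReal.ofReal_mul (by positivity)]
  refine ENNReal.ofReal_le_ofReal ?_
  calc η⁻¹ ^ 3 * (8 * G) ^ 3 * (η⁻¹ * H ^ 2 * (2 * r))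
      = 1024 * η⁻¹ ^ 4 * ((H * G) ^ 2 * (r * G)) := by ring
    _ ≤ 1024 * η⁻¹ ^ 4 * ((3 * geomMean B ^ 2) ^ 2 * geomMean B ^ 2) := by gcongr
    _ = 9216 * (η⁻¹ ^ 4 * geomMean B ^ 6) := by ring

-- The logarithm comes from summing over the dyadic sizes of the top coefficient, each of which
-- contributes the same amount.
lemma smallJetVolumeBound_two (hk : 2 ≤ k) (hι : 3 ≤ Fintype.card ι) :
    SmallJetVolumeBound k 2 ι := by
  have hk1 : 1 ≤ k := one_le_two.trans hk
  refine ⟨9216 * (3 / log 2), by have := log_pos one_lt_two; positivity,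
    fun s A K η K₀ hη hsep hK₀ hA hK => ?_⟩
  have hK0 : ∀ i, 0 < K i := fun i => zero_lt_one.trans_le (hK i).1
  have hB : ∀ i, 0 < A i * K i := fun i => mul_pos (hA i) (hK0 i)
  have hgB : geomMean (fun i => A i * K i) = geomMean A * geomMean K :=
    geomMean_mul (fun i => (hA i).le) fun i => (hK0 i).le
  obtain ⟨i, hi, -⟩ := exists_forall_le_and_le_geomMean hB
  set r : ℕ → ℝ := fun j => A i * K i * 2 ^ j
  have hr : ∀ j, 0 < r j := fun j => mul_pos (hB i) (by positivity)
  set E : ℕ → Set (TopIdx 1 → ℝ) := fun j => smallJetSet k 1 s (fun i => A i * K i) K ∩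
    {x | (TopIdx.split 0 x).1 ∈ topCoeffLe k (r j)}
  have hE : ∀ j, MeasurableSet (E j) := fun j =>
    (isClosed_smallJetSet _ _ _ _ _).measurableSet.inter
      (measurable_fst.comp (TopIdx.split 0).measurable (measurableSet_topCoeffLe k (r j)))
  set P : ℕ → ℝ≥0∞ := fun j => ENNReal.ofReal
    (η⁻¹ ^ 3 * geomMean (fun i => 8 * min (A i * K i) ((A i * K i) ^ 2 / r j)) ^ 3)
  refine (volume_smallJetSet_succ_le (fun ω => ∑ j ∈ Finset.range (⌈log K₀ / log 2⌉₊ + 1),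
    (E j).indicator (fun _ => P j) ω) fun ω => ?_).trans ?_
  · rcases eq_empty_or_nonempty (smallJetSlice k 1 s A K ω) with hω | hω
    · simp [hω]
    have hjet := mem_smallJetSet_of_nonempty_smallJetSlice hk hω
    obtain ⟨j, hj, hcj, hj'⟩ := exists_dyadic_le (hB i) hK₀
      ((mem_topCoeffLe_of_mem_smallJetSet hk1 hjet i).trans
        (mul_le_mul_of_nonneg_left (hK i).2 (hB i).le))
    refine le_trans ?_ (Finset.single_le_sum (fun _ _ => zero_le) hj)
    rw [indicator_of_mem (show ω ∈ E j from ⟨hjet, hcj⟩)]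
    refine volume_smallJetSlice_one_le hk hι hη hsep hA (fun i => (hK i).1) (hr j)
      (hj'.imp_left fun h0 => ?_)
    simpa [r, h0] using hi
  · rw [lintegral_finsetSum _ fun j _ => measurable_const.indicator (hE j)]
    refine (Finset.sum_le_card_nsmul _ _ _ fun j _ => (lintegral_indicator_const (hE j) _).trans_le
      (ofReal_mul_volume_smallJetSet_one_inter_le hk1 (by omega) hη hsep hB (hr j))).trans ?_
    have hgK := geomMean_nonneg fun i => (hK0 i).le
    have hgA := geomMean_nonneg fun i => (hA i).le
    rw [Finset.card_range, nsmul_eq_mul, ← ENNReal.ofReal_natCast, ← ENNReal.ofReal_mul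
      (Nat.cast_nonneg _), hgB]
    grw [ceil_log_div_log_two_add_one_le hK₀]
    exact (congrArg ENNReal.ofReal (by simp [Nat.choose]; ring)).le

lemma smallJetVolumeBound {n : ℕ} (hn : 1 ≤ n) (hk : n ≤ k) (hι : n + 1 ≤ Fintype.card ι) :
    SmallJetVolumeBound k n ι := by
  rcases hn.eq_or_lt with rfl | h1
  · exact smallJetVolumeBound_one hk hι
  induction n, h1 using Nat.le_induction with
  | base => exact smallJetVolumeBound_two hk hι
  | succ n h2 ih => exact (ih (by omega) (by omega) (by omega)).succ h2 hk hι

end SmallJetVolumeBase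

section InnerIntegral

open Polynomial FourierTransform

/-- The integral over `ξ₂` of the part of the phase of degree `n + 1` that depends on `ξ₂`, as a
function of the coefficients `x` and of `ξ₁ = s`. -/
def innerIntegral (n : ℕ) (x : TopIdx n → ℝ) (s : ℝ) : ℂ :=
  ∫ t in (0 : ℝ)..1, (𝐞 ((topPoly (n + 1) n x s).eval t) : ℂ)

lemma continuous_innerIntegral (n : ℕ) :
    Continuous fun z : (TopIdx n → ℝ) × ℝ => innerIntegral n z.1 z.2 := by
  refine intervalIntegral.continuous_parametric_intervalIntegral_of_continuous' ?_ 0 1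
  exact continuous_coe_fourierChar.comp (continuous_eval_iterate_derivative_topPoly (n + 1) n 0)

lemma norm_innerIntegral_le_one (n : ℕ) (x : TopIdx n → ℝ) (s : ℝ) : ‖innerIntegral n x s‖ ≤ 1 := by
  refine (intervalIntegral.norm_integral_le_of_norm_le_const (C := 1)
    fun t _ => (Circle.norm_coe _).le).trans ?_
  simp

lemma exists_superlevel_innerIntegral_subset_smallJetSet (n : ℕ) : ∃ C : ℝ, 1 ≤ C ∧
    ∀ {ι : Type*} (s : ι → ℝ) {δ : ι → ℝ}, (∀ i, 0 < δ i) →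
      {x | ∀ i, δ i ≤ ‖innerIntegral n x (s i)‖} ⊆
        smallJetSet (n + 1) n s (fun i => C * (δ i)⁻¹) (fun i => C * (δ i)⁻¹) := by
  obtain ⟨C, hC, hder⟩ := exists_forall_abs_eval_derivative_le_of_le_norm_integral (n + 1)
  refine ⟨C, hC, fun s δ hδ x hx i => ?_⟩
  obtain ⟨t, ht, htm⟩ := hder _ (natDegree_topPoly_le _ _ x (s i)) 0 1 _ zero_le_one (hδ i) (hx i)
  refine ⟨t, Ioc_subset_Icc_self ht, fun m => ?_⟩
  simpa only [topDeriv, Nat.add_sub_cancel_left, ← pow_succ', ← div_eq_mul_inv,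
    Function.iterate_succ_apply, Function.iterate_zero_apply] using htm m

lemma exists_volume_superlevel_innerIntegral_le {n : ℕ} (hn : 1 ≤ n) (ι : Type*) [Fintype ι]
    [Nonempty ι] (hι : n + 1 ≤ Fintype.card ι) :
    ∃ C D : ℝ, 0 < C ∧ 2 ≤ D ∧ ∀ (s δ : ι → ℝ) (η τ : ℝ), 0 < η →
      (Pairwise fun i j => η ≤ |s i - s j|) → 0 < τ → (∀ i, τ ≤ δ i) →
      volume {x | ∀ i, δ i ≤ ‖innerIntegral n x (s i)‖} ≤
        ENNReal.ofReal (C * log (D / τ) * η⁻¹ ^ (n + 2).choose 3 *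
          (geomMean δ)⁻¹ ^ ((n + 3).choose 3 + 2)) := by
  obtain ⟨C₁, hC₁, hvol⟩ := smallJetVolumeBound (k := n + 1) hn (by omega) hι
  obtain ⟨C₂, hC₂, hsub⟩ := exists_superlevel_innerIntegral_subset_smallJetSet n
  have hch : (n + 3).choose 3 = (n + 2).choose 2 + (n + 2).choose 3 := rfl
  set c := (n + 2).choose 2 + (n + 2).choose 3 + 2
  refine ⟨C₁ * (2 * C₂) ^ c, 2 * C₂, by positivity, by linarith,
    fun s δ η τ hη hsep hτ hδ => ?_⟩
  have hδ0 : ∀ i, 0 < δ i := fun i => hτ.trans_le (hδ i)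
  have hδinv : ∀ i, 0 < (δ i)⁻¹ := fun i => inv_pos.2 (hδ0 i)
  rcases eq_empty_or_nonempty {x | ∀ i, δ i ≤ ‖innerIntegral n x (s i)‖} with hE | ⟨x, hx⟩
  · simp [hE]
  have h1 : ∀ i, 1 ≤ (δ i)⁻¹ := fun i =>
    (one_le_inv₀ (hδ0 i)).2 ((hx i).trans (norm_innerIntegral_le_one _ _ _))
  have hinv : ∀ i, (δ i)⁻¹ ≤ τ⁻¹ := fun i => inv_anti₀ hτ (hδ i)
  have hmono := smallJetSet_mono (k := n + 1) (n := n) (s := s)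
    (fun i => by have := hδinv i; positivity) (fun i => by have := hδinv i; positivity)
    (fun i => show C₂ * (δ i)⁻¹ ≤ 2 * C₂ * (δ i)⁻¹ by nlinarith [hδinv i])
    (fun i => show C₂ * (δ i)⁻¹ ≤ 2 * C₂ * (δ i)⁻¹ by nlinarith [hδinv i])
  refine (measure_mono ((hsub s hδ0).trans hmono)).trans ((hvol s _ _ η (2 * C₂ / τ) hη hsep ?_
    (fun i => by have := hδinv i; positivity) fun i => ⟨?_, ?_⟩).trans
    (ENNReal.ofReal_le_ofReal (le_of_eq ?_)))
  · obtain ⟨i⟩ := ‹Nonempty ι›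
    rw [div_eq_mul_inv]
    nlinarith [h1 i, hinv i]
  · nlinarith [h1 i]
  · rw [div_eq_mul_inv]
    have := hinv i
    gcongr
  · rw [geomMean_const_mul (by linarith) fun i => (hδinv i).le, geomMean_inv fun i => (hδ0 i).le,
      hch, mul_pow, mul_pow]
    ring

/-- Truncation from below, which discards the values of norm less than `τ`. -/
def truncBelow (τ : ℝ) (z : ℂ) : ℂ := {z : ℂ | τ ≤ ‖z‖}.indicator id z

lemma measurable_truncBelow (τ : ℝ) : Measurable (truncBelow τ) :=
  measurable_id.indicator (measurableSet_le measurable_const measurable_norm)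

lemma norm_truncBelow_le (τ : ℝ) (z : ℂ) : ‖truncBelow τ z‖ ≤ ‖z‖ := norm_indicator_le_norm_self _ _

lemma norm_sub_truncBelow_le {τ : ℝ} (hτ : 0 ≤ τ) (z : ℂ) : ‖z - truncBelow τ z‖ ≤ τ := by
  unfold truncBelow
  by_cases h : τ ≤ ‖z‖
  · rw [indicator_of_mem (by exact h)]; simpa
  · rw [indicator_of_notMem (by exact h), sub_zero]; exact (not_le.1 h).le

lemma le_norm_of_truncBelow_ne_zero {τ : ℝ} {z : ℂ} (h : truncBelow τ z ≠ 0) : τ ≤ ‖z‖ :=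
  mem_of_indicator_ne_zero (s := {z : ℂ | τ ≤ ‖z‖}) h

lemma two_mul_lt_choose_three {n : ℕ} (hn : 1 ≤ n) : 2 * (n + 1) < (n + 3).choose 3 + 2 := by
  induction n, hn using Nat.le_induction with
  | base => decide
  | succ n hn ih =>
    have h1 : (n + 1 + 3).choose 3 = (n + 3).choose 2 + (n + 3).choose 3 := rfl
    have h2 : (n + 3).choose 2 = (n + 2).choose 1 + (n + 2).choose 2 := rfl
    rw [Nat.choose_one_right] at h2
    omega

lemma prod_enorm_sq_le_ofReal {ι : Type*} [Fintype ι] [Nonempty ι] {z w : ι → ℂ} {τ : ℝ}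
    (hτ : 0 < τ) (h : ∀ i, ‖w i‖ ≤ ‖z i‖) :
    ∏ i, ‖w i‖ₑ ^ 2 ≤ ENNReal.ofReal (τ ^ (2 * Fintype.card ι) *
      geomMean (fun i => ‖z i‖ * τ⁻¹) ^ (2 * Fintype.card ι)) := by
  have hz : ∀ i, 0 ≤ ‖z i‖ := fun i => norm_nonneg _
  have hτ' : 0 ≤ τ⁻¹ := inv_nonneg.2 hτ.le
  rw [geomMean_mul hz fun _ => hτ', geomMean_const hτ', ← mul_pow, mul_left_comm,
    mul_inv_cancel₀ hτ.ne', mul_one, mul_comm 2, pow_mul, geomMean_pow_card hz, Finset.prod_pow,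
    ENNReal.ofReal_pow (Finset.prod_nonneg fun i _ => hz i),
    ENNReal.ofReal_prod_of_nonneg fun i _ => hz i]
  gcongr with i
  rw [← ofReal_norm]
  exact ENNReal.ofReal_le_ofReal (h i)

lemma exists_lintegral_prod_truncBelow_innerIntegral_le {n : ℕ} (hn : 1 ≤ n) :
    ∃ C D : ℝ, 0 < C ∧ 2 ≤ D ∧ ∀ (s : Fin (n + 1) → ℝ) (η τ : ℝ), 0 < η →
      (Pairwise fun i j => η ≤ |s i - s j|) → 0 < τ → τ ≤ 1 →
      ∫⁻ x, ∏ i, ‖truncBelow τ (innerIntegral n x (s i))‖ₑ ^ 2 ≤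
        ENNReal.ofReal (C * log (D / τ) * η⁻¹ ^ (n + 2).choose 3 *
          (τ⁻¹ ^ ((n + 3).choose 3 + 2) * τ ^ (2 * (n + 1)))) := by
  obtain ⟨C₁, D, hC₁, hD, hvol⟩ :=
    exists_volume_superlevel_innerIntegral_le hn (Fin (n + 1)) (by simp)
  obtain ⟨C₂, hC₂, hlayer⟩ := exists_lintegral_le_of_superlevel (Fin (n + 1)) (2 * (n + 1))
  refine ⟨C₁ * C₂, D, by positivity, hD, fun s η τ hη hsep hτ hτ1 => ?_⟩
  have hlog : 0 ≤ log (D / τ) := log_nonneg (by rw [le_div_iff₀ hτ]; linarith)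
  refine (hlayer volume (two_mul_lt_choose_three hn)
    (fun x i => ‖innerIntegral n x (s i)‖ * τ⁻¹) _ (P := τ ^ (2 * (n + 1)))
    (M := C₁ * log (D / τ) * η⁻¹ ^ (n + 2).choose 3 * τ⁻¹ ^ ((n + 3).choose 3 + 2))
    (by positivity) (by positivity) (fun l hl => ?_) fun x hx => ⟨fun i => ?_, ?_⟩).trans
    (ENNReal.ofReal_le_ofReal (le_of_eq (by ring)))
  · have hl0 : ∀ i, 0 ≤ l i := fun i => zero_le_one.trans (hl i)
    refine (measure_mono fun x hx i => ?_).trans ((hvol s (fun i => l i * τ) η τ hη hsep hτ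
      fun i => le_mul_of_one_le_left hτ.le (hl i)).trans_eq ?_)
    · exact (le_div_iff₀ hτ).1 ((hx.2 i).trans_eq (div_eq_mul_inv _ _).symm)
    · rw [geomMean_mul hl0 fun _ => hτ.le, geomMean_const hτ.le, mul_inv, mul_pow]
      ring_nf
  · rw [← div_eq_mul_inv, one_le_div₀ hτ]
    refine le_norm_of_truncBelow_ne_zero fun h0 => hx ?_
    exact Finset.prod_eq_zero (Finset.mem_univ i) (by simp [h0])
  · simpa using prod_enorm_sq_le_ofReal hτ fun i => norm_truncBelow_le τ (innerIntegral n x (s i))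

end InnerIntegral

section Plancherel

open FourierTransform SchwartzMap

section InnerProductSpace

variable {V : Type*} [NormedAddCommGroup V] [InnerProductSpace ℝ V] [FiniteDimensional ℝ V]
  [MeasurableSpace V] [BorelSpace V]

lemma fourier_ae_eq_coeFn_fourier_toLp {H : V → ℂ} (h1 : Integrable H) (h2 : MemLp H 2) :
    ∀ᵐ y, 𝓕 H y = (𝓕 (h2.toLp H) : Lp ℂ 2 (volume : Measure V)) y := by
  have hc : Continuous (𝓕 H) := VectorFourier.fourierIntegral_continuous
    Real.continuous_fourierChar (continuous_inner (𝕜 := ℝ)) h1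
  refine ae_eq_of_integral_contDiff_smul_eq hc.locallyIntegrable
    ((Lp.memLp _).locallyIntegrable one_le_two) fun g hg hgs => ?_
  have hcs : HasCompactSupport (fun x => (g x : ℂ)) := hgs.comp_left Complex.ofReal_zero
  set G : 𝓢(V, ℂ) := hcs.toSchwartzMap (Complex.ofRealCLM.contDiff.comp hg)
  have hpair : ∫ x, g x • (𝓕 (h2.toLp H) : Lp ℂ 2 (volume : Measure V)) x =
      ((𝓕 (h2.toLp H) : Lp ℂ 2 (volume : Measure V)) : 𝓢'(V, ℂ)) G := by
    rw [Lp.toTemperedDistribution_apply]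
    rfl
  rw [hpair, ← Lp.fourier_toTemperedDistribution_eq, TemperedDistribution.fourier_apply,
    Lp.toTemperedDistribution_apply]
  have hcoe : ∫ x, (𝓕 G) x • (h2.toLp H) x = ∫ x, (𝓕 G) x • H x := by
    refine integral_congr_ae ?_
    filter_upwards [h2.coeFn_toLp] with x hx
    rw [hx]
  rw [hcoe]
  have h := VectorFourier.integral_fourierIntegral_smul_eq_flip (L := innerₗ V)
    Real.continuous_fourierChar (continuous_inner (𝕜 := ℝ)) (G.integrable (μ := volume)) h1
  rw [flip_innerₗ] at h
  exact h.symm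

lemma lintegral_enorm_fourier_sq {H : V → ℂ} (h1 : Integrable H) (h2 : MemLp H 2) :
    ∫⁻ y, ‖𝓕 H y‖ₑ ^ 2 = ∫⁻ x, ‖H x‖ₑ ^ 2 := by
  have hnorm : ∀ f : V → ℂ, ∫⁻ y, ‖f y‖ₑ ^ 2 = eLpNorm f 2 ^ 2 := by
    intro f
    rw [eLpNorm_eq_lintegral_rpow_enorm_toReal two_ne_zero ENNReal.ofNat_ne_top,
      ← ENNReal.rpow_natCast, ← ENNReal.rpow_mul]
    simp
  rw [hnorm, hnorm, eLpNorm_congr_ae (fourier_ae_eq_coeFn_fourier_toLp h1 h2), ← Lp.enorm_def,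
    ← eLpNorm_congr_ae h2.coeFn_toLp, ← Lp.enorm_def, ← ofReal_norm, ← ofReal_norm,
    Lp.norm_fourier_eq]

end InnerProductSpace

lemma memLp_two_iff_lintegral_enorm_sq_lt_top {α : Type*} [MeasurableSpace α] {μ : Measure α}
    {H : α → ℂ} (hm : AEStronglyMeasurable H μ) : MemLp H 2 μ ↔ ∫⁻ x, ‖H x‖ₑ ^ 2 ∂μ < ∞ := by
  rw [MemLp, and_iff_right hm,
    eLpNorm_lt_top_iff_lintegral_rpow_enorm_lt_top two_ne_zero ENNReal.ofNat_ne_top]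
  simp

variable {ι : Type*} [Fintype ι]

lemma lintegral_enorm_integral_mul_fourierChar_sq {H : (ι → ℝ) → ℂ} (h1 : Integrable H)
    (h2 : ∫⁻ x, ‖H x‖ₑ ^ 2 < ∞) :
    ∫⁻ y : ι → ℝ, ‖∫ x, H x * (𝐞 (∑ j, y j * x j) : ℂ)‖ₑ ^ 2 = ∫⁻ x, ‖H x‖ₑ ^ 2 := by
  have hp := PiLp.volume_preserving_ofLp ι
  have he : MeasurableEmbedding (WithLp.ofLp : EuclideanSpace ℝ ι → ι → ℝ) :=
    (MeasurableEquiv.toLp 2 (ι → ℝ)).symm.measurableEmbedding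
  have h1' : Integrable (H ∘ WithLp.ofLp : EuclideanSpace ℝ ι → ℂ) :=
    (hp.integrable_comp_emb he).2 h1
  have hnorm : ∫⁻ x : EuclideanSpace ℝ ι, ‖(H ∘ WithLp.ofLp) x‖ₑ ^ 2 = ∫⁻ x, ‖H x‖ₑ ^ 2 :=
    hp.lintegral_comp_emb he fun x => ‖H x‖ₑ ^ 2
  have hplancherel := lintegral_enorm_fourier_sq h1'
    ((memLp_two_iff_lintegral_enorm_sq_lt_top h1'.1).2 (hnorm ▸ h2))
  rw [hnorm] at hplancherel
  rw [← hplancherel, ← hp.lintegral_comp_emb he, ← lintegral_neg_eq_self]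
  refine lintegral_congr fun y => ?_
  rw [Real.fourier_eq', ← hp.integral_comp he]
  congr 2
  refine integral_congr_ae (ae_of_all _ fun x => ?_)
  simp [Real.fourierChar_apply, PiLp.inner_apply, mul_comm]

lemma lintegral_enorm_setIntegral_mul_fourierChar_sq {T : Set (ι → ℝ)} (hT : MeasurableSet T)
    {H : (ι → ℝ) → ℂ} (h1 : IntegrableOn H T) (h2 : ∫⁻ x in T, ‖H x‖ₑ ^ 2 < ∞) :
    ∫⁻ y : ι → ℝ, ‖∫ x in T, H x * (𝐞 (∑ j, y j * x j) : ℂ)‖ₑ ^ 2 = ∫⁻ x in T, ‖H x‖ₑ ^ 2 := by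
  have hnorm : ∫⁻ x, ‖T.indicator H x‖ₑ ^ 2 = ∫⁻ x in T, ‖H x‖ₑ ^ 2 := by
    rw [← lintegral_indicator hT]
    refine lintegral_congr fun x => ?_
    by_cases hx : x ∈ T <;> simp [hx]
  rw [← hnorm] at h2 ⊢
  rw [← lintegral_enorm_integral_mul_fourierChar_sq ((integrable_indicator_iff hT).2 h1) h2]
  refine lintegral_congr fun y => ?_
  rw [← integral_indicator hT]
  congr 2
  refine integral_congr_ae (ae_of_all _ fun x => ?_)
  exact indicator_mul_left T H fun x => (𝐞 (∑ j, y j * x j) : ℂ)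

lemma lintegral_enorm_setIntegral_mul_fourierChar_comp_sq_le {Φ : (ι → ℝ) → ι → ℝ}
    {Φ' : (ι → ℝ) → (ι → ℝ) →L[ℝ] ι → ℝ} {S : Set (ι → ℝ)}
    (hS : MeasurableSet S) (hΦ : ∀ s ∈ S, HasFDerivWithinAt Φ (Φ' s) S s) (hinj : InjOn Φ S)
    {c : ℝ} (hc : 0 < c) (hdet : ∀ s ∈ S, c ≤ |(Φ' s).det|) {G : (ι → ℝ) → ℂ}
    (hG : IntegrableOn G S) (hG2 : ∫⁻ s in S, ‖G s‖ₑ ^ 2 < ∞) :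
    ∫⁻ y : ι → ℝ, ‖∫ s in S, G s * (𝐞 (∑ j, y j * Φ s j) : ℂ)‖ₑ ^ 2 ≤
      ENNReal.ofReal c⁻¹ * ∫⁻ s in S, ‖G s‖ₑ ^ 2 := by
  have hpos : ∀ s ∈ S, 0 < |(Φ' s).det| := fun s hs => hc.trans_le (hdet s hs)
  obtain ⟨H, hH⟩ : ∃ H : (ι → ℝ) → ℂ, ∀ s ∈ S, H (Φ s) = |(Φ' s).det|⁻¹ • G s := by
    refine ⟨fun u => |(Φ' (Function.invFunOn Φ S u)).det|⁻¹ • G (Function.invFunOn Φ S u),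
      fun s hs => ?_⟩
    simp only [hinj.leftInvOn_invFunOn hs]
  have hHG : ∀ s ∈ S, |(Φ' s).det| • H (Φ s) = G s := fun s hs => by
    rw [hH s hs, smul_inv_smul₀ (hpos s hs).ne']
  have hHint : IntegrableOn H (Φ '' S) := by
    rw [integrableOn_image_iff_integrableOn_abs_det_fderiv_smul volume hS hΦ hinj]
    exact hG.congr_fun (fun s hs => (hHG s hs).symm) hS
  have hH2 : ∫⁻ u in Φ '' S, ‖H u‖ₑ ^ 2 ≤ ENNReal.ofReal c⁻¹ * ∫⁻ s in S, ‖G s‖ₑ ^ 2 := by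
    rw [lintegral_image_eq_lintegral_abs_det_fderiv_mul volume hS hΦ hinj,
      ← lintegral_const_mul' _ _ ENNReal.ofReal_ne_top]
    refine setLIntegral_mono_ae' hS (ae_of_all _ fun s hs => ?_)
    rw [hH s hs, enorm_smul, mul_pow, ← mul_assoc, Real.enorm_eq_ofReal (by positivity),
      ← ENNReal.ofReal_pow (by positivity), ← ENNReal.ofReal_mul (by positivity), pow_two,
      mul_inv_cancel_left₀ (hpos s hs).ne']
    gcongr
    exact hdet s hs
  grw [← hH2, ← lintegral_enorm_setIntegral_mul_fourierChar_sq
    (measurable_image_of_fderivWithin hS hΦ hinj) hHint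
    (hH2.trans_lt (ENNReal.mul_lt_top ENNReal.ofReal_lt_top hG2))]
  refine (lintegral_congr fun y => ?_).le
  rw [integral_image_eq_integral_abs_det_fderiv_smul volume hS hΦ hinj]
  congr 2
  refine setIntegral_congr_fun hS fun s hs => ?_
  simp only [← smul_mul_assoc, hHG s hs]

end Plancherel

section MomentCurve

open Matrix FourierTransform Function

lemma aeval_esymm_eq_of_sum_pow_eq {R ι : Type*} [CommRing R] [IsDomain R] [CharZero R] [Fintype ι]
    {s s' : ι → R} {p : ℕ} (h : ∀ m, 1 ≤ m → m ≤ p → ∑ i, s i ^ m = ∑ i, s' i ^ m) :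
    ∀ m ≤ p, MvPolynomial.aeval s (MvPolynomial.esymm ι R m) =
      MvPolynomial.aeval s' (MvPolynomial.esymm ι R m) := by
  intro m
  induction m using Nat.strong_induction_on with
  | _ m ih =>
    intro hm
    rcases m.eq_zero_or_pos with rfl | hm0
    · simp
    have hnewton := MvPolynomial.mul_esymm_eq_sum ι R m
    have hs := congrArg (MvPolynomial.aeval s) hnewton
    have hs' := congrArg (MvPolynomial.aeval s') hnewton
    refine mul_left_cancel₀ (Nat.cast_ne_zero.2 hm0.ne' : (m : R) ≠ 0) ?_
    simp only [map_mul, map_natCast, map_pow, map_neg, map_one, map_sum] at hs hs'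
    rw [hs, hs']
    congr 1
    refine Finset.sum_congr rfl fun a ha => ?_
    simp only [Finset.mem_filter, Finset.HasAntidiagonal.mem_antidiagonal] at ha
    rw [ih a.1 ha.2 (by omega)]
    simp only [MvPolynomial.psum, map_sum, map_pow, MvPolynomial.aeval_X,
      h a.2 (by omega) (by omega)]

lemma exists_eq_of_sum_pow_eq {R ι : Type*} [CommRing R] [IsDomain R] [CharZero R] [Fintype ι]
    {s s' : ι → R} (h : ∀ m, 1 ≤ m → m ≤ Fintype.card ι → ∑ i, s i ^ m = ∑ i, s' i ^ m) (i : ι) :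
    ∃ j, s i = s' j := by
  have hprod : ((Finset.univ.val.map s).map fun t => Polynomial.X - Polynomial.C t).prod =
      ((Finset.univ.val.map s').map fun t => Polynomial.X - Polynomial.C t).prod := by
    simp only [Multiset.prod_X_sub_X_eq_sum_esymm, Multiset.card_map, Finset.card_val,
      Finset.card_univ]
    refine Finset.sum_congr rfl fun m hm => ?_
    simp only [← MvPolynomial.aeval_esymm_eq_multiset_esymm ι R,
      aeval_esymm_eq_of_sum_pow_eq h m (Nat.lt_succ_iff.1 (Finset.mem_range.1 hm))]
  simp only [Multiset.map_map, Function.comp_def, Finset.prod_map_val] at hprod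
  have hzero : ∏ j, (s i - s' j) = 0 := by
    have heval := congrArg (Polynomial.eval (s i)) hprod
    simp only [Polynomial.eval_prod, Polynomial.eval_sub, Polynomial.eval_X,
      Polynomial.eval_C] at heval
    exact heval.symm.trans (Finset.prod_eq_zero (Finset.mem_univ i) (sub_self _))
  obtain ⟨j, -, hj⟩ := Finset.prod_eq_zero_iff.1 hzero
  exact ⟨j, sub_eq_zero.1 hj⟩

/-- The sum of `p` points of the moment curve `t ↦ (t, t², …, tᵖ)` in `ℝᵖ`. -/
def momentSum (p : ℕ) (s : Fin p → ℝ) : Fin p → ℝ := fun j => ∑ i, s i ^ ((j : ℕ) + 1)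

/-- The derivative of `momentSum p` at `s`, a rescaled transposed Vandermonde matrix. -/
def momentSumDeriv (p : ℕ) (s : Fin p → ℝ) : (Fin p → ℝ) →L[ℝ] Fin p → ℝ :=
  LinearMap.toContinuousLinearMap
    (Matrix.toLin' (diagonal (fun j : Fin p => ((j : ℕ) + 1 : ℝ)) * (vandermonde s)ᵀ))

lemma hasFDerivAt_momentSum (p : ℕ) (s : Fin p → ℝ) :
    HasFDerivAt (momentSum p) (momentSumDeriv p s) s := by
  rw [hasFDerivAt_pi']
  intro j
  have hsum : HasFDerivAt (fun s : Fin p → ℝ => ∑ i, s i ^ ((j : ℕ) + 1))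
      (∑ i, ((((j : ℕ) + 1 : ℕ) : ℝ) * s i ^ (j : ℕ)) •
        (ContinuousLinearMap.proj i : (Fin p → ℝ) →L[ℝ] ℝ)) s :=
    HasFDerivAt.fun_sum fun i _ =>
      HasDerivAt.comp_hasFDerivAt (h₂ := fun t : ℝ => t ^ ((j : ℕ) + 1)) s
        (hasDerivAt_pow ((j : ℕ) + 1) (s i)) (hasFDerivAt_apply i s)
  refine hsum.congr_fderiv ?_
  ext v
  simp [momentSumDeriv, mulVec, dotProduct, vandermonde_apply]

lemma pow_choose_le_abs_det_momentSumDeriv {p : ℕ} {s : Fin p → ℝ} {η : ℝ} (hη : 0 ≤ η)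
    (hsep : Pairwise fun i j => η ≤ |s i - s j|) :
    η ^ p.choose 2 ≤ |(momentSumDeriv p s).det| := by
  have hfac : (1 : ℝ) ≤ ∏ j : Fin p, ((j : ℕ) + 1 : ℝ) := Finset.one_le_prod fun j => by simp
  rw [momentSumDeriv, LinearMap.det_toContinuousLinearMap, LinearMap.det_toLin', det_mul,
    det_diagonal, det_transpose, abs_mul, abs_of_pos (by linarith)]
  exact (pow_choose_le_abs_det_vandermonde hη hsep).trans
    (le_mul_of_one_le_left (abs_nonneg _) hfac)

lemma injOn_momentSum {p : ℕ} {J : Fin p → Set ℝ} (hdisj : Pairwise (Disjoint on J)) :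
    InjOn (momentSum p) (univ.pi J) := by
  intro s hs s' hs' h
  have hpow : ∀ m, 1 ≤ m → m ≤ Fintype.card (Fin p) → ∑ i, s i ^ m = ∑ i, s' i ^ m := by
    intro m hm hmp
    rw [Fintype.card_fin] at hmp
    simpa only [momentSum, Nat.sub_add_cancel hm] using congrFun h ⟨m - 1, by omega⟩
  ext i
  obtain ⟨j, hj⟩ := exists_eq_of_sum_pow_eq hpow i
  have hij : i = j := hdisj.eq (not_disjoint_iff.2
    ⟨s i, hs i (mem_univ i), hj ▸ hs' j (mem_univ j)⟩)
  rw [hj, hij]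

lemma enorm_finsetProd {ι : Type*} (s : Finset ι) (f : ι → ℂ) :
    ‖∏ i ∈ s, f i‖ₑ = ∏ i ∈ s, ‖f i‖ₑ := by
  simp only [← ofReal_norm, norm_prod, ENNReal.ofReal_prod_of_nonneg fun _ _ => norm_nonneg _]

/-- The character of `ℝᵖ` with frequency `y`, evaluated along the moment curve. -/
def momentChar {p : ℕ} (y : Fin p → ℝ) (t : ℝ) : ℂ := 𝐞 (∑ j : Fin p, y j * t ^ ((j : ℕ) + 1))

lemma continuous_momentChar (p : ℕ) :
    Continuous fun z : (Fin p → ℝ) × ℝ => momentChar z.1 z.2 :=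
  continuous_coe_fourierChar.comp (continuous_finsetSum _ fun j _ => by fun_prop)

lemma norm_momentChar {p : ℕ} (y : Fin p → ℝ) (t : ℝ) : ‖momentChar y t‖ = 1 := Circle.norm_coe _

lemma prod_momentChar {p : ℕ} (y s : Fin p → ℝ) :
    ∏ i, momentChar y (s i) = 𝐞 (∑ j, y j * momentSum p s j) := by
  simp only [momentChar, momentSum, Real.fourierChar_apply, ← Complex.exp_sum, ← Finset.sum_mul,
    ← Complex.ofReal_sum, ← Finset.mul_sum]
  rw [Finset.sum_comm]
  simp only [Finset.mul_sum]

lemma setIntegral_pi_prod_mul_fourierChar_momentSum {p : ℕ} (J : Fin p → Set ℝ)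
    (g : Fin p → ℝ → ℂ) (y : Fin p → ℝ) :
    ∫ s in univ.pi J, (∏ i, g i (s i)) * (𝐞 (∑ j, y j * momentSum p s j) : ℂ) =
      ∏ i, ∫ t in J i, g i t * momentChar y t := by
  rw [← integral_fintype_prod_eq_prod (𝕜 := ℂ) (μ := fun i => volume.restrict (J i)),
    ← Measure.restrict_pi_pi, ← volume_pi]
  simp only [Finset.prod_mul_distrib, prod_momentChar]

lemma lintegral_prod_enorm_setIntegral_mul_momentChar_sq_le {p : ℕ} {J : Fin p → Set ℝ}
    (hJ : ∀ i, MeasurableSet (J i)) (hvol : ∀ i, volume (J i) < ∞) {η : ℝ} (hη : 0 < η)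
    (hsep : Pairwise fun i j => ∀ a ∈ J i, ∀ b ∈ J j, η ≤ |a - b|) {g : Fin p → ℝ → ℂ}
    (hg : ∀ i, Measurable (g i)) (hg1 : ∀ i t, ‖g i t‖ ≤ 1) :
    ∫⁻ y : Fin p → ℝ, ∏ i, ‖∫ t in J i, g i t * momentChar y t‖ₑ ^ 2 ≤
      ENNReal.ofReal (η⁻¹ ^ p.choose 2) * ∫⁻ s in univ.pi J, ∏ i, ‖g i (s i)‖ₑ ^ 2 := by
  have hSv : volume (univ.pi J) < ∞ := by
    rw [volume_pi_pi]
    exact ENNReal.prod_lt_top fun i _ => hvol i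
  have hGm : Measurable fun s : Fin p → ℝ => ∏ i, g i (s i) :=
    Finset.measurable_prod _ fun i _ => (hg i).comp (measurable_pi_apply i)
  have hG1 : ∀ s : Fin p → ℝ, ‖∏ i, g i (s i)‖ ≤ 1 := fun s => by
    rw [norm_prod]
    exact Finset.prod_le_one (fun _ _ => norm_nonneg _) fun i _ => hg1 i _
  have hG2 : ∫⁻ s in univ.pi J, ‖∏ i, g i (s i)‖ₑ ^ 2 < ∞ := by
    refine (lintegral_mono (g := fun _ => 1) fun s => ?_).trans_lt (by simpa using hSv)
    refine pow_le_one' ?_ 2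
    rw [← ofReal_norm]
    exact ENNReal.ofReal_le_one.2 (hG1 s)
  have hdisj : Pairwise (Disjoint on J) := fun i j hij => disjoint_left.2 fun a ha hb => by
    have := hsep hij a ha a hb
    rw [sub_self, abs_zero] at this
    linarith
  have hplancherel := lintegral_enorm_setIntegral_mul_fourierChar_comp_sq_le
    (MeasurableSet.univ_pi hJ) (fun s _ => (hasFDerivAt_momentSum p s).hasFDerivWithinAt)
    (injOn_momentSum hdisj) (c := η ^ p.choose 2) (by positivity)
    (fun s hs => pow_choose_le_abs_det_momentSumDeriv hη.le fun i j hij =>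
      hsep hij _ (hs i (mem_univ i)) _ (hs j (mem_univ j)))
    (Measure.integrableOn_of_bounded hSv.ne hGm.aestronglyMeasurable (ae_of_all _ hG1)) hG2
  simpa only [setIntegral_pi_prod_mul_fourierChar_momentSum, enorm_finsetProd, Finset.prod_pow,
    inv_pow] using hplancherel

end MomentCurve

section ScalePigeonhole

lemma exists_fin_forall_lt_add_two_le {k : ℕ} {S : Finset ℕ} (hS : 2 * k ≤ S.card) :
    ∃ c : Fin k → ℕ, (∀ i, c i ∈ S) ∧ ∀ i i', i < i' → c i + 2 ≤ c i' := by
  set e := S.orderEmbOfCardLe hS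
  refine ⟨fun i => e ⟨2 * i, by omega⟩, fun i => S.orderEmbOfCardLe_mem hS _, fun i i' h => ?_⟩
  have hnext : e ⟨2 * i, by omega⟩ < e ⟨2 * i + 1, by omega⟩ := e.strictMono (by simp)
  have hlast : e ⟨2 * i + 1, by omega⟩ < e ⟨2 * i', by omega⟩ :=
    e.strictMono (by simp only [Fin.mk_lt_mk]; omega)
  exact Nat.succ_le_of_lt (Nat.lt_of_le_of_lt hnext hlast)

lemma sum_le_card_filter_mul_add_card_mul {α : Type*} (s : Finset α) {v : α → ℝ} {t M : ℝ}
    (ht : 0 ≤ t) (hM : ∀ c ∈ s, v c ≤ M) :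
    ∑ c ∈ s, v c ≤ (s.filter fun c => t ≤ v c).card * M + s.card * t := by
  rw [← Finset.sum_filter_add_sum_filter_not s (fun c => t ≤ v c) v]
  have hlarge := Finset.sum_le_card_nsmul (s.filter fun c => t ≤ v c) v M
    fun c hc => hM c (Finset.mem_filter.1 hc).1
  have hsmall := Finset.sum_le_card_nsmul (s.filter fun c => ¬ t ≤ v c) v t
    fun c hc => (not_le.1 (Finset.mem_filter.1 hc).2).le
  rw [nsmul_eq_mul] at hlarge hsmall
  have hcard : ((s.filter fun c => ¬ t ≤ v c).card : ℝ) ≤ s.card :=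
    mod_cast Finset.card_filter_le _ _
  grw [hlarge, hsmall, hcard]

lemma exists_lt_or_exists_forall_le_of_le_sum {k A : ℕ} (hk : 1 ≤ k) {v : ℕ → ℝ} {b : ℝ}
    (hb : 0 < b) (h : b / 2 ≤ ∑ c ∈ Finset.range A, v c) :
    (∃ c < A, b / (8 * k) ≤ v c) ∨ ∃ c : Fin k → Fin A,
      (∀ i i', i < i' → (c i : ℕ) + 2 ≤ c i') ∧ ∀ i, b / (4 * A) ≤ v (c i) := by
  set S := (Finset.range A).filter fun c => b / (4 * A) ≤ v c with hS
  by_cases hcard : 2 * k ≤ S.card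
  · right
    obtain ⟨c, hcS, hc⟩ := exists_fin_forall_lt_add_two_le hcard
    simp only [hS, Finset.mem_filter, Finset.mem_range] at hcS
    exact ⟨fun i => ⟨c i, (hcS i).1⟩, hc, fun i => (hcS i).2⟩
  · left
    by_contra! hcon
    have hsum := sum_le_card_filter_mul_add_card_mul (Finset.range A) (v := v)
      (t := b / (4 * A)) (by positivity) fun c hc => (hcon c (Finset.mem_range.1 hc)).le
    have hlarge : (S.card : ℝ) * (b / (8 * k)) < b / 4 := by
      have hcard' : (S.card : ℝ) < 2 * k := mod_cast not_le.1 hcard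
      calc _ < (2 * k : ℝ) * (b / (8 * k)) := by gcongr
        _ = b / 4 := by field_simp; norm_num
    have hsmall : ((Finset.range A).card : ℝ) * (b / (4 * A)) ≤ b / 4 := by
      rw [Finset.card_range, ← div_div, mul_div_left_comm]
      exact mul_le_of_le_one_right (by positivity) (div_self_le_one _)
    linarith

lemma exists_scale_forall_le_of_le_sum {k A : ℕ} (hk : 1 ≤ k) {u : ℕ → ℕ → ℝ}
    {b : ℝ} (hb : 0 < b) (h0 : b ≤ u 0 0)
    (hrec : ∀ m j, u m j ≤ ∑ c ∈ Finset.range A, u (m + 1) (A * j + c) + b / (8 * k) ^ m / 2)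
    {M : ℕ} (hM : ∀ j, u M j ≤ 0) :
    ∃ m, ∃ j < A ^ m, ∃ c : Fin k → Fin A, (∀ i i', i < i' → (c i : ℕ) + 2 ≤ c i') ∧
      ∀ i, b / (8 * k) ^ m / (4 * A) ≤ u (m + 1) (A * j + c i) := by
  by_contra! hcon
  have hlarge : ∀ m, ∃ j < A ^ m, b / (8 * k) ^ m ≤ u m j := by
    intro m
    induction m with
    | zero => exact ⟨0, by simp, by simpa⟩
    | succ m ih =>
      obtain ⟨j, hj, hbj⟩ := ih
      rcases exists_lt_or_exists_forall_le_of_le_sum hk (A := A) (b := b / (8 * k) ^ m)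
        (v := fun c => u (m + 1) (A * j + c)) (by positivity) (by linarith [hrec m j]) with
        ⟨c, hc, hbc⟩ | ⟨c, hc, hbc⟩
      · refine ⟨A * j + c, ?_, by rwa [pow_succ, ← div_div]⟩
        calc A * j + c < A * (j + 1) := by rw [mul_add_one]; omega
          _ ≤ A * A ^ m := Nat.mul_le_mul_left _ hj
          _ = A ^ (m + 1) := (pow_succ' A m).symm
      · obtain ⟨i, hi⟩ := hcon m j hj c hc
        exact absurd (hbc i) (not_le.2 hi)
  obtain ⟨j, -, hj⟩ := hlarge M
  have : 0 < b / (8 * k : ℝ) ^ M := by positivity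
  linarith [hM j]

end ScalePigeonhole

section ScaleIntegral

lemma truncBelow_zero (z : ℂ) : truncBelow 0 z = z :=
  indicator_of_mem (s := {z : ℂ | 0 ≤ ‖z‖}) (norm_nonneg z) id

lemma truncBelow_eq_zero {τ : ℝ} {z : ℂ} (h : ‖z‖ < τ) : truncBelow τ z = 0 := by
  by_contra hne
  exact h.not_ge (le_norm_of_truncBelow_ne_zero hne)

lemma truncBelow_truncBelow {σ τ : ℝ} (h : σ ≤ τ) (z : ℂ) :
    truncBelow τ (truncBelow σ z) = truncBelow τ z := by
  unfold truncBelow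
  by_cases hz : σ ≤ ‖z‖
  · simp [hz]
  · have hz' : z ∉ {z : ℂ | τ ≤ ‖z‖} := fun hτ => hz (h.trans hτ)
    simp [indicator_of_notMem hz', hz]

/-- The integral of `truncBelow τ (f s) * w s` over the `j`-th of the intervals of length `A⁻ᵐ`. -/
def scaleIntegral (A m j : ℕ) (τ : ℝ) (f w : ℝ → ℂ) : ℂ :=
  ∫ s in (j / A ^ m : ℝ)..((j + 1) / A ^ m), truncBelow τ (f s) * w s

variable {f w : ℝ → ℂ}

lemma scaleIntegral_eq_zero (hf1 : ∀ s, ‖f s‖ ≤ 1) {τ : ℝ} (hτ : 1 < τ) (A m j : ℕ) :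
    scaleIntegral A m j τ f w = 0 := by
  simp [scaleIntegral, truncBelow_eq_zero ((hf1 _).trans_lt hτ)]

variable (hf : Measurable f) (hf1 : ∀ s, ‖f s‖ ≤ 1) (hw : Measurable w) (hw1 : ∀ s, ‖w s‖ ≤ 1)

include hf hf1 hw hw1

lemma intervalIntegrable_truncBelow_mul (τ a b : ℝ) :
    IntervalIntegrable (fun s => truncBelow τ (f s) * w s) volume a b := by
  refine (intervalIntegrable_const (c := (1 : ℝ))).mono_fun
    (((measurable_truncBelow τ).comp hf).mul hw).aestronglyMeasurable (ae_of_all _ fun s => ?_)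
  simp only [norm_mul, norm_one]
  exact mul_le_one₀ ((norm_truncBelow_le _ _).trans (hf1 s)) (norm_nonneg _) (hw1 s)

lemma norm_scaleIntegral_le_add (A m j : ℕ) {σ τ : ℝ} (h : σ ≤ τ) (hτ : 0 ≤ τ) :
    ‖scaleIntegral A m j σ f w‖ ≤ ‖scaleIntegral A m j τ f w‖ + τ / A ^ m := by
  have hint := intervalIntegrable_truncBelow_mul hf hf1 hw hw1
  have hdiff : ‖scaleIntegral A m j σ f w - scaleIntegral A m j τ f w‖ ≤ τ / A ^ m := by
    rw [scaleIntegral, scaleIntegral, ← intervalIntegral.integral_sub (hint _ _ _) (hint _ _ _)]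
    refine (intervalIntegral.norm_integral_le_of_norm_le_const (C := τ) fun s _ => ?_).trans_eq ?_
    · rw [← sub_mul, norm_mul, ← truncBelow_truncBelow h]
      exact (mul_le_of_le_one_right (norm_nonneg _) (hw1 s)).trans (norm_sub_truncBelow_le hτ _)
    · rw [← sub_div, add_sub_cancel_left, abs_of_nonneg (by positivity), mul_one_div]
  exact (norm_le_norm_add_norm_sub' _ _).trans (by gcongr)

lemma scaleIntegral_eq_sum {A : ℕ} (hA : 0 < A) (m j : ℕ) (τ : ℝ) :
    scaleIntegral A m j τ f w =
      ∑ c ∈ Finset.range A, scaleIntegral A (m + 1) (A * j + c) τ f w := by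
  have hsum := intervalIntegral.sum_integral_adjacent_intervals (μ := volume) (n := A)
    (a := fun c : ℕ => ((A * j + c : ℕ) : ℝ) / A ^ (m + 1)) fun c _ =>
      intervalIntegrable_truncBelow_mul hf hf1 hw hw1 τ _ _
  have hA' : (A : ℝ) ≠ 0 := by positivity
  have hleft : ((A * j + 0 : ℕ) : ℝ) / A ^ (m + 1) = j / A ^ m := by
    push_cast
    rw [add_zero, pow_succ', mul_div_mul_left _ _ hA']
  have hright : ((A * j + A : ℕ) : ℝ) / A ^ (m + 1) = (j + 1) / A ^ m := by
    push_cast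
    rw [← mul_add_one, pow_succ', mul_div_mul_left _ _ hA']
  simp only [hleft, hright] at hsum
  simp only [scaleIntegral, ← hsum, Nat.cast_add, Nat.cast_one, add_assoc]

lemma norm_scaleIntegral_le_sum {A : ℕ} (hA : 0 < A) (m j : ℕ) {σ τ : ℝ} (h : σ ≤ τ)
    (hτ : 0 ≤ τ) :
    ‖scaleIntegral A m j σ f w‖ ≤
      ∑ c ∈ Finset.range A, ‖scaleIntegral A (m + 1) (A * j + c) τ f w‖ + τ / A ^ m := by
  rw [scaleIntegral_eq_sum hf hf1 hw hw1 hA]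
  calc _ ≤ ∑ c ∈ Finset.range A, ‖scaleIntegral A (m + 1) (A * j + c) σ f w‖ := norm_sum_le _ _
    _ ≤ ∑ c ∈ Finset.range A,
        (‖scaleIntegral A (m + 1) (A * j + c) τ f w‖ + τ / A ^ (m + 1)) :=
      Finset.sum_le_sum fun c _ => norm_scaleIntegral_le_add hf hf1 hw hw1 _ _ _ h hτ
    _ = _ := by
      rw [Finset.sum_add_distrib, Finset.sum_const, Finset.card_range, nsmul_eq_mul, pow_succ']
      field_simp

lemma norm_scaleIntegral_zero_zero_ge {σ δ : ℝ} (hσ : 0 ≤ σ) (hσδ : σ ≤ δ / 2) (A : ℕ)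
    (h : δ ≤ ‖∫ s in (0 : ℝ)..1, f s * w s‖) : δ / 2 ≤ ‖scaleIntegral A 0 0 σ f w‖ := by
  have hfull : ∫ s in (0 : ℝ)..1, f s * w s = scaleIntegral A 0 0 0 f w := by
    simp [scaleIntegral, truncBelow_zero]
  have hle := norm_scaleIntegral_le_add hf hf1 hw hw1 A 0 0 hσ hσ
  rw [pow_zero (A : ℝ), div_one, ← hfull] at hle
  linarith

lemma exists_scale_forall_le_norm_scaleIntegral {k κ : ℕ} (hk : 1 ≤ k) (hκ : 2 ≤ κ) {δ : ℝ}
    (hδ : 0 < δ) (h : δ ≤ ‖∫ s in (0 : ℝ)..1, f s * w s‖) :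
    ∃ m, ∃ j < (8 * k * κ) ^ m, ∃ c : Fin k → Fin (8 * k * κ),
      (∀ i i', i < i' → (c i : ℕ) + 2 ≤ c i') ∧
      ∀ i, δ / (8 * (8 * k * κ)) / (8 * k) ^ m ≤
        ‖scaleIntegral (8 * k * κ) (m + 1) (8 * k * κ * j + c i) (δ / 4 * κ ^ m) f w‖ := by
  have hκ' : (2 : ℝ) ≤ κ := mod_cast hκ
  set A := 8 * k * κ with hA
  have hAR : (A : ℝ) = 8 * k * κ := by rw [hA]; push_cast; rfl
  set τ : ℕ → ℝ := fun m => δ / 4 * κ ^ m / κ with hτ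
  have hτ_succ : ∀ m, τ (m + 1) = δ / 4 * κ ^ m := fun m => by
    simp only [hτ, pow_succ]
    field_simp
  have h0 : δ / 2 ≤ ‖scaleIntegral A 0 0 (τ 0) f w‖ := by
    refine norm_scaleIntegral_zero_zero_ge hf hf1 hw hw1 (by positivity) ?_ A h
    simp only [hτ]
    rw [pow_zero, mul_one, div_le_iff₀ (by positivity)]
    nlinarith
  have hrec : ∀ m j, ‖scaleIntegral A m j (τ m) f w‖ ≤
      ∑ c ∈ Finset.range A, ‖scaleIntegral A (m + 1) (A * j + c) (τ (m + 1)) f w‖ +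
        δ / 2 / (8 * k) ^ m / 2 := by
    intro m j
    have hmono : τ m ≤ τ (m + 1) := by simp only [hτ]; gcongr <;> grind
    refine (norm_scaleIntegral_le_sum hf hf1 hw hw1 (by positivity) m j hmono
      (by positivity)).trans_eq ?_
    congr 1
    rw [hτ_succ, hAR, mul_pow (8 * k : ℝ)]
    field_simp
    norm_num
  obtain ⟨M, hM⟩ := pow_unbounded_of_one_lt (4 * κ / δ) (show (1 : ℝ) < κ by linarith)
  have hM' : 1 < τ M := by
    rw [div_lt_iff₀ hδ] at hM
    rw [hτ, lt_div_iff₀ (by positivity)]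
    linarith
  obtain ⟨m, j, hj, c, hc, hbc⟩ := exists_scale_forall_le_of_le_sum
    (u := fun m j => ‖scaleIntegral A m j (τ m) f w‖) hk (half_pos hδ) h0 hrec (M := M)
    fun j => by simp [scaleIntegral_eq_zero hf1 hM']
  refine ⟨m, j, hj, c, hc, fun i => ?_⟩
  rw [← hτ_succ, ← hAR]
  refine (Eq.le ?_).trans (hbc i)
  field_simp
  norm_num

end ScaleIntegral

section ScaleVolume

lemma measure_forall_le_norm_le {α ι : Type*} [MeasurableSpace α] [Fintype ι] {μ : Measure α}
    {T : ι → α → ℂ} (hT : ∀ i, Measurable (T i)) {θ : ℝ} (hθ : 0 < θ) :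
    μ {a | ∀ i, θ ≤ ‖T i a‖} ≤
      ENNReal.ofReal (θ⁻¹ ^ (2 * Fintype.card ι)) * ∫⁻ a, ∏ i, ‖T i a‖ₑ ^ 2 ∂μ := by
  have hsub : {a | ∀ i, θ ≤ ‖T i a‖} ⊆
      {a | ENNReal.ofReal (θ ^ (2 * Fintype.card ι)) ≤ ∏ i, ‖T i a‖ₑ ^ 2} := by
    intro a ha
    have hprod : ENNReal.ofReal (θ ^ (2 * Fintype.card ι)) = ∏ _i : ι, ENNReal.ofReal θ ^ 2 := by
      rw [Finset.prod_const, Finset.card_univ, ← pow_mul, ENNReal.ofReal_pow hθ.le]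
    rw [mem_ofPred_eq, hprod]
    refine Finset.prod_le_prod' fun i _ => ?_
    rw [← ofReal_norm]
    gcongr
    exact ha i
  have h0 : ENNReal.ofReal (θ ^ (2 * Fintype.card ι)) ≠ 0 := by
    rw [Ne, ENNReal.ofReal_eq_zero, not_le]
    positivity
  refine (measure_mono hsub).trans ((meas_ge_le_lintegral_div
    (Finset.measurable_prod _ fun i _ => (hT i).enorm.pow_const 2).aemeasurable h0
    ENNReal.ofReal_ne_top).trans_eq ?_)
  rw [ENNReal.div_eq_inv_mul, ← ENNReal.ofReal_inv_of_pos (by positivity), inv_pow]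

/-- The `l`-th of the half-open intervals of length `A⁻ᵐ`, on which `scaleIntegral A m l`
integrates. -/
def scaleInterval (A m l : ℕ) : Set ℝ := Ioc (l / A ^ m) ((l + 1) / A ^ m)

lemma scaleIntegral_eq_setIntegral (A m l : ℕ) (τ : ℝ) (f w : ℝ → ℂ) :
    scaleIntegral A m l τ f w = ∫ s in scaleInterval A m l, truncBelow τ (f s) * w s :=
  intervalIntegral.integral_of_le (by gcongr; linarith)

lemma volume_scaleInterval (A m l : ℕ) :
    volume (scaleInterval A m l) = ENNReal.ofReal ((A : ℝ) ^ m)⁻¹ := by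
  rw [scaleInterval, Real.volume_Ioc, ← sub_div, add_sub_cancel_left, one_div]

lemma volume_pi_scaleInterval {k : ℕ} (A m : ℕ) (l : Fin k → ℕ) :
    volume (univ.pi fun i => scaleInterval A m (l i)) =
      ENNReal.ofReal (((A : ℝ) ^ m)⁻¹ ^ k) := by
  rw [volume_pi_pi, ENNReal.ofReal_pow (by positivity)]
  simp [volume_scaleInterval]

lemma inv_pow_le_sub_of_mem_scaleInterval {A m l l' : ℕ} (h : l + 2 ≤ l') {a b : ℝ}
    (ha : a ∈ scaleInterval A m l) (hb : b ∈ scaleInterval A m l') :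
    ((A : ℝ) ^ m)⁻¹ ≤ b - a := by
  have h' : (l : ℝ) + 2 ≤ l' := mod_cast h
  calc ((A : ℝ) ^ m)⁻¹ = (l + 2) / A ^ m - (l + 1) / A ^ m := by ring
    _ ≤ l' / A ^ m - (l + 1) / A ^ m := by gcongr
    _ ≤ b - a := sub_le_sub hb.1.le ha.2

lemma pairwise_inv_pow_le_abs_sub {ι : Type*} [LinearOrder ι] (A m : ℕ) {l : ι → ℕ}
    (hl : ∀ i i', i < i' → l i + 2 ≤ l i') :
    Pairwise fun i i' => ∀ a ∈ scaleInterval A m (l i), ∀ b ∈ scaleInterval A m (l i'),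
      ((A : ℝ) ^ m)⁻¹ ≤ |a - b| := by
  intro i i' hne a ha b hb
  rcases lt_or_gt_of_ne hne with hlt | hlt
  · rw [abs_sub_comm]
    exact (inv_pow_le_sub_of_mem_scaleInterval (hl i i' hlt) ha hb).trans (le_abs_self _)
  · exact (inv_pow_le_sub_of_mem_scaleInterval (hl i' i hlt) hb ha).trans (le_abs_self _)

lemma measurable_innerIntegral {n : ℕ} (x : TopIdx n → ℝ) : Measurable (innerIntegral n x) :=
  ((continuous_innerIntegral n).comp (Continuous.prodMk_right x)).measurable

lemma measurable_momentChar {p : ℕ} (y : Fin p → ℝ) : Measurable (momentChar y) :=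
  ((continuous_momentChar p).comp (Continuous.prodMk_right y)).measurable

lemma measurable_scaleIntegral (n p A m l : ℕ) (τ : ℝ) :
    Measurable fun z : (TopIdx n → ℝ) × (Fin p → ℝ) =>
      scaleIntegral A m l τ (innerIntegral n z.1) (momentChar z.2) := by
  simp only [scaleIntegral_eq_setIntegral]
  refine StronglyMeasurable.measurable (StronglyMeasurable.integral_prod_right'
    (f := fun q : ((TopIdx n → ℝ) × (Fin p → ℝ)) × ℝ =>
      truncBelow τ (innerIntegral n q.1.1 q.2) * momentChar q.1.2 q.2)
    (Measurable.stronglyMeasurable ?_))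
  refine ((measurable_truncBelow τ).comp ?_).mul ?_
  · exact ((continuous_innerIntegral n).comp
      (continuous_fst.fst.prodMk continuous_snd)).measurable
  · exact ((continuous_momentChar p).comp (continuous_fst.snd.prodMk continuous_snd)).measurable

lemma lintegral_prod_enorm_scaleIntegral_momentChar_sq_le {p A : ℕ} (hA : 0 < A) (m : ℕ)
    {l : Fin p → ℕ} (hl : ∀ i i', i < i' → l i + 2 ≤ l i') (τ : ℝ) {f : ℝ → ℂ}
    (hf : Measurable f) (hf1 : ∀ s, ‖f s‖ ≤ 1) :
    ∫⁻ y : Fin p → ℝ, ∏ i, ‖scaleIntegral A m (l i) τ f (momentChar y)‖ₑ ^ 2 ≤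
      ENNReal.ofReal (((A : ℝ) ^ m) ^ p.choose 2) *
        ∫⁻ s in univ.pi fun i => scaleInterval A m (l i), ∏ i, ‖truncBelow τ (f (s i))‖ₑ ^ 2 := by
  simp only [scaleIntegral_eq_setIntegral]
  have hplancherel := lintegral_prod_enorm_setIntegral_mul_momentChar_sq_le
    (J := fun i => scaleInterval A m (l i)) (g := fun _ s => truncBelow τ (f s))
    (fun _ => measurableSet_Ioc) (fun _ => measure_Ioc_lt_top) (by positivity)
    (pairwise_inv_pow_le_abs_sub A m hl) (fun _ => (measurable_truncBelow τ).comp hf)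
    (fun _ s => (norm_truncBelow_le _ _).trans (hf1 s))
  rwa [inv_inv] at hplancherel

lemma choose_three_add_two_eq (n : ℕ) :
    (n + 3).choose 3 + 2 = (n + 1).choose 2 + (n + 2).choose 3 + (n + 1) + 2 := by
  have h1 : (n + 3).choose 3 = (n + 2).choose 2 + (n + 2).choose 3 := rfl
  have h2 : (n + 2).choose 2 = (n + 1).choose 1 + (n + 1).choose 2 := rfl
  rw [Nat.choose_one_right] at h2
  omega

lemma pow_mul_pow_choose_eq_div_pow (n : ℕ) {ρ τ : ℝ} (hρ : 0 < ρ) (hτ : 0 < τ) (L : ℝ) :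
    ρ ^ (n + 1).choose 2 * (L * ρ ^ (n + 2).choose 3 *
      (τ⁻¹ ^ ((n + 3).choose 3 + 2) * τ ^ (2 * (n + 1))) * ρ⁻¹ ^ (n + 1)) =
    L * (τ / ρ) ^ (2 * (n + 1)) * (ρ / τ) ^ ((n + 3).choose 3 + 2) * (ρ ^ 2)⁻¹ := by
  have hexp : ρ ^ ((n + 3).choose 3 + 2) =
      ρ ^ (n + 1).choose 2 * ρ ^ (n + 2).choose 3 * ρ ^ (n + 1) * ρ ^ 2 := by
    rw [choose_three_add_two_eq, pow_add, pow_add, pow_add]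
  rw [div_pow, div_pow, hexp, two_mul, pow_add ρ (n + 1), inv_pow, inv_pow]
  field_simp

lemma exists_lintegral_prod_scaleIntegral_le {n : ℕ} (hn : 1 ≤ n) :
    ∃ C D : ℝ, 0 < C ∧ 2 ≤ D ∧ ∀ (A m : ℕ) (l : Fin (n + 1) → ℕ) (τ : ℝ), 0 < A →
      (∀ i i', i < i' → l i + 2 ≤ l i') → 0 < τ → τ ≤ 1 →
      ∫⁻ z : (TopIdx n → ℝ) × (Fin (n + 1) → ℝ),
        ∏ i, ‖scaleIntegral A m (l i) τ (innerIntegral n z.1) (momentChar z.2)‖ₑ ^ 2 ≤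
      ENNReal.ofReal (C * log (D / τ) * (τ / A ^ m) ^ (2 * (n + 1)) *
        (A ^ m / τ) ^ ((n + 3).choose 3 + 2) * (((A : ℝ) ^ m) ^ 2)⁻¹) := by
  obtain ⟨C, D, hC, hD, hinner⟩ := exists_lintegral_prod_truncBelow_innerIntegral_le hn
  refine ⟨C, D, hC, hD, fun A m l τ hA hl hτ hτ1 => ?_⟩
  have hρ : (0 : ℝ) < (A : ℝ) ^ m := by positivity
  have hlog : 0 ≤ log (D / τ) := log_nonneg (by rw [le_div_iff₀ hτ]; linarith)
  set J : Set (Fin (n + 1) → ℝ) := univ.pi fun i => scaleInterval A m (l i) with hJ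
  have hJm : MeasurableSet J := .univ_pi fun _ => measurableSet_Ioc
  have htrunc : Measurable fun q : (TopIdx n → ℝ) × (Fin (n + 1) → ℝ) =>
      ∏ i, ‖truncBelow τ (innerIntegral n q.1 (q.2 i))‖ₑ ^ 2 :=
    Finset.measurable_prod _ fun i _ => ((measurable_truncBelow τ).comp
      ((continuous_innerIntegral n).comp (continuous_fst.prodMk
        ((continuous_apply i).comp continuous_snd))).measurable).enorm.pow_const 2
  calc _ = ∫⁻ x, ∫⁻ y,
        ∏ i, ‖scaleIntegral A m (l i) τ (innerIntegral n x) (momentChar y)‖ₑ ^ 2 :=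
        lintegral_prod _ (Finset.measurable_prod _ fun i _ =>
          (measurable_scaleIntegral n (n + 1) A m (l i) τ).enorm.pow_const 2).aemeasurable
    _ ≤ ∫⁻ x, ENNReal.ofReal (((A : ℝ) ^ m) ^ (n + 1).choose 2) *
        ∫⁻ s in J, ∏ i, ‖truncBelow τ (innerIntegral n x (s i))‖ₑ ^ 2 :=
      lintegral_mono fun x => lintegral_prod_enorm_scaleIntegral_momentChar_sq_le hA m hl τ
        (measurable_innerIntegral x) (norm_innerIntegral_le_one n x)
    _ = ENNReal.ofReal (((A : ℝ) ^ m) ^ (n + 1).choose 2) * ∫⁻ s in J,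
        ∫⁻ x, ∏ i, ‖truncBelow τ (innerIntegral n x (s i))‖ₑ ^ 2 := by
      rw [lintegral_const_mul' _ _ ENNReal.ofReal_ne_top,
        lintegral_lintegral_swap htrunc.aemeasurable]
    _ ≤ ENNReal.ofReal (((A : ℝ) ^ m) ^ (n + 1).choose 2) * ∫⁻ _ in J,
        ENNReal.ofReal (C * log (D / τ) * ((A : ℝ) ^ m) ^ (n + 2).choose 3 *
          (τ⁻¹ ^ ((n + 3).choose 3 + 2) * τ ^ (2 * (n + 1)))) := by
      refine mul_le_mul_right (setLIntegral_mono' hJm fun s hs => ?_) _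
      simpa only [inv_inv] using hinner s ((A : ℝ) ^ m)⁻¹ τ (inv_pos.2 hρ) (fun i j hij =>
        pairwise_inv_pow_le_abs_sub A m hl hij _ (hs i (mem_univ i)) _ (hs j (mem_univ j))) hτ hτ1
    _ = _ := by
      rw [setLIntegral_const, hJ, volume_pi_scaleInterval, ← ENNReal.ofReal_mul (by positivity),
        ← ENNReal.ofReal_mul (by positivity), pow_mul_pow_choose_eq_div_pow n hρ hτ]

lemma exists_volume_forall_le_norm_scaleIntegral_le {n : ℕ} (hn : 1 ≤ n) :
    ∃ C D : ℝ, 0 < C ∧ 2 ≤ D ∧ ∀ (A m : ℕ) (l : Fin (n + 1) → ℕ) (θ τ : ℝ), 0 < A →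
      (∀ i i', i < i' → l i + 2 ≤ l i') → 0 < θ → 0 < τ → τ ≤ 1 →
      volume {z : (TopIdx n → ℝ) × (Fin (n + 1) → ℝ) |
        ∀ i, θ ≤ ‖scaleIntegral A m (l i) τ (innerIntegral n z.1) (momentChar z.2)‖} ≤
      ENNReal.ofReal (C * log (D / τ) * (τ / (θ * A ^ m)) ^ (2 * (n + 1)) *
        (A ^ m / τ) ^ ((n + 3).choose 3 + 2) * (((A : ℝ) ^ m) ^ 2)⁻¹) := by
  obtain ⟨C, D, hC, hD, hint⟩ := exists_lintegral_prod_scaleIntegral_le hn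
  refine ⟨C, D, hC, hD, fun A m l θ τ hA hl hθ hτ hτ1 => ?_⟩
  refine (measure_forall_le_norm_le (fun i => measurable_scaleIntegral n (n + 1) A m (l i) τ)
    hθ).trans ?_
  grw [hint A m l τ hA hl hτ hτ1]
  rw [← ENNReal.ofReal_mul (by positivity), Fintype.card_fin, mul_comm θ, ← div_div,
    div_pow _ θ, inv_pow θ]
  apply le_of_eq
  congr 1
  ring

end ScaleVolume

section SuperlevelVolume

/-- The factor by which the truncation threshold grows from one scale to the next. It makes
`scaleRatio n` the `((n + 3).choose 3 + 3)`-rd power of `8 * (n + 1)`, so that the volumes of the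
successive scale sets decay geometrically. -/
def thresholdRatio (n : ℕ) : ℕ := (8 * (n + 1)) ^ ((n + 3).choose 3 + 2)

/-- The number of intervals of one scale contained in an interval of the preceding scale. -/
def scaleRatio (n : ℕ) : ℕ := 8 * (n + 1) * thresholdRatio n

lemma two_le_thresholdRatio (n : ℕ) : 2 ≤ thresholdRatio n :=
  (show 2 ≤ 8 * (n + 1) by omega).trans (Nat.le_self_pow (by omega) _)

lemma scaleRatio_pos (n : ℕ) : 0 < scaleRatio n :=
  Nat.mul_pos (by omega) (two_pos.trans_le (two_le_thresholdRatio n))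

lemma cast_scaleRatio (n : ℕ) : (scaleRatio n : ℝ) = 8 * (n + 1) * thresholdRatio n := by
  simp [scaleRatio]

/-- The coefficients `(x, y)` for which, at scale `m`, the integrals over `n + 1` separated
subintervals of a common interval of the preceding scale are all large. -/
def scaleSet (n : ℕ) (δ : ℝ) (m : ℕ) : Set ((TopIdx n → ℝ) × (Fin (n + 1) → ℝ)) :=
  {z | ∃ j < scaleRatio n ^ m, ∃ c : Fin (n + 1) → Fin (scaleRatio n),
    (∀ i i', i < i' → (c i : ℕ) + 2 ≤ c i') ∧
    ∀ i, δ / (8 * scaleRatio n) / (8 * (n + 1)) ^ m ≤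
      ‖scaleIntegral (scaleRatio n) (m + 1) (scaleRatio n * j + c i)
        (δ / 4 * thresholdRatio n ^ m) (innerIntegral n z.1) (momentChar z.2)‖}

lemma superlevel_subset_iUnion_scaleSet (n : ℕ) {δ : ℝ} (hδ : 0 < δ) :
    {z : (TopIdx n → ℝ) × (Fin (n + 1) → ℝ) |
      δ ≤ ‖∫ s in (0 : ℝ)..1, innerIntegral n z.1 s * momentChar z.2 s‖} ⊆ ⋃ m, scaleSet n δ m := by
  intro z hz
  have hscale := exists_scale_forall_le_norm_scaleIntegral (measurable_innerIntegral z.1)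
    (norm_innerIntegral_le_one n z.1) (measurable_momentChar z.2)
    (fun s => (norm_momentChar z.2 s).le) (k := n + 1) (by omega) (two_le_thresholdRatio n) hδ hz
  rw [Nat.cast_add_one, ← cast_scaleRatio] at hscale
  exact mem_iUnion.2 hscale

lemma scale_exponent_eq (n m : ℕ) {δ : ℝ} (hδ : 0 < δ) {A κ : ℝ} (hκ : κ = thresholdRatio n)
    (hA : A = scaleRatio n) :
    (δ / 4 * κ ^ m / (δ / (8 * A) / (8 * (n + 1)) ^ m * A ^ (m + 1))) ^ (2 * (n + 1)) *
      (A ^ (m + 1) / (δ / 4 * κ ^ m)) ^ ((n + 3).choose 3 + 2) * ((A ^ (m + 1)) ^ 2)⁻¹ =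
    2 ^ (2 * (n + 1)) * (4 * A) ^ ((n + 3).choose 3 + 2) * (A ^ 2)⁻¹ *
      δ⁻¹ ^ ((n + 3).choose 3 + 2) * (A ^ m)⁻¹ * ((8 * (n + 1) : ℝ)⁻¹) ^ m := by
  set q := (n + 3).choose 3 + 2
  set R : ℝ := 8 * (n + 1)
  have hκq : κ = R ^ q := by rw [hκ, thresholdRatio]; push_cast; rfl
  have hAκ : A = R * κ := by rw [hA, cast_scaleRatio, ← hκ]
  have hRpos : 0 < R := by positivity
  have hκpos : 0 < κ := by rw [hκq]; positivity
  have hApos : 0 < A := by rw [hAκ]; positivity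
  have hAm : A ^ m = R ^ m * κ ^ m := by rw [hAκ, mul_pow]
  have hratio : δ / 4 * κ ^ m / (δ / (8 * A) / R ^ m * A ^ (m + 1)) = 2 := by
    rw [pow_succ, hAm]
    field_simp
    norm_num
  have hthreshold : A ^ (m + 1) / (δ / 4 * κ ^ m) = 4 * A * δ⁻¹ * R ^ m := by
    rw [pow_succ, hAm]
    field_simp
  have hpow : (R ^ m) ^ q = κ ^ m := by rw [← pow_mul, mul_comm, pow_mul, ← hκq]
  have hdecay : κ ^ m * ((A ^ (m + 1)) ^ 2)⁻¹ = (A ^ 2)⁻¹ * (A ^ m)⁻¹ * R⁻¹ ^ m := by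
    rw [hAm, inv_pow R]
    field_simp
    rw [pow_succ A m, hAm]
    ring
  rw [hratio, hthreshold, mul_pow _ (R ^ m), hpow, mul_pow (4 * A)]
  linear_combination (2 ^ (2 * (n + 1)) * (4 * A) ^ q * δ⁻¹ ^ q) * hdecay

lemma exists_volume_scaleSet_slice_le {n : ℕ} (hn : 1 ≤ n) :
    ∃ C D : ℝ, 0 < C ∧ 2 ≤ D ∧ ∀ (m : ℕ) (l : Fin (n + 1) → ℕ) (δ : ℝ), 0 < δ →
      (∀ i i', i < i' → l i + 2 ≤ l i') →
      volume {z : (TopIdx n → ℝ) × (Fin (n + 1) → ℝ) |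
        ∀ i, δ / (8 * scaleRatio n) / (8 * (n + 1)) ^ m ≤
          ‖scaleIntegral (scaleRatio n) (m + 1) (l i) (δ / 4 * thresholdRatio n ^ m)
            (innerIntegral n z.1) (momentChar z.2)‖} ≤
      ENNReal.ofReal (C * log (D / δ) * δ⁻¹ ^ ((n + 3).choose 3 + 2) *
        ((scaleRatio n : ℝ) ^ m)⁻¹ * ((8 * (n + 1) : ℝ)⁻¹) ^ m) := by
  obtain ⟨C, D, hC, hD, hvol⟩ := exists_volume_forall_le_norm_scaleIntegral_le hn
  have hA := scaleRatio_pos n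
  have hκ : (1 : ℝ) ≤ thresholdRatio n := mod_cast one_le_two.trans (two_le_thresholdRatio n)
  refine ⟨C * (2 ^ (2 * (n + 1)) * (4 * scaleRatio n) ^ ((n + 3).choose 3 + 2) *
    ((scaleRatio n : ℝ) ^ 2)⁻¹), 4 * D, by positivity, by linarith, fun m l δ hδ hl => ?_⟩
  rcases lt_or_ge 1 (δ / 4 * thresholdRatio n ^ m) with hτ | hτ
  · refine (measure_mono_null (t := ∅) (fun z hz => ?_) measure_empty).trans_le zero_le
    have h0 := hz 0
    rw [scaleIntegral_eq_zero (norm_innerIntegral_le_one n z.1) hτ, norm_zero] at h0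
    exact h0.not_gt (by positivity)
  refine (hvol (scaleRatio n) (m + 1) l _ _ hA hl (by positivity) (by positivity) hτ).trans
    (ENNReal.ofReal_le_ofReal ?_)
  have hlog : log (D / (δ / 4 * thresholdRatio n ^ m)) ≤ log (4 * D / δ) := by
    refine log_le_log (by positivity) ?_
    rw [mul_comm 4 D, ← div_div_eq_mul_div]
    exact div_le_div_of_nonneg_left (by positivity) (by positivity)
      (le_mul_of_one_le_right (by positivity) (one_le_pow₀ hκ))
  rw [mul_assoc, mul_assoc, ← mul_assoc (_ ^ (2 * (n + 1))), scale_exponent_eq n m hδ rfl rfl]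
  grw [hlog]
  apply le_of_eq
  ring

lemma exists_volume_scaleSet_le {n : ℕ} (hn : 1 ≤ n) :
    ∃ C D : ℝ, 0 < C ∧ 2 ≤ D ∧ ∀ (m : ℕ) (δ : ℝ), 0 < δ →
      volume (scaleSet n δ m) ≤ ENNReal.ofReal
        (C * log (D / δ) * δ⁻¹ ^ ((n + 3).choose 3 + 2) * ((8 * (n + 1) : ℝ)⁻¹) ^ m) := by
  obtain ⟨C, D, hC, hD, hslice⟩ := exists_volume_scaleSet_slice_le hn
  have hA := scaleRatio_pos n
  refine ⟨scaleRatio n ^ (n + 1) * C, D, by positivity, hD, fun m δ hδ => ?_⟩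
  set slice : Fin (scaleRatio n ^ m) × (Fin (n + 1) → Fin (scaleRatio n)) →
      Set ((TopIdx n → ℝ) × (Fin (n + 1) → ℝ)) := fun p =>
    {z | (∀ i i', i < i' → (p.2 i : ℕ) + 2 ≤ p.2 i') ∧
      ∀ i, δ / (8 * scaleRatio n) / (8 * (n + 1)) ^ m ≤
        ‖scaleIntegral (scaleRatio n) (m + 1) (scaleRatio n * p.1 + p.2 i)
          (δ / 4 * thresholdRatio n ^ m) (innerIntegral n z.1) (momentChar z.2)‖}
  have hsub : scaleSet n δ m ⊆ ⋃ p, slice p := fun z ⟨j, hj, c, hc, hbc⟩ =>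
    mem_iUnion.2 ⟨(⟨j, hj⟩, c), hc, hbc⟩
  have hvol : ∀ p, volume (slice p) ≤ ENNReal.ofReal (C * log (D / δ) *
      δ⁻¹ ^ ((n + 3).choose 3 + 2) * ((scaleRatio n : ℝ) ^ m)⁻¹ * ((8 * (n + 1) : ℝ)⁻¹) ^ m) := by
    intro p
    by_cases hp : ∀ i i', i < i' → (p.2 i : ℕ) + 2 ≤ p.2 i'
    · exact (measure_mono fun z hz => hz.2).trans (hslice m (fun i => scaleRatio n * p.1 + p.2 i)
        δ hδ fun i i' hi => by grw [add_assoc, hp i i' hi])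
    · exact (measure_mono_null (t := ∅) (fun z hz => hp hz.1) measure_empty).trans_le zero_le
  refine (measure_mono hsub).trans ((measure_iUnion_fintype_le _ _).trans
    ((Finset.sum_le_sum fun p _ => hvol p).trans_eq ?_))
  rw [Finset.sum_const, Finset.card_univ, Fintype.card_prod, Fintype.card_fin, Fintype.card_fun,
    Fintype.card_fin, Fintype.card_fin, ← ENNReal.ofReal_nsmul, nsmul_eq_mul]
  congr 1
  push_cast
  field_simp

lemma exists_volume_le_norm_integral_innerIntegral_le {n : ℕ} (hn : 1 ≤ n) :
    ∃ C D : ℝ, 0 < C ∧ 2 ≤ D ∧ ∀ δ : ℝ, 0 < δ → δ ≤ 1 →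
      volume {z : (TopIdx n → ℝ) × (Fin (n + 1) → ℝ) |
        δ ≤ ‖∫ s in (0 : ℝ)..1, innerIntegral n z.1 s * momentChar z.2 s‖} ≤
      ENNReal.ofReal (C * log (D / δ) * δ⁻¹ ^ ((n + 3).choose 3 + 2)) := by
  obtain ⟨C, D, hC, hD, hscale⟩ := exists_volume_scaleSet_le hn
  have hr0 : (0 : ℝ) ≤ (8 * (n + 1) : ℝ)⁻¹ := by positivity
  have hr1 : (8 * (n + 1) : ℝ)⁻¹ < 1 :=
    inv_lt_one_of_one_lt₀ (by linarith [(n.cast_nonneg : (0 : ℝ) ≤ n)])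
  refine ⟨C * (1 - (8 * (n + 1) : ℝ)⁻¹)⁻¹, D, mul_pos hC (inv_pos.2 (sub_pos.2 hr1)), hD,
    fun δ hδ hδ1 => ?_⟩
  have hlog : 0 ≤ log (D / δ) := log_nonneg (by rw [le_div_iff₀ hδ]; linarith)
  refine (measure_mono (superlevel_subset_iUnion_scaleSet n hδ)).trans
    ((measure_iUnion_le _).trans ((ENNReal.tsum_le_tsum fun m => hscale m δ hδ).trans_eq ?_))
  rw [← ENNReal.ofReal_tsum_of_nonneg (fun m => by positivity)
    ((summable_geometric_of_lt_one hr0 hr1).mul_left _), tsum_mul_left,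
    tsum_geometric_of_lt_one hr0 hr1]
  congr 1
  ring

end SuperlevelVolume

section Coordinates

open FourierTransform

/-- The exponents of `(ξ₁, ξ₂)` in the monomial of `topPoly k n` with a given coefficient. -/
def topExponents (k : ℕ) : ∀ n, TopIdx n → ℕ × ℕ
  | 0, _ => (0, k)
  | n + 1, Sum.inl a => topExponents k n a
  | n + 1, Sum.inr j => (j, k - (n + 1))

lemma eval_topPoly (k n : ℕ) (x : TopIdx n → ℝ) (s t : ℝ) :
    (topPoly k n x s).eval t =
      ∑ a, x a * s ^ (topExponents k n a).1 * t ^ (topExponents k n a).2 := by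
  induction n with
  | zero =>
    change _ = ∑ a : Fin 1, x a * s ^ 0 * t ^ k
    simp [topPoly]
  | succ n ih =>
    change _ = ∑ a : TopIdx n ⊕ Fin (n + 2),
      x a * s ^ (topExponents k (n + 1) a).1 * t ^ (topExponents k (n + 1) a).2
    rw [Fintype.sum_sum_type, topPoly, Polynomial.eval_add, ih]
    congr 1
    simp only [Polynomial.eval_mul, Polynomial.eval_C, Polynomial.eval_pow, Polynomial.eval_X,
      Finset.sum_mul]
    rfl

lemma topExponents_bounds {k n : ℕ} (hn : n ≤ k) (a : TopIdx n) :
    k - n ≤ (topExponents k n a).2 ∧ (topExponents k n a).1 + (topExponents k n a).2 ≤ k := by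
  induction n with
  | zero => exact ⟨le_rfl, by simp [topExponents]⟩
  | succ n ih =>
    rcases a with a | j
    · have ha := ih (by omega) a
      constructor <;> simp only [topExponents] <;> omega
    · constructor <;> simp only [topExponents] <;> omega

lemma injective_topExponents {k n : ℕ} (hn : n ≤ k) : Function.Injective (topExponents k n) := by
  induction n with
  | zero => exact fun a b _ => Subsingleton.elim (α := Fin 1) a b
  | succ n ih =>
    have hne (a : TopIdx n) (j : Fin (n + 2)) : topExponents k n a ≠ ((j : ℕ), k - (n + 1)) := by
      intro h
      have ha := (topExponents_bounds (by omega) a : k - n ≤ _ ∧ _).1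
      rw [h] at ha
      omega
    rintro (a | j) (b | l) h
    · exact congrArg Sum.inl (ih (by omega) h)
    · exact absurd h (hne a l)
    · exact absurd h.symm (hne b j)
    · exact congrArg Sum.inr (Fin.ext (congrArg Prod.fst h))

lemma exists_topExponents_eq {k n : ℕ} (hn : n ≤ k) {p : ℕ × ℕ} (h1 : k - n ≤ p.2)
    (h2 : p.1 + p.2 ≤ k) : ∃ a, topExponents k n a = p := by
  induction n with
  | zero => exact ⟨(0 : Fin 1), Prod.ext (by simp only [topExponents]; omega)
      (by simp only [topExponents]; omega)⟩
  | succ n ih =>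
    by_cases h : k - n ≤ p.2
    · obtain ⟨a, ha⟩ := ih (by omega) h
      exact ⟨Sum.inl a, ha⟩
    · exact ⟨Sum.inr ⟨p.1, by omega⟩, Prod.ext rfl (by simp only [topExponents]; omega)⟩

/-- The exponents in the monomials of a phase, those independent of `ξ₂` coming last. -/
def phaseExponents (n : ℕ) : TopIdx n ⊕ Fin (n + 1) → ℕ × ℕ :=
  Sum.elim (topExponents (n + 1) n) fun j => (j + 1, 0)

lemma phaseExponents_bounds {n : ℕ} (a : TopIdx n ⊕ Fin (n + 1)) :
    1 ≤ (phaseExponents n a).1 + (phaseExponents n a).2 ∧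
      (phaseExponents n a).1 + (phaseExponents n a).2 ≤ n + 1 := by
  rcases a with a | j
  · have ha := topExponents_bounds (k := n + 1) (by omega) a
    exact ⟨by simp only [phaseExponents, Sum.elim_inl]; omega, ha.2⟩
  · constructor <;> simp only [phaseExponents, Sum.elim_inr] <;> omega

lemma injective_phaseExponents (n : ℕ) : Function.Injective (phaseExponents n) := by
  refine (injective_topExponents (Nat.le_succ n)).sumElim (fun j l h => ?_) fun a j h => ?_
  · exact Fin.ext (Nat.add_right_cancel (congrArg Prod.fst h))
  · have ha := (topExponents_bounds (k := n + 1) (by omega) a).1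
    rw [h] at ha
    omega

lemma exists_phaseExponents_eq {n : ℕ} {p : ℕ × ℕ} (h1 : 1 ≤ p.1 + p.2) (h2 : p.1 + p.2 ≤ n + 1) :
    ∃ a, phaseExponents n a = p := by
  rcases Nat.eq_zero_or_pos p.2 with h | h
  · exact ⟨Sum.inr ⟨p.1 - 1, by omega⟩, Prod.ext
      (by simp only [phaseExponents, Sum.elim_inr]; omega) h.symm⟩
  · obtain ⟨a, ha⟩ := exists_topExponents_eq (Nat.le_succ n) (by omega) h2
    exact ⟨Sum.inl a, ha⟩

/-- The multi-index of a monomial of a phase, as an element of `Idx`. -/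
def phaseIdx (n : ℕ) (a : TopIdx n ⊕ Fin (n + 1)) : Idx (n + 1) :=
  ⟨(⟨(phaseExponents n a).1, by grind [phaseExponents_bounds a]⟩,
    ⟨(phaseExponents n a).2, by grind [phaseExponents_bounds a]⟩), phaseExponents_bounds a⟩

lemma bijective_phaseIdx (n : ℕ) : Function.Bijective (phaseIdx n) := by
  refine ⟨fun a b h => injective_phaseExponents n ?_, fun β => ?_⟩
  · exact congrArg (fun β : Idx (n + 1) => ((β.1.1 : ℕ), (β.1.2 : ℕ))) h
  · obtain ⟨a, ha⟩ := exists_phaseExponents_eq (p := ((β.1.1 : ℕ), (β.1.2 : ℕ))) β.2.1 β.2.2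
    exact ⟨a, Subtype.ext (Prod.ext (Fin.ext (congrArg Prod.fst ha))
      (Fin.ext (congrArg Prod.snd ha)))⟩

/-- The indexing of the monomials of a phase by `TopIdx n ⊕ Fin (n + 1)`. -/
def phaseEquiv (n : ℕ) : TopIdx n ⊕ Fin (n + 1) ≃ Idx (n + 1) :=
  Equiv.ofBijective (phaseIdx n) (bijective_phaseIdx n)

/-- Coordinates on the space of phases separating the coefficients of the monomials independent
of `ξ₂`. -/
def phaseCoord (n : ℕ) : (TopIdx n → ℝ) × (Fin (n + 1) → ℝ) ≃ᵐ (Idx (n + 1) → ℝ) :=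
  (MeasurableEquiv.sumPiEquivProdPi fun _ : TopIdx n ⊕ Fin (n + 1) => ℝ).symm.trans
    (MeasurableEquiv.piCongrLeft (fun _ => ℝ) (phaseEquiv n))

lemma measurePreserving_phaseCoord (n : ℕ) : MeasurePreserving (phaseCoord n) :=
  (volume_measurePreserving_piCongrLeft (fun _ => ℝ) (phaseEquiv n)).comp
    (volume_measurePreserving_sumPiEquivProdPi_symm fun _ : TopIdx n ⊕ Fin (n + 1) => ℝ)

lemma phaseCoord_apply {n : ℕ} (z : (TopIdx n → ℝ) × (Fin (n + 1) → ℝ))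
    (a : TopIdx n ⊕ Fin (n + 1)) : phaseCoord n z (phaseEquiv n a) = Sum.elim z.1 z.2 a := by
  refine (MeasurableEquiv.piCongrLeft_apply_apply (β := fun _ => ℝ) (phaseEquiv n) _ a).trans ?_
  rcases a with a | j <;> rfl

lemma Pphase_phaseCoord {n : ℕ} (z : (TopIdx n → ℝ) × (Fin (n + 1) → ℝ)) (ξ : Fin 2 → ℝ) :
    Pphase (n + 1) (phaseCoord n z) ξ = (topPoly (n + 1) n z.1 (ξ 0)).eval (ξ 1) +
      ∑ j : Fin (n + 1), z.2 j * ξ 0 ^ ((j : ℕ) + 1) := by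
  rw [Pphase, ← (phaseEquiv n).sum_comp, Fintype.sum_sum_type, eval_topPoly]
  simp only [phaseCoord_apply, Sum.elim_inl, Sum.elim_inr]
  congr 1
  exact Finset.sum_congr rfl fun j _ => mul_one _

lemma integral_Icc_fin_two {E : Type*} [NormedAddCommGroup E] [NormedSpace ℝ E] {F : ℝ → ℝ → E}
    (hF : Continuous fun q : ℝ × ℝ => F q.1 q.2) :
    ∫ ξ in Icc (0 : Fin 2 → ℝ) 1, F (ξ 0) (ξ 1) = ∫ s in (0 : ℝ)..1, ∫ t in (0 : ℝ)..1, F s t := by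
  have hpre : Icc (0 : Fin 2 → ℝ) 1 =
      MeasurableEquiv.finTwoArrow ⁻¹' (Icc (0 : ℝ) 1 ×ˢ Icc (0 : ℝ) 1) := by
    ext ξ
    simp [Pi.le_def, Fin.forall_fin_two, MeasurableEquiv.finTwoArrow]
  rw [hpre]
  refine ((volume_preserving_finTwoArrow ℝ).setIntegral_preimage_emb
    (MeasurableEquiv.measurableEmbedding _) (fun q : ℝ × ℝ => F q.1 q.2) _).trans ?_
  rw [Measure.volume_eq_prod, setIntegral_prod _
    (hF.continuousOn.integrableOn_compact (isCompact_Icc.prod isCompact_Icc))]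
  simp only [intervalIntegral.integral_of_le zero_le_one, integral_Icc_eq_integral_Ioc]

lemma Eone_phaseCoord {n : ℕ} (z : (TopIdx n → ℝ) × (Fin (n + 1) → ℝ)) :
    Eone (n + 1) (phaseCoord n z) =
      ∫ s in (0 : ℝ)..1, innerIntegral n z.1 s * momentChar z.2 s := by
  have hcont : Continuous fun q : ℝ × ℝ =>
      (𝐞 ((topPoly (n + 1) n z.1 q.1).eval q.2) : ℂ) * momentChar z.2 q.1 := by
    refine (continuous_coe_fourierChar.comp ?_).mul
      ((continuous_momentChar _).comp (continuous_const.prodMk continuous_fst))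
    exact (continuous_eval_iterate_derivative_topPoly (n + 1) n 0).comp
      ((continuous_const.prodMk continuous_fst).prodMk continuous_snd)
  have hsplit := integral_Icc_fin_two (F := fun s t =>
    (𝐞 ((topPoly (n + 1) n z.1 s).eval t) : ℂ) * momentChar z.2 s) hcont
  simp only [intervalIntegral.integral_mul_const] at hsplit
  refine Eq.trans (integral_congr_ae (ae_of_all _ fun ξ => ?_)) hsplit
  simp only [Pphase_phaseCoord, momentChar, Real.fourierChar_apply, ← Complex.exp_add]
  push_cast
  simp only [mul_comm (z.2 _ : ℂ)]
  ring_nf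

lemma volume_superlevel_Eone_eq (n : ℕ) (δ : ℝ) :
    volume {x : Idx (n + 1) → ℝ | δ ≤ ‖Eone (n + 1) x‖} =
      volume {z : (TopIdx n → ℝ) × (Fin (n + 1) → ℝ) |
        δ ≤ ‖∫ s in (0 : ℝ)..1, innerIntegral n z.1 s * momentChar z.2 s‖} := by
  rw [← (measurePreserving_phaseCoord n).measure_preimage_equiv]
  simp only [preimage_ofPred_eq, Eone_phaseCoord]

end Coordinates

section LevelSet

lemma log_two_le_log_one_add_one_div {δ : ℝ} (hδ : 0 < δ) (hδ1 : δ ≤ 1) :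
    log 2 ≤ log (1 + 1 / δ) :=
  log_le_log two_pos (by linarith [(one_le_div hδ).2 hδ1])

lemma log_div_le_mul_log_one_add_one_div {D : ℝ} (hD : 1 ≤ D) {δ : ℝ} (hδ : 0 < δ)
    (hδ1 : δ ≤ 1) : log (D / δ) ≤ (log D / log 2 + 1) * log (1 + 1 / δ) := by
  have h2 : 0 < log 2 := log_pos one_lt_two
  have hD0 : 0 ≤ log D := log_nonneg hD
  have hD' : 0 < D := one_pos.trans_le hD
  have hlog := log_two_le_log_one_add_one_div hδ hδ1
  have hlog' : log (1 / δ) ≤ log (1 + 1 / δ) := log_le_log (by positivity) (by linarith)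
  calc log (D / δ) = log D / log 2 * log 2 + log (1 / δ) := by
        rw [div_mul_cancel₀ _ h2.ne', div_eq_mul_one_div, log_mul (by positivity) (by positivity)]
    _ ≤ log D / log 2 * log (1 + 1 / δ) + log (1 + 1 / δ) := by
        exact add_le_add (mul_le_mul_of_nonneg_left hlog (by positivity)) hlog'
    _ = _ := by ring

lemma log_one_add_one_div_le_mul_pow (m : ℕ) {δ : ℝ} (hδ : 0 < δ) (hδ1 : δ ≤ 1) :
    log (1 + 1 / δ) ≤ (log 2)⁻¹ ^ m * log (1 + 1 / δ) ^ (m + 1) := by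
  have h2 : 0 < log 2 := log_pos one_lt_two
  have hlog := log_two_le_log_one_add_one_div hδ hδ1
  have hone : 1 ≤ ((log 2)⁻¹ * log (1 + 1 / δ)) ^ m :=
    one_le_pow₀ (by rwa [← div_eq_inv_mul, one_le_div h2])
  calc log (1 + 1 / δ) ≤ ((log 2)⁻¹ * log (1 + 1 / δ)) ^ m * log (1 + 1 / δ) :=
        le_mul_of_one_le_left (h2.le.trans hlog) hone
    _ = (log 2)⁻¹ ^ m * log (1 + 1 / δ) ^ (m + 1) := by ring

lemma rpow_neg_eq_inv_pow_choose_three (n : ℕ) {δ : ℝ} (hδ : 0 < δ) :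
    δ ^ (-(((n + 1 : ℕ) : ℝ) * ((n + 1 : ℕ) + 1) * ((n + 1 : ℕ) + 2) / 6 + 2)) =
      δ⁻¹ ^ ((n + 3).choose 3 + 2) := by
  have hchoose : (((n + 3).choose 3 : ℕ) : ℝ) = (n + 3) * (n + 2) * (n + 1) / 6 := by
    rw [Nat.cast_choose_eq_descPochhammer_div]
    simp [descPochhammer_succ_right, Nat.factorial]
    ring
  rw [← rpow_natCast, inv_rpow hδ.le, ← rpow_neg hδ.le]
  congr 2
  push_cast
  rw [hchoose]
  ring

theorem level_set_estimate_general (k : ℕ) (hk : 2 ≤ k) :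
    ∃ C : ℝ, 0 ≤ C ∧
      ∀ δ : ℝ, 0 < δ → δ ≤ 1 →
        volume {x : Idx k → ℝ | δ ≤ ‖Eone k x‖} ≤
          ENNReal.ofReal (C * log (1 + 1 / δ) *
            δ ^ (-((k : ℝ) * (k + 1) * (k + 2) / 6 + 2))) := by
  obtain ⟨n, rfl⟩ : ∃ n, k = n + 1 := ⟨k - 1, by omega⟩
  obtain ⟨C, D, hC, hD, hvol⟩ :=
    exists_volume_le_norm_integral_innerIntegral_le (show 1 ≤ n by omega)
  have hD1 : 1 ≤ D := one_le_two.trans hD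
  refine ⟨C * (log D / log 2 + 1), by positivity [log_nonneg hD1], fun δ hδ hδ1 => ?_⟩
  rw [volume_superlevel_Eone_eq, rpow_neg_eq_inv_pow_choose_three n hδ]
  grw [hvol δ hδ hδ1, log_div_le_mul_log_one_add_one_div hD1 hδ hδ1, ← mul_assoc C]

/-- Level set estimate (Section 3): for every `k ≥ 2` there is `C_k < ∞` with
`|{x ∈ ℝ^N : δ ≤ |E_k1(x)| ≤ 2δ}| ≤ C_k (log₊ δ)^{k−1} δ^{−q_k}` for all `δ ∈ (0,1]`,
where `log₊ δ = log(1 + 1/δ)` and `q_k = k(k+1)(k+2)/6 + 2`. -/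
theorem level_set_estimate (k : ℕ) (hk : 2 ≤ k) :
    ∃ C : ℝ, 0 ≤ C ∧
      ∀ δ : ℝ, 0 < δ → δ ≤ 1 →
        volume {x : Idx k → ℝ | δ ≤ ‖Eone k x‖ ∧ ‖Eone k x‖ ≤ 2 * δ} ≤
          ENNReal.ofReal (C * Real.log (1 + 1 / δ) ^ (k - 1) *
            δ ^ (-((k : ℝ) * (k + 1) * (k + 2) / 6 + 2))) := by
  obtain ⟨C, hC, hvol⟩ := level_set_estimate_general k hk
  have h2 : 0 < log 2 := log_pos one_lt_two
  refine ⟨C * (log 2)⁻¹ ^ (k - 2), by positivity, fun δ hδ hδ1 => ?_⟩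
  have hlog := log_one_add_one_div_le_mul_pow (k - 2) hδ hδ1
  rw [show k - 2 + 1 = k - 1 by omega] at hlog
  refine (measure_mono fun x hx => hx.1).trans ((hvol δ hδ hδ1).trans
    (ENNReal.ofReal_le_ofReal (mul_le_mul_of_nonneg_right ?_ (rpow_nonneg hδ.le _))))
  rw [mul_assoc C]
  exact mul_le_mul_of_nonneg_left hlog hC

end LevelSet
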